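/- Let R be a commutative noetherian ring with identity, let a be a proper ideal of R with dim R/a = 2, and let M be a finitely generated R-module. If the local cohomology module H^{2i}_a(M) is a-cofinite for every i ≥ 0, then H^i_a(M) is a-cofinite for every i ≥ 0. -/

import Mathlib

universe u

open CategoryTheory

/-- `Ext^i_R(R/a, M)` as an `R`-module, for `M : ModuleCat R`. -/
noncomputable def extQuot {R : Type u} [CommRing R] (a : Ideal R) (i : ℕ)
    (M : ModuleCat.{u} R) : ModuleCat.{u} R :=
  ((Ext R (ModuleCat.{u} R) i).obj (Opposite.op (ModuleCat.of R (R ⧸ a)))).obj M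

/-- An `R`-module `M` is `a`-cofinite if `Supp M ⊆ V(a)` and `Ext^i_R(R/a, M)` is a
finitely generated `R`-module for every `i ≥ 0`. -/
def IsCofinite {R : Type u} [CommRing R] (a : Ideal R) (M : ModuleCat.{u} R) : Prop :=
  Module.support R M ⊆ PrimeSpectrum.zeroLocus (a : Set R) ∧
    ∀ i : ℕ, Module.Finite R (extQuot a i M)

/-!
Local cohomology is the direct limit of the modules `Ext^n(R/a^t, M)`. Embedding `M ⧸ Γ_a(M)` into
an injective module without `a`-torsion, with cokernel `L`, gives `H^n_a(L) ≃ H^{n+1}_a(M)`, so an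
induction on `n` replaces `M` by `L` and exchanges the two parities. What has to be known is that
`Ext^i(R/a, Γ_a(M))` is finitely generated for all `i`: this is the hypothesis on `H^0_a(M)`, or,
when the odd degrees are given, it follows for `i ≤ 2` from the long exact sequence of
`0 → Γ_a(M) → M → M ⧸ Γ_a(M) → 0`.

For an `a`-torsion module `X` with `dim R/a ≤ 2`, finiteness of `E i = Ext^i(R/a, X)` for `i ≤ 2`
propagates to all `i`. At the minimal primes of `a` the module `X` is artinian, whence there are
an `s` outside these primes and a finitely generated `F ⊆ E i` such that `T = E i ⧸ F` is
`s`-torsion. If `dim R/(a + yR) ≤ 1`, comparing `X` with `X_y` shows that `E i` has finitely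
generated `y`-torsion and `E i ⧸ y E i`. Over the `s`-adic completion, after enlarging `F`, the
module `T` becomes `s`-divisible with finitely generated `s`-torsion, so its Tate module is finitely
generated; the annihilator of the latter kills `T` and contains a `y` as above. So multiplication
by `y` on `E i` has finitely generated kernel and image, and `E i` is finitely generated.
-/

namespace Cofiniteness

/-! ### `Ext` of modules -/

/-- `Ext^i_R(N, X)` for unbundled modules. -/
abbrev ModExt (R : Type u) [CommRing R] (N X : Type u) [AddCommGroup N] [Module R N]
    [AddCommGroup X] [Module R X] (i : ℕ) : Type u :=
  Abelian.Ext (ModuleCat.of R N) (ModuleCat.of R X) i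

section Ext

variable {R : Type u} [CommRing R]
variable {N N' N'' X Y Z A B C : Type u}
  [AddCommGroup N] [Module R N] [AddCommGroup N'] [Module R N'] [AddCommGroup N''] [Module R N'']
  [AddCommGroup X] [Module R X] [AddCommGroup Y] [Module R Y] [AddCommGroup Z] [Module R Z]
  [AddCommGroup A] [Module R A] [AddCommGroup B] [Module R B] [AddCommGroup C] [Module R C]

namespace ModExt

/-- The map `Ext^i(N, X) → Ext^i(N, Y)` induced by `f : X → Y`. -/
noncomputable def postcomp (N : Type u) [AddCommGroup N] [Module R N] (f : X →ₗ[R] Y) (i : ℕ) :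
    ModExt R N X i →ₗ[R] ModExt R N Y i where
  toFun x := x.comp (Abelian.Ext.mk₀ (ModuleCat.ofHom f)) (add_zero i)
  map_add' x y := by simp
  map_smul' r x := by simp

/-- The map `Ext^i(N', X) → Ext^i(N, X)` induced by `g : N → N'`. -/
noncomputable def precomp (X : Type u) [AddCommGroup X] [Module R X] (g : N →ₗ[R] N') (i : ℕ) :
    ModExt R N' X i →ₗ[R] ModExt R N X i where
  toFun x := (Abelian.Ext.mk₀ (ModuleCat.ofHom g)).comp x (zero_add i)
  map_add' x y := by simp
  map_smul' r x := by simp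

lemma postcomp_apply (f : X →ₗ[R] Y) (i : ℕ) (x : ModExt R N X i) :
    postcomp N f i x = x.comp (Abelian.Ext.mk₀ (ModuleCat.ofHom f)) (add_zero i) := rfl

lemma precomp_apply (g : N →ₗ[R] N') (i : ℕ) (x : ModExt R N' X i) :
    precomp X g i x = (Abelian.Ext.mk₀ (ModuleCat.ofHom g)).comp x (zero_add i) := rfl

lemma postcomp_id (i : ℕ) (x : ModExt R N X i) :
    postcomp N (LinearMap.id : X →ₗ[R] X) i x = x :=
  Abelian.Ext.comp_mk₀_id x

lemma precomp_id (i : ℕ) (x : ModExt R N X i) :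
    precomp X (LinearMap.id : N →ₗ[R] N) i x = x :=
  Abelian.Ext.mk₀_id_comp x

lemma postcomp_comp (f : X →ₗ[R] Y) (g : Y →ₗ[R] Z) (i : ℕ) (x : ModExt R N X i) :
    postcomp N (g ∘ₗ f) i x = postcomp N g i (postcomp N f i x) := by
  simp only [postcomp_apply, ModuleCat.ofHom_comp]
  rw [Abelian.Ext.comp_assoc_of_third_deg_zero, Abelian.Ext.mk₀_comp_mk₀]

lemma precomp_comp (f : N →ₗ[R] N') (g : N' →ₗ[R] N'') (i : ℕ) (x : ModExt R N'' X i) :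
    precomp X (g ∘ₗ f) i x = precomp X f i (precomp X g i x) := by
  simp only [precomp_apply, ModuleCat.ofHom_comp]
  rw [← Abelian.Ext.mk₀_comp_mk₀]
  exact Abelian.Ext.comp_assoc _ _ _ (by simp) (by simp) (by simp)

lemma precomp_postcomp (g : N →ₗ[R] N') (f : X →ₗ[R] Y) (i : ℕ) (x : ModExt R N' X i) :
    precomp Y g i (postcomp N' f i x) = postcomp N f i (precomp X g i x) := by
  simp only [precomp_apply, postcomp_apply, Abelian.Ext.comp_assoc_of_third_deg_zero]

lemma postcomp_smul (f : X →ₗ[R] Y) (r : R) (i : ℕ) (x : ModExt R N X i) :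
    postcomp N (r • f) i x = r • postcomp N f i x := by
  have : ModuleCat.ofHom (r • f) = r • ModuleCat.ofHom f := rfl
  rw [postcomp_apply, this, Abelian.Ext.mk₀_smul, Abelian.Ext.comp_smul, postcomp_apply]

lemma precomp_smul (g : N →ₗ[R] N') (r : R) (i : ℕ) (x : ModExt R N' X i) :
    precomp X (r • g) i x = r • precomp X g i x := by
  have : ModuleCat.ofHom (r • g) = r • ModuleCat.ofHom g := rfl
  rw [precomp_apply, this, Abelian.Ext.mk₀_smul, Abelian.Ext.smul_comp, precomp_apply]

lemma postcomp_zero (i : ℕ) (x : ModExt R N X i) : postcomp N (0 : X →ₗ[R] Y) i x = 0 := by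
  simpa using postcomp_smul (0 : X →ₗ[R] Y) (0 : R) i x

lemma precomp_zero (i : ℕ) (x : ModExt R N' X i) : precomp X (0 : N →ₗ[R] N') i x = 0 := by
  simpa using precomp_smul (0 : N →ₗ[R] N') (0 : R) i x

/-- The isomorphism of `Ext^i(N, -)` induced by an isomorphism in the second variable. -/
noncomputable def congrRight (N : Type u) [AddCommGroup N] [Module R N] (e : X ≃ₗ[R] Y) (i : ℕ) :
    ModExt R N X i ≃ₗ[R] ModExt R N Y i :=
  LinearEquiv.ofLinearMap (postcomp N e.toLinearMap i) (postcomp N e.symm.toLinearMap i)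
    (by ext x; simp [← postcomp_comp, postcomp_id]) (by ext x; simp [← postcomp_comp, postcomp_id])

/-- The isomorphism of `Ext^i(-, X)` induced by an isomorphism in the first variable. -/
noncomputable def congrLeft (X : Type u) [AddCommGroup X] [Module R X] (e : N ≃ₗ[R] N') (i : ℕ) :
    ModExt R N' X i ≃ₗ[R] ModExt R N X i :=
  LinearEquiv.ofLinearMap (precomp X e.toLinearMap i) (precomp X e.symm.toLinearMap i)
    (by ext x; simp [← precomp_comp, precomp_id]) (by ext x; simp [← precomp_comp, precomp_id])

/-- The identification of `Ext^0` with `Hom`. -/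
noncomputable def zeroEquivHom (N X : Type u) [AddCommGroup N] [Module R N] [AddCommGroup X]
    [Module R X] : ModExt R N X 0 ≃ₗ[R] (N →ₗ[R] X) :=
  Abelian.Ext.linearEquiv₀.trans ModuleCat.homLinearEquiv

lemma postcomp_zeroEquivHom_symm (g : X →ₗ[R] Y) (f : N →ₗ[R] X) :
    postcomp N g 0 ((zeroEquivHom N X).symm f) = (zeroEquivHom N Y).symm (g ∘ₗ f) :=
  Abelian.Ext.mk₀_comp_mk₀ _ _

lemma precomp_zeroEquivHom_symm (g : N →ₗ[R] N') (f : N' →ₗ[R] X) :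
    precomp X g 0 ((zeroEquivHom N' X).symm f) = (zeroEquivHom N X).symm (f ∘ₗ g) :=
  Abelian.Ext.mk₀_comp_mk₀ _ _

lemma zeroEquivHom_postcomp (g : X →ₗ[R] Y) (x : ModExt R N X 0) :
    zeroEquivHom N Y (postcomp N g 0 x) = g ∘ₗ zeroEquivHom N X x := by
  obtain ⟨f, rfl⟩ := (zeroEquivHom N X).symm.surjective x
  rw [postcomp_zeroEquivHom_symm, LinearEquiv.apply_symm_apply, LinearEquiv.apply_symm_apply]

lemma zeroEquivHom_precomp (g : N →ₗ[R] N') (x : ModExt R N' X 0) :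
    zeroEquivHom N X (precomp X g 0 x) = zeroEquivHom N' X x ∘ₗ g := by
  obtain ⟨f, rfl⟩ := (zeroEquivHom N' X).symm.surjective x
  rw [precomp_zeroEquivHom_symm, LinearEquiv.apply_symm_apply, LinearEquiv.apply_symm_apply]

lemma postcomp_injective_of_injective (N : Type u) [AddCommGroup N] [Module R N] {f : X →ₗ[R] Y}
    (hf : Function.Injective f) : Function.Injective (postcomp N f 0) := by
  intro x y hxy
  apply (zeroEquivHom N X).injective
  rw [← LinearMap.cancel_left hf, ← zeroEquivHom_postcomp, hxy, zeroEquivHom_postcomp]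

lemma precomp_injective_of_surjective (X : Type u) [AddCommGroup X] [Module R X] {g : N →ₗ[R] N'}
    (hg : Function.Surjective g) : Function.Injective (precomp X g 0) := by
  intro x y hxy
  apply (zeroEquivHom N' X).injective
  rw [← LinearMap.cancel_right hg, ← zeroEquivHom_precomp, hxy, zeroEquivHom_precomp]

lemma subsingleton_of_projective (N X : Type u) [AddCommGroup N] [Module R N] [AddCommGroup X]
    [Module R X] [Module.Projective R N] (i : ℕ) : Subsingleton (ModExt R N X (i + 1)) :=
  have := (IsProjective.iff_projective (R := R) N).1 inferInstance
  subsingleton_of_forall_eq 0 Abelian.Ext.eq_zero_of_projective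

lemma subsingleton_of_injective (N X : Type u) [AddCommGroup N] [Module R N] [AddCommGroup X]
    [Module R X] [Module.Injective R X] (i : ℕ) : Subsingleton (ModExt R N X (i + 1)) :=
  have := Module.injective_object_of_injective_module R X
  subsingleton_of_forall_eq 0 Abelian.Ext.eq_zero_of_injective

lemma subsingleton_of_subsingleton_left [Subsingleton N] (i : ℕ) :
    Subsingleton (ModExt R N X i) :=
  subsingleton_of_forall_eq 0 fun x => by
    rw [← precomp_id i x, Subsingleton.elim (LinearMap.id : N →ₗ[R] N) 0, precomp_zero]

lemma annihilator_le_left (N X : Type u) [AddCommGroup N] [Module R N] [AddCommGroup X]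
    [Module R X] (i : ℕ) : Module.annihilator R N ≤ Module.annihilator R (ModExt R N X i) := by
  intro r hr
  have hzero : (r • LinearMap.id : N →ₗ[R] N) = 0 :=
    LinearMap.ext fun n => Module.mem_annihilator.1 hr n
  exact Module.mem_annihilator.2 fun x => by
    rw [← precomp_id i x, ← precomp_smul, hzero, precomp_zero]

end ModExt

/-- `0 → A → B → C → 0` is a short exact sequence of modules. -/
structure IsShortExact (f : A →ₗ[R] B) (g : B →ₗ[R] C) : Prop where
  injective : Function.Injective f
  exact : Function.Exact f g
  surjective : Function.Surjective g

namespace IsShortExact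

variable {f : A →ₗ[R] B} {g : B →ₗ[R] C}

lemma subtype_mkQ (K : Submodule R X) : IsShortExact K.subtype K.mkQ :=
  ⟨K.injective_subtype, LinearMap.exact_subtype_mkQ K, K.mkQ_surjective⟩

lemma subtype_ker (g : X →ₗ[R] Y) (hg : Function.Surjective g) :
    IsShortExact (LinearMap.ker g).subtype g :=
  ⟨Submodule.injective_subtype _, LinearMap.exact_subtype_ker_map g, hg⟩

lemma mkQ_range (f : X →ₗ[R] Y) (hf : Function.Injective f) :
    IsShortExact f (LinearMap.range f).mkQ :=
  ⟨hf, f.exact_map_mkQ_range, Submodule.mkQ_surjective _⟩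

lemma shortExact (h : IsShortExact f g) :
    (ModuleCat.shortComplexOfCompEqZero f g h.exact.linearMap_comp_eq_zero).ShortExact :=
  ModuleCat.shortComplex_shortExact _ h.exact h.injective h.surjective

/-- The class in `Ext^1(C, A)` of a short exact sequence `0 → A → B → C → 0`. -/
noncomputable def extClass (h : IsShortExact f g) : ModExt R C A 1 := h.shortExact.extClass

/-- The connecting map `Ext^i(N, C) → Ext^{i+1}(N, A)`. -/
noncomputable def connecting (h : IsShortExact f g) (N : Type u) [AddCommGroup N] [Module R N]
    (i : ℕ) : ModExt R N C i →ₗ[R] ModExt R N A (i + 1) where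
  toFun x := x.comp h.extClass rfl
  map_add' x y := by simp
  map_smul' r x := by simp

/-- The connecting map `Ext^i(A, X) → Ext^{i+1}(C, X)`. -/
noncomputable def coconnecting (h : IsShortExact f g) (X : Type u) [AddCommGroup X] [Module R X]
    (i : ℕ) : ModExt R A X i →ₗ[R] ModExt R C X (i + 1) where
  toFun x := h.extClass.comp x (add_comm 1 i)
  map_add' x y := by simp
  map_smul' r x := by simp

lemma connecting_apply (h : IsShortExact f g) (i : ℕ) (x : ModExt R N C i) :
    h.connecting N i x = x.comp h.extClass rfl := rfl

lemma coconnecting_apply (h : IsShortExact f g) (i : ℕ) (x : ModExt R A X i) :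
    h.coconnecting X i x = h.extClass.comp x (add_comm 1 i) := rfl

open ModExt

lemma precomp_connecting (h : IsShortExact f g) (k : N →ₗ[R] N') (i : ℕ) (x : ModExt R N' C i) :
    precomp A k (i + 1) (h.connecting N' i x) = h.connecting N i (precomp C k i x) := by
  simp only [precomp_apply, connecting_apply]
  rw [Abelian.Ext.comp_assoc _ _ _ (zero_add i) rfl (by lia)]

lemma exact_postcomp_postcomp (h : IsShortExact f g) (N : Type u) [AddCommGroup N] [Module R N]
    (i : ℕ) : Function.Exact (postcomp N f i) (postcomp N g i) := by
  refine fun x => ⟨fun hx => Abelian.Ext.covariant_sequence_exact₂ _ h.shortExact x hx, ?_⟩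
  rintro ⟨y, rfl⟩
  rw [← postcomp_comp, h.exact.linearMap_comp_eq_zero, postcomp_zero]

lemma exact_postcomp_connecting (h : IsShortExact f g) (N : Type u) [AddCommGroup N] [Module R N]
    (i : ℕ) : Function.Exact (postcomp N g i) (h.connecting N i) := by
  refine fun x => ⟨fun hx => Abelian.Ext.covariant_sequence_exact₃ _ h.shortExact x rfl hx, ?_⟩
  rintro ⟨y, rfl⟩
  have hg : (Abelian.Ext.mk₀ (ModuleCat.ofHom g)).comp h.extClass (zero_add 1) = 0 :=
    h.shortExact.comp_extClass
  rw [postcomp_apply, connecting_apply, Abelian.Ext.comp_assoc_of_second_deg_zero, hg,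
    Abelian.Ext.comp_zero]

lemma exact_connecting_postcomp (h : IsShortExact f g) (N : Type u) [AddCommGroup N] [Module R N]
    (i : ℕ) : Function.Exact (h.connecting N i) (postcomp N f (i + 1)) := by
  refine fun x => ⟨fun hx => Abelian.Ext.covariant_sequence_exact₁ _ h.shortExact x hx rfl, ?_⟩
  rintro ⟨y, rfl⟩
  have hf : h.extClass.comp (Abelian.Ext.mk₀ (ModuleCat.ofHom f)) (add_zero 1) = 0 :=
    h.shortExact.extClass_comp
  rw [postcomp_apply, connecting_apply, Abelian.Ext.comp_assoc_of_third_deg_zero, hf,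
    Abelian.Ext.comp_zero]

lemma exact_precomp_precomp (h : IsShortExact f g) (X : Type u) [AddCommGroup X] [Module R X]
    (i : ℕ) : Function.Exact (precomp X g i) (precomp X f i) := by
  refine fun x => ⟨fun hx => Abelian.Ext.contravariant_sequence_exact₂ h.shortExact _ x hx, ?_⟩
  rintro ⟨y, rfl⟩
  rw [← precomp_comp, h.exact.linearMap_comp_eq_zero, precomp_zero]

lemma exact_precomp_coconnecting (h : IsShortExact f g) (X : Type u) [AddCommGroup X] [Module R X]
    (i : ℕ) : Function.Exact (precomp X f i) (h.coconnecting X i) := by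
  refine fun x =>
    ⟨fun hx => Abelian.Ext.contravariant_sequence_exact₁ h.shortExact _ x (add_comm 1 i) hx, ?_⟩
  rintro ⟨y, rfl⟩
  have hf : h.extClass.comp (Abelian.Ext.mk₀ (ModuleCat.ofHom f)) (add_zero 1) = 0 :=
    h.shortExact.extClass_comp
  rw [precomp_apply, coconnecting_apply, ← Abelian.Ext.comp_assoc_of_second_deg_zero, hf,
    Abelian.Ext.zero_comp]

lemma exact_coconnecting_precomp (h : IsShortExact f g) (X : Type u) [AddCommGroup X] [Module R X]
    (i : ℕ) : Function.Exact (h.coconnecting X i) (precomp X g (i + 1)) := by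
  refine fun x =>
    ⟨fun hx => Abelian.Ext.contravariant_sequence_exact₃ h.shortExact _ x hx (add_comm 1 i), ?_⟩
  rintro ⟨y, rfl⟩
  have hg : (Abelian.Ext.mk₀ (ModuleCat.ofHom g)).comp h.extClass (zero_add 1) = 0 :=
    h.shortExact.comp_extClass
  rw [precomp_apply, coconnecting_apply,
    ← Abelian.Ext.comp_assoc _ _ _ (zero_add 1) (add_comm 1 i) (by lia), hg,
    Abelian.Ext.zero_comp]

end IsShortExact

end Ext

/-! ### Serre classes and dévissage -/

section SerreClass

variable {R : Type u} [CommRing R]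
variable {N X A B C : Type u} [AddCommGroup N] [Module R N] [AddCommGroup X] [Module R X]
  [AddCommGroup A] [Module R A] [AddCommGroup B] [Module R B] [AddCommGroup C] [Module R C]

lemma isSerreClass_of_exact (S : ObjectProperty (ModuleCat.{u} R))
    (hzero : ∀ (A : Type u) [AddCommGroup A] [Module R A] [Subsingleton A], S (.of R A))
    (hexact : ∀ {A B C : Type u} [AddCommGroup A] [Module R A] [AddCommGroup B] [Module R B]
      [AddCommGroup C] [Module R C] (f : A →ₗ[R] B) (g : B →ₗ[R] C), Function.Exact f g →
      S (.of R A) → S (.of R C) → S (.of R B)) :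
    S.IsSerreClass where
  exists_zero := ⟨.of R PUnit, ModuleCat.isZero_of_subsingleton _, hzero PUnit⟩
  prop_of_mono {A B} f hf hB := by
    refine hexact (0 : PUnit.{u + 1} →ₗ[R] A) f.hom ?_ (hzero _) hB
    rw [LinearMap.exact_iff, LinearMap.range_zero, (ModuleCat.mono_iff_ker_eq_bot f).1 hf]
  prop_of_epi {A B} f hf hA := by
    refine hexact f.hom (0 : B →ₗ[R] PUnit.{u + 1}) ?_ hA (hzero _)
    rw [LinearMap.exact_iff, LinearMap.ker_zero, (ModuleCat.epi_iff_range_eq_top f).1 hf]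
  prop_X₂_of_shortExact {T} hT h₁ h₃ :=
    hexact T.f.hom T.g.hom
      ((ShortComplex.ShortExact.moduleCat_exact_iff_function_exact T).1 hT.exact) h₁ h₃

variable (S : ObjectProperty (ModuleCat.{u} R)) [S.IsSerreClass]

lemma prop_of_exact {f : A →ₗ[R] B} {g : B →ₗ[R] C} (h : Function.Exact f g) (hA : S (.of R A))
    (hC : S (.of R C)) : S (.of R B) :=
  S.prop_X₂_of_exact (S := ModuleCat.shortComplexOfCompEqZero f g h.linearMap_comp_eq_zero)
    ((ShortComplex.ShortExact.moduleCat_exact_iff_function_exact _).2 h) hA hC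

lemma prop_of_injective {f : A →ₗ[R] B} (hf : Function.Injective f) (hB : S (.of R B)) :
    S (.of R A) :=
  have := (ModuleCat.mono_iff_injective (ModuleCat.ofHom f)).2 hf
  S.prop_of_mono (ModuleCat.ofHom f) hB

lemma prop_of_surjective {f : A →ₗ[R] B} (hf : Function.Surjective f) (hA : S (.of R A)) :
    S (.of R B) :=
  have := (ModuleCat.epi_iff_surjective (ModuleCat.ofHom f)).2 hf
  S.prop_of_epi (ModuleCat.ofHom f) hA

lemma prop_of_linearEquiv (e : A ≃ₗ[R] B) (hA : S (.of R A)) : S (.of R B) :=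
  prop_of_surjective S (f := e.toLinearMap) e.surjective hA

lemma prop_of_subsingleton (A : Type u) [AddCommGroup A] [Module R A] [Subsingleton A] :
    S (.of R A) :=
  S.prop_of_isZero (ModuleCat.isZero_of_subsingleton _)

lemma prop_ker_of_exact {f : A →ₗ[R] B} {g : B →ₗ[R] C} (h : Function.Exact f g)
    (hA : S (.of R A)) : S (.of R (LinearMap.ker g)) := by
  rw [LinearMap.exact_iff.1 h]
  exact prop_of_surjective S f.surjective_rangeRestrict hA

lemma prop_quotient_range_of_exact {f : A →ₗ[R] B} {g : B →ₗ[R] C} (h : Function.Exact f g)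
    (hC : S (.of R C)) : S (.of R (B ⧸ LinearMap.range f)) := by
  rw [← LinearMap.exact_iff.1 h]
  exact prop_of_linearEquiv S g.quotKerEquivRange.symm
    (prop_of_injective S (LinearMap.range g).injective_subtype hC)

lemma prop_ker_comp {f : A →ₗ[R] B} {g : B →ₗ[R] C} (hf : S (.of R (LinearMap.ker f)))
    (hg : S (.of R (LinearMap.ker g))) : S (.of R (LinearMap.ker (g ∘ₗ f))) := by
  let φ : LinearMap.ker (g ∘ₗ f) →ₗ[R] LinearMap.ker g := f.restrict fun _ hx => hx
  let ι : LinearMap.ker f →ₗ[R] LinearMap.ker (g ∘ₗ f) :=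
    Submodule.inclusion (LinearMap.ker_le_ker_comp f g)
  have hexact : Function.Exact ι φ := fun x =>
    ⟨fun hx => ⟨⟨x, congrArg Subtype.val hx⟩, rfl⟩, by rintro ⟨y, rfl⟩; exact Subtype.ext y.2⟩
  exact prop_of_exact S hexact hf hg

lemma prop_quotient_range_comp {f : A →ₗ[R] B} {g : B →ₗ[R] C}
    (hf : S (.of R (B ⧸ LinearMap.range f))) (hg : S (.of R (C ⧸ LinearMap.range g))) :
    S (.of R (C ⧸ LinearMap.range (g ∘ₗ f))) := by
  have hle : LinearMap.range f ≤ (LinearMap.range (g ∘ₗ f)).comap g := by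
    rintro _ ⟨x, rfl⟩
    exact ⟨x, rfl⟩
  refine prop_of_exact S (f := Submodule.mapQ _ _ g hle)
    (g := Submodule.factor (LinearMap.range_comp_le_range f g)) ?_ hf hg
  rw [LinearMap.exact_iff, Submodule.range_mapQ, Submodule.factor, Submodule.ker_mapQ,
    Submodule.comap_id]

instance isFG_isSerreClass [IsNoetherianRing R] : (ModuleCat.isFG.{u} R).IsSerreClass := by
  refine isSerreClass_of_exact (ModuleCat.isFG.{u} R)
    (fun A _ _ _ => inferInstanceAs (Module.Finite R A)) ?_
  intro A B C _ _ _ _ _ _ f g h hA hC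
  have : Module.Finite R A := hA
  have : Module.Finite R C := hC
  have hker : (LinearMap.ker g).FG := by
    rw [LinearMap.exact_iff.1 h]
    exact Module.Finite.iff_fg.1 (Module.Finite.range f)
  have hrange : (Submodule.map g ⊤).FG := IsNoetherian.noetherian _
  exact ⟨Submodule.fg_of_fg_map_of_fg_inf_ker g hrange (by rwa [top_inf_eq])⟩

lemma isShortExact_single_funLeft_succ (A : Type u) [AddCommGroup A] [Module R A] (n : ℕ) :
    IsShortExact (LinearMap.single R (fun _ : Fin (n + 1) => A) 0)
      (LinearMap.funLeft R A (Fin.succ : Fin n → Fin (n + 1))) := by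
  refine ⟨Pi.single_injective (M := fun _ => A) 0, fun x => ⟨fun hx => ⟨x 0, ?_⟩, ?_⟩,
    LinearMap.funLeft_surjective_of_injective R A _ (Fin.succ_injective n)⟩
  · ext j
    refine Fin.cases (by simp) (fun j => ?_) j
    have hxj : x j.succ = 0 := congrFun hx j
    simp [hxj]
  · rintro ⟨y, rfl⟩
    ext j
    simp [LinearMap.funLeft]

lemma prop_pi (h : S (.of R A)) (n : ℕ) : S (.of R (Fin n → A)) := by
  induction n with
  | zero => exact prop_of_subsingleton S _
  | succ n ih => exact prop_of_exact S (isShortExact_single_funLeft_succ A n).exact h ih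

lemma prop_ext_pi (i : ℕ) (h : S (.of R (ModExt R N X i))) (n : ℕ) :
    S (.of R (ModExt R (Fin n → N) X i)) := by
  induction n with
  | zero =>
    have := ModExt.subsingleton_of_subsingleton_left (R := R) (N := Fin 0 → N) (X := X) i
    exact prop_of_subsingleton S _
  | succ n ih =>
    exact prop_of_exact S ((isShortExact_single_funLeft_succ N n).exact_precomp_precomp X i) ih h

lemma exists_surjective_pi_quotient [Module.Finite R N] (a : Ideal R)
    (hN : a ≤ Module.annihilator R N) :
    ∃ (k : ℕ) (f : (Fin k → R ⧸ a) →ₗ[R] N), Function.Surjective f := by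
  have htors : Module.IsTorsionBySet R N a := fun m r => Module.mem_annihilator.1 (hN r.2) m
  let _ : Module (R ⧸ a) N := htors.module
  have : IsScalarTower R (R ⧸ a) N := htors.isScalarTower
  have : Module.Finite (R ⧸ a) N := Module.Finite.of_restrictScalars_finite R (R ⧸ a) N
  obtain ⟨k, f, hf⟩ := Module.Finite.exists_fin' (R ⧸ a) N
  exact ⟨k, f.restrictScalars R, hf⟩

lemma le_annihilator_quotient (a : Ideal R) : a ≤ Module.annihilator R (R ⧸ a) :=
  (Ideal.annihilator_quotient (I := a)).ge

lemma le_annihilator_submodule {a : Ideal R} (h : a ≤ Module.annihilator R X)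
    (K : Submodule R X) : a ≤ Module.annihilator R K :=
  h.trans (LinearMap.annihilator_le_of_injective K.subtype K.injective_subtype)

lemma le_annihilator_pi {a : Ideal R} (h : a ≤ Module.annihilator R X) (k : ℕ) :
    a ≤ Module.annihilator R (Fin k → X) := fun _ hr =>
  Module.mem_annihilator.2 fun m => funext fun i => Module.mem_annihilator.1 (h hr) (m i)

theorem prop_ext_of_le_annihilator [IsNoetherianRing R] (a : Ideal R) (n : ℕ)
    (h : ∀ j ≤ n, S (.of R (ModExt R (R ⧸ a) X j))) (N : Type u) [AddCommGroup N]
    [Module R N] [Module.Finite R N] (hN : a ≤ Module.annihilator R N) :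
    S (.of R (ModExt R N X n)) := by
  induction n generalizing N with
  | zero =>
    obtain ⟨k, f, hf⟩ := exists_surjective_pi_quotient a hN
    exact prop_of_injective S (ModExt.precomp_injective_of_surjective X hf)
      (prop_ext_pi S 0 (h 0 le_rfl) k)
  | succ n ih =>
    obtain ⟨k, f, hf⟩ := exists_surjective_pi_quotient a hN
    have hker : a ≤ Module.annihilator R (LinearMap.ker f) :=
      le_annihilator_submodule (le_annihilator_pi (le_annihilator_quotient a) k) _
    exact prop_of_exact S ((IsShortExact.subtype_ker f hf).exact_coconnecting_precomp X n)
      (ih (fun j hj => h j (by lia)) _ hker) (prop_ext_pi S _ (h _ le_rfl) k)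

lemma prop_ext_of_prop [IsNoetherianRing R] (h : S (.of R X)) (j : ℕ) (N : Type u)
    [AddCommGroup N] [Module R N] [Module.Finite R N] : S (.of R (ModExt R N X j)) := by
  refine prop_ext_of_le_annihilator S ⊥ j (fun i _ => ?_) N bot_le
  have e : (R ⧸ (⊥ : Ideal R)) ≃ₗ[R] R := Submodule.quotEquivOfEqBot _ rfl
  refine prop_of_linearEquiv S (ModExt.congrLeft X e i) ?_
  cases i with
  | zero =>
    exact prop_of_linearEquiv S
      ((ModExt.zeroEquivHom R X).trans (LinearMap.ringLmapEquivSelf R R X)).symm h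
  | succ i =>
    have := ModExt.subsingleton_of_projective (R := R) R X i
    exact prop_of_subsingleton S _

end SerreClass

/-! ### Torsion submodules and `Hom(R/a, -)` -/

section Torsion

variable {R : Type u} [CommRing R]
variable {X : Type u} [AddCommGroup X] [Module R X]

open Submodule (torsionBy torsionBySet)
open scoped Pointwise

lemma mem_torsionByIdeal {a : Ideal R} {x : X} :
    x ∈ torsionBySet R X (a : Set R) ↔ ∀ r ∈ a, r • x = 0 := by
  rw [Submodule.mem_torsionBySet_iff]
  exact ⟨fun h r hr => h ⟨r, hr⟩, fun h r => h r r.2⟩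

lemma torsionByIdeal_eq_top_iff {a : Ideal R} :
    torsionBySet R X (a : Set R) = ⊤ ↔ a ≤ Module.annihilator R X := by
  rw [← Module.isTorsionBySet_iff_torsionBySet_eq_top]
  exact ⟨fun h r hr => Module.mem_annihilator.2 fun x => h (a := ⟨r, hr⟩),
    fun h x r => Module.mem_annihilator.1 (h r.2) x⟩

/-- The identification of `Hom(R/a, X)` with `0 :_X a`, by evaluation at `1`. -/
noncomputable def quotientHomEquivTorsion (X : Type u) [AddCommGroup X] [Module R X]
    (a : Ideal R) : ((R ⧸ a) →ₗ[R] X) ≃ₗ[R] torsionBySet R X (a : Set R) :=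
  let ev : ((R ⧸ a) →ₗ[R] X) →ₗ[R] X := LinearMap.applyₗ 1
  have ev_injective : Function.Injective ev := fun f g hfg =>
    Submodule.linearMap_qext a (LinearMap.ext_ring hfg)
  have ev_range : LinearMap.range ev = torsionBySet R X (a : Set R) := by
    ext x
    rw [mem_torsionByIdeal]
    refine ⟨?_, fun hx => ⟨Submodule.liftQ a (LinearMap.toSpanSingleton R X x) hx, by
      exact one_smul R x⟩⟩
    rintro ⟨f, rfl⟩ r hr
    change r • f 1 = 0
    rw [← map_smul, Module.mem_annihilator.1 (le_annihilator_quotient a hr), map_zero]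
  (LinearEquiv.ofInjective ev ev_injective).trans (LinearEquiv.ofEq _ _ ev_range)

variable (S : ObjectProperty (ModuleCat.{u} R)) [S.IsSerreClass]

lemma prop_ext_zero_iff (a : Ideal R) :
    S (.of R (ModExt R (R ⧸ a) X 0)) ↔ S (.of R (torsionBySet R X (a : Set R))) :=
  let e := (ModExt.zeroEquivHom (R ⧸ a) X).trans (quotientHomEquivTorsion X a)
  ⟨prop_of_linearEquiv S e, prop_of_linearEquiv S e.symm⟩

/-- Multiplication by `g` as a map `0 :_X a^(k+1) → 0 :_X a^k`, for `g ∈ a`. -/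
def torsionPowSMul (X : Type u) [AddCommGroup X] [Module R X] {a : Ideal R} (k : ℕ) (g : a) :
    torsionBySet R X ((a ^ (k + 1) : Ideal R) : Set R) →ₗ[R]
      torsionBySet R X ((a ^ k : Ideal R) : Set R) :=
  LinearMap.restrict (LinearMap.lsmul R X g) fun x hx => mem_torsionByIdeal.2 fun r hr => by
    rw [LinearMap.lsmul_apply, ← mul_smul]
    exact mem_torsionByIdeal.1 hx _ (by rw [pow_succ]; exact Ideal.mul_mem_mul hr g.2)

lemma exact_inclusion_pi_torsionPowSMul {a : Ideal R} {n : ℕ} {g : Fin n → a}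
    (hg : Ideal.span (Set.range fun i => (g i : R)) = a) (k : ℕ) :
    Function.Exact
      (Submodule.inclusion (Submodule.torsionBySet_le_torsionBySet_of_subset (M := X)
        (Ideal.pow_le_self (I := a) k.succ_ne_zero)))
      (LinearMap.pi fun i => torsionPowSMul X k (g i)) := by
  refine fun x => ⟨fun hx => ⟨⟨x, ?_⟩, rfl⟩, ?_⟩
  · have hgx : Set.range (fun i => (g i : R)) ⊆ Ideal.torsionOf R X x := by
      rintro _ ⟨i, rfl⟩
      exact congrArg Subtype.val (congrFun hx i)
    rw [← Ideal.span_le, hg] at hgx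
    exact mem_torsionByIdeal.2 hgx
  · rintro ⟨y, rfl⟩
    ext i
    exact mem_torsionByIdeal.1 y.2 _ (g i).2

lemma prop_torsionByIdeal_pow [IsNoetherianRing R] (a : Ideal R)
    (h : S (.of R (torsionBySet R X (a : Set R)))) (k : ℕ) :
    S (.of R (torsionBySet R X ((a ^ k : Ideal R) : Set R))) := by
  induction k with
  | zero =>
    have : Subsingleton (torsionBySet R X ((a ^ 0 : Ideal R) : Set R)) := by
      rw [pow_zero, Ideal.one_eq_top, Submodule.top_coe, Submodule.torsionBySet_univ]
      infer_instance
    exact prop_of_subsingleton S _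
  | succ k ih =>
    obtain ⟨n, g, hg⟩ := Submodule.fg_iff_exists_fin_generating_family.1
      (IsNoetherian.noetherian a)
    have hga (i) : g i ∈ a := hg ▸ Submodule.subset_span ⟨i, rfl⟩
    exact prop_of_exact S (exact_inclusion_pi_torsionPowSMul (g := fun i => ⟨g i, hga i⟩) hg k) h
      (prop_pi S ih n)

lemma prop_of_pow_le_annihilator [IsNoetherianRing R] (a : Ideal R)
    (h : S (.of R (torsionBySet R X (a : Set R)))) (k : ℕ)
    (hk : a ^ k ≤ Module.annihilator R X) : S (.of R X) :=
  prop_of_linearEquiv S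
    ((LinearEquiv.ofEq _ _ (torsionByIdeal_eq_top_iff.2 hk)).trans Submodule.topEquiv)
    (prop_torsionByIdeal_pow S a h k)

/-- Multiplication by `x`, as a map from `X` onto `xX`. -/
def smulOntoImage (x : R) (X : Type u) [AddCommGroup X] [Module R X] :
    X →ₗ[R] (x • ⊤ : Submodule R X) :=
  (LinearMap.lsmul R X x).codRestrict _ fun m =>
    Submodule.smul_mem_pointwise_smul m x ⊤ Submodule.mem_top

lemma isShortExact_torsionBy (x : R) (X : Type u) [AddCommGroup X] [Module R X] :
    IsShortExact (torsionBy R X x).subtype (smulOntoImage x X) where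
  injective := Submodule.injective_subtype _
  exact m := by
    rw [Subtype.ext_iff]
    exact ⟨fun hm => ⟨⟨m, hm⟩, rfl⟩, by rintro ⟨n, rfl⟩; exact n.2⟩
  surjective := by
    rintro ⟨_, m, -, rfl⟩
    exact ⟨m, rfl⟩

lemma isShortExact_quotSMulTop (x : R) (X : Type u) [AddCommGroup X] [Module R X] :
    IsShortExact (x • ⊤ : Submodule R X).subtype (x • ⊤ : Submodule R X).mkQ :=
  IsShortExact.subtype_mkQ _

-- `Ext^i(R/a, X) → Ext^i(R/a, xX) → Ext^i(R/a, X)` is multiplication by `x`, hence zero.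
theorem prop_ext_of_torsionBy_of_quotSMulTop (a : Ideal R) {x : R} (hx : x ∈ a) (i : ℕ)
    (hker : S (.of R (ModExt R (R ⧸ a) (torsionBy R X x) i)))
    (hcoker : ∀ j, S (.of R (ModExt R (R ⧸ a) (QuotSMulTop x X) j))) :
    S (.of R (ModExt R (R ⧸ a) X i)) := by
  let incl := ModExt.postcomp (R ⧸ a) (x • ⊤ : Submodule R X).subtype i
  let mul := ModExt.postcomp (R ⧸ a) (smulOntoImage x X) i
  have hker_mul : S (.of R (LinearMap.ker mul)) :=
    prop_ker_of_exact S ((isShortExact_torsionBy x X).exact_postcomp_postcomp (R ⧸ a) i) hker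
  have hker_incl : S (.of R (LinearMap.ker incl)) := by
    cases i with
    | zero =>
      rw [LinearMap.ker_eq_bot.2
        (ModExt.postcomp_injective_of_injective _ (Submodule.injective_subtype _))]
      exact prop_of_subsingleton S _
    | succ i =>
      exact prop_ker_of_exact S
        ((isShortExact_quotSMulTop x X).exact_connecting_postcomp (R ⧸ a) i) (hcoker i)
  have hcomp : incl ∘ₗ mul = 0 := LinearMap.ext fun y => by
    have hfactor : (x • ⊤ : Submodule R X).subtype ∘ₗ smulOntoImage x X = x • LinearMap.id := rfl
    rw [LinearMap.comp_apply, ← ModExt.postcomp_comp, hfactor, ModExt.postcomp_smul,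
      ModExt.postcomp_id]
    exact Module.mem_annihilator.1
      (ModExt.annihilator_le_left (R ⧸ a) X i (le_annihilator_quotient a hx)) y
  have hker_comp := prop_ker_comp S hker_mul hker_incl
  rw [hcomp, LinearMap.ker_zero] at hker_comp
  exact prop_of_linearEquiv S Submodule.topEquiv hker_comp

lemma prop_ext_torsionBy_zero (a : Ideal R) (x : R) (h₀ : S (.of R (ModExt R (R ⧸ a) X 0))) :
    S (.of R (ModExt R (R ⧸ a) (torsionBy R X x) 0)) :=
  prop_of_injective S (ModExt.postcomp_injective_of_injective _ (Submodule.injective_subtype _)) h₀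

lemma prop_ext_torsionBy_one (a : Ideal R) (x : R) (h₀ : S (.of R (ModExt R (R ⧸ a) X 0)))
    (h₁ : S (.of R (ModExt R (R ⧸ a) X 1))) :
    S (.of R (ModExt R (R ⧸ a) (torsionBy R X x) 1)) :=
  prop_of_exact S ((isShortExact_torsionBy x X).exact_connecting_postcomp (R ⧸ a) 0)
    (prop_of_injective S
      (ModExt.postcomp_injective_of_injective _ (Submodule.injective_subtype _)) h₀) h₁

lemma prop_ext_quotSMulTop_zero (a : Ideal R) (x : R) (h₀ : S (.of R (ModExt R (R ⧸ a) X 0)))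
    (h₁ : S (.of R (ModExt R (R ⧸ a) X 1)))
    (h₂ : S (.of R (ModExt R (R ⧸ a) (torsionBy R X x) 2))) :
    S (.of R (ModExt R (R ⧸ a) (QuotSMulTop x X) 0)) :=
  prop_of_exact S ((isShortExact_quotSMulTop x X).exact_postcomp_connecting (R ⧸ a) 0) h₀
    (prop_of_exact S ((isShortExact_torsionBy x X).exact_postcomp_connecting (R ⧸ a) 1) h₁ h₂)

theorem prop_ext_of_forall_prime [IsNoetherianRing R] (a : Ideal R)
    (Q : ∀ (X : Type u) [AddCommGroup X] [Module R X], Prop)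
    (htorsion : ∀ (X : Type u) [AddCommGroup X] [Module R X], Q X →
      S (.of R (torsionBySet R X (a : Set R))))
    (hprime : ∀ (X : Type u) [AddCommGroup X] [Module R X], Q X →
      ∀ p : Ideal R, p.IsPrime → ¬ a ≤ p → ∃ x ∈ a, x ∉ p ∧ Q (torsionBy R X x) ∧
        ((∀ i, S (.of R (ModExt R (R ⧸ a) (torsionBy R X x) i))) →
          ∀ i, S (.of R (ModExt R (R ⧸ a) (QuotSMulTop x X) i))))
    (X : Type u) [AddCommGroup X] [Module R X] (hX : Q X) (i : ℕ) :
    S (.of R (ModExt R (R ⧸ a) X i)) := by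
  suffices H : ∀ J : Ideal R, ∀ (X : Type u) [AddCommGroup X] [Module R X], Q X →
      J ≤ Module.annihilator R X → ∀ i, S (.of R (ModExt R (R ⧸ a) X i)) from
    H ⊥ X hX bot_le i
  clear! X
  intro J
  induction J using WellFoundedGT.induction with
  | ind J ih =>
  intro X _ _ hX hJ i
  by_cases hrad : a ≤ J.radical
  · obtain ⟨k, hk⟩ := Ideal.exists_pow_le_of_le_radical_of_fg hrad (IsNoetherian.noetherian a)
    exact prop_ext_of_prop S (prop_of_pow_le_annihilator S a (htorsion X hX) k (hk.trans hJ)) i _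
  · obtain ⟨p, ⟨hJp, hp⟩, hap⟩ : ∃ p ∈ {p : Ideal R | J ≤ p ∧ p.IsPrime}, ¬ a ≤ p := by
      simpa only [Ideal.radical_eq_sInf, le_sInf_iff, not_forall, exists_prop] using hrad
    obtain ⟨x, hxa, hxp, hQx, hcoker⟩ := hprime X hX p hp hap
    have hxJ : x ∉ J := fun hx => hxp (hJp hx)
    have hker := ih (J ⊔ Ideal.span {x}) (by simpa using hxJ) (torsionBy R X x) hQx <|
      sup_le (le_annihilator_submodule hJ _) <| (Ideal.span_singleton_le_iff_mem _).2 <|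
        Module.mem_annihilator.2 (Submodule.smul_torsionBy x)
    exact prop_ext_of_torsionBy_of_quotSMulTop S a hxa i (hker i) (hcoker hker)

end Torsion

/-! ### Power torsion and artinian modules -/

section PowTorsion

variable {R : Type u} [CommRing R]
variable {X Y : Type u} [AddCommGroup X] [Module R X] [AddCommGroup Y] [Module R Y]

/-- The `a`-torsion modules of the theory of local cohomology, in which every element is killed
by some power of `a`. -/
def IsPowTorsion (a : Ideal R) (X : Type u) [AddCommGroup X] [Module R X] : Prop :=
  ∀ x : X, ∃ n : ℕ, ∀ r ∈ a ^ n, r • x = 0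

namespace IsPowTorsion

lemma of_injective {a : Ideal R} (h : IsPowTorsion a Y) (f : X →ₗ[R] Y)
    (hf : Function.Injective f) : IsPowTorsion a X := fun x =>
  let ⟨n, hn⟩ := h (f x)
  ⟨n, fun r hr => hf <| by rw [map_smul, hn r hr, map_zero]⟩

lemma of_surjective {a : Ideal R} (h : IsPowTorsion a X) (f : X →ₗ[R] Y)
    (hf : Function.Surjective f) : IsPowTorsion a Y := fun y => by
  obtain ⟨x, rfl⟩ := hf y
  obtain ⟨n, hn⟩ := h x
  exact ⟨n, fun r hr => by rw [← map_smul, hn r hr, map_zero]⟩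

lemma submodule {a : Ideal R} (h : IsPowTorsion a X) (K : Submodule R X) : IsPowTorsion a K :=
  h.of_injective K.subtype K.injective_subtype

lemma quotient {a : Ideal R} (h : IsPowTorsion a X) (K : Submodule R X) :
    IsPowTorsion a (X ⧸ K) :=
  h.of_surjective K.mkQ K.mkQ_surjective

end IsPowTorsion

end PowTorsion

section Artinian

variable {R : Type u} [CommRing R]
variable {X : Type u} [AddCommGroup X] [Module R X]

open Submodule (torsionBy torsionBySet)
open scoped Pointwise

lemma exists_forall_eq_of_antitone {α : Type*} [PartialOrder α] [WellFoundedLT α]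
    {V : ℕ × ℕ → α} (hV : Antitone V) : ∃ K, ∀ k ≥ K, ∀ j, V (k, j) = V (K, j) := by
  obtain ⟨_, ⟨⟨d, e⟩, rfl⟩, hmin⟩ := wellFounded_lt.has_min (Set.range V) ⟨_, (0, 0), rfl⟩
  have hcorner {k j} (hk : d ≤ k) (hj : e ≤ j) : V (k, j) = V (d, e) :=
    (hV (Prod.mk_le_mk.2 ⟨hk, hj⟩)).eq_of_not_lt (hmin _ ⟨_, rfl⟩)
  have hrow (j : ℕ) : ∃ n, ∀ m ≥ n, V (m, j) = V (n, j) := by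
    obtain ⟨_, ⟨n, rfl⟩, hn⟩ := wellFounded_lt.has_min (Set.range fun n => V (n, j)) ⟨_, 0, rfl⟩
    exact ⟨n, fun m hm => (hV (Prod.mk_le_mk.2 ⟨hm, le_rfl⟩)).eq_of_not_lt (hn _ ⟨m, rfl⟩)⟩
  choose g hg using hrow
  refine ⟨max d ((Finset.range e).sup g), fun k hk j => ?_⟩
  obtain ⟨hdk, hgk⟩ := max_le_iff.1 hk
  by_cases hj : e ≤ j
  · rw [hcorner hdk hj, hcorner (le_max_left _ _) hj]
  · have hgj : g j ≤ (Finset.range e).sup g := Finset.le_sup (Finset.mem_range.2 (by lia))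
    rw [hg j k (hgj.trans hgk), hg j _ (hgj.trans (le_max_right _ _))]

/-- The submodule `x^j (F ∩ (0 :_X x^(j+1)))` of `0 :_X x`. These submodules play the role of the
graded pieces of `F`, for the filtration of `X` by the `0 :_X x^j`. -/
def torsionLayer (x : R) (F : Submodule R X) (j : ℕ) : Submodule R (torsionBy R X x) :=
  ((F ⊓ torsionBy R X (x ^ (j + 1))).map (LinearMap.lsmul R X (x ^ j))).comap
    (torsionBy R X x).subtype

lemma mem_torsionLayer {x : R} {F : Submodule R X} {j : ℕ} {v : torsionBy R X x} :
    v ∈ torsionLayer x F j ↔ ∃ z ∈ F, x ^ (j + 1) • z = 0 ∧ x ^ j • z = v := by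
  simp [torsionLayer, and_assoc]

lemma antitone_torsionLayer {x : R} {F : ℕ → Submodule R X} (hF : Antitone F) :
    Antitone fun k : ℕ × ℕ => torsionLayer x (F k.1) k.2 := by
  rintro ⟨k, i⟩ ⟨l, j⟩ ⟨hkl, hij⟩ v hv
  obtain ⟨d, rfl⟩ := Nat.exists_eq_add_of_le hij
  obtain ⟨z, hz, hz₀, hzv⟩ := mem_torsionLayer.1 hv
  refine mem_torsionLayer.2 ⟨x ^ d • z, (F k).smul_mem _ (hF hkl hz), ?_, ?_⟩
  · rw [← mul_smul, ← pow_add, add_right_comm, hz₀]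
  · rw [← mul_smul, ← pow_add, hzv]

lemma le_of_torsionLayer_le {x : R} (hx : ∀ m : X, ∃ n : ℕ, x ^ n • m = 0) {F F' : Submodule R X}
    (hF : F' ≤ F) (h : ∀ j, torsionLayer x F j ≤ torsionLayer x F' j) : F ≤ F' := by
  have key (j : ℕ) : ∀ z ∈ F, x ^ j • z = 0 → z ∈ F' := by
    induction j with
    | zero =>
      intro z _ hz
      rw [pow_zero, one_smul] at hz
      exact hz ▸ F'.zero_mem
    | succ j ih =>
      intro z hz hz₀
      have hxz : x • x ^ j • z = 0 := by rw [← mul_smul, ← pow_succ', hz₀]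
      obtain ⟨z', hz', -, hzz'⟩ := mem_torsionLayer.1
        (h j (mem_torsionLayer.2 ⟨z, hz, hz₀, rfl⟩ : ⟨x ^ j • z, hxz⟩ ∈ _))
      have hsub : z - z' ∈ F' :=
        ih _ (F.sub_mem hz (hF hz')) (by rw [smul_sub, hzz', sub_self])
      exact (Submodule.sub_mem_iff_left F' hz').1 hsub
  exact fun z hz => (hx z).elim fun n => key n z hz

lemma isArtinian_of_isArtinian_torsionBy (x : R) (hx : ∀ m : X, ∃ n : ℕ, x ^ n • m = 0)
    [IsArtinian R (torsionBy R X x)] : IsArtinian R X := by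
  rw [← monotone_stabilizes_iff_artinian]
  intro f
  let F (k : ℕ) : Submodule R X := OrderDual.ofDual (f k)
  have hF : Antitone F := fun _ _ h => f.monotone h
  obtain ⟨K, hK⟩ := exists_forall_eq_of_antitone (antitone_torsionLayer (x := x) hF)
  refine ⟨K, fun k hk => congrArg OrderDual.toDual (?_ : F K = F k)⟩
  exact le_antisymm (le_of_torsionLayer_le hx (hF hk) fun j => (hK k hk j).ge) (hF hk)

lemma isArtinian_of_isArtinian_torsionBySet_finset (s : Finset R) :
    ∀ (X : Type u) [AddCommGroup X] [Module R X],
      (∀ x ∈ s, ∀ m : X, ∃ n : ℕ, x ^ n • m = 0) →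
      IsArtinian R (torsionBySet R X (s : Set R)) → IsArtinian R X := by
  classical
  induction s using Finset.induction_on with
  | empty =>
    intro X _ _ _ h
    refine isArtinian_of_injective
      (LinearMap.id.codRestrict (torsionBySet R X ((∅ : Finset R) : Set R)) fun m => ?_)
        (Function.injective_id.codRestrict _)
    simp [Submodule.mem_torsionBySet_iff]
  | insert y s hy ih =>
    intro X _ _ hnil h
    refine ih X (fun x hx => hnil x (Finset.mem_insert_of_mem hx)) ?_
    have : IsArtinian R (torsionBy R (torsionBySet R X (s : Set R)) y) := by
      refine isArtinian_of_injective (((Submodule.subtype _) ∘ₗ (Submodule.subtype _)).codRestrict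
        (torsionBySet R X ((insert y s : Finset R) : Set R)) fun m => ?_)
        (((Submodule.injective_subtype _).comp (Submodule.injective_subtype _)).codRestrict _)
      rw [Submodule.mem_torsionBySet_iff]
      rintro ⟨r, hr⟩
      rcases Finset.mem_insert.1 hr with rfl | hr
      · exact congrArg Subtype.val m.2
      · exact (Submodule.mem_torsionBySet_iff _ _).1 m.1.2 ⟨r, hr⟩
    refine isArtinian_of_isArtinian_torsionBy y fun m => ?_
    obtain ⟨n, hn⟩ := hnil y (Finset.mem_insert_self _ _) m
    exact ⟨n, Subtype.ext hn⟩

theorem IsPowTorsion.isArtinian {a : Ideal R} (hX : IsPowTorsion a X) (ha : a.FG)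
    [hart : IsArtinian R (torsionBySet R X (a : Set R))] : IsArtinian R X := by
  obtain ⟨s, rfl⟩ := ha
  refine isArtinian_of_isArtinian_torsionBySet_finset s X (fun x hx m => ?_) ?_
  · obtain ⟨n, hn⟩ := hX m
    exact ⟨n, hn _ (Ideal.pow_mem_pow (Submodule.subset_span hx) n)⟩
  · rwa [Submodule.torsionBySet_eq_torsionBySet_span]

lemma isArtinian_of_forall_isMaximal [IsNoetherianRing R] [Module.Finite R X] {J : Ideal R}
    (hJX : J ≤ Module.annihilator R X) (hJ : ∀ p : Ideal R, p.IsPrime → J ≤ p → p.IsMaximal) :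
    IsArtinian R X := by
  have htors : Module.IsTorsionBySet R X J := fun m r => Module.mem_annihilator.1 (hJX r.2) m
  let _ : Module (R ⧸ J) X := htors.module
  have : IsScalarTower R (R ⧸ J) X := htors.isScalarTower
  have : Module.Finite (R ⧸ J) X := Module.Finite.of_restrictScalars_finite R (R ⧸ J) X
  have : IsArtinianRing (R ⧸ J) := by
    rw [isArtinianRing_iff_krullDimLE_zero, Ring.krullDimLE_zero_iff]
    intro I hI
    have hmax : (I.comap (Ideal.Quotient.mk J)).IsMaximal :=
      hJ _ inferInstance (Ideal.mk_ker.ge.trans (Ideal.comap_mono bot_le))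
    rw [← Ideal.map_comap_of_surjective _ Ideal.Quotient.mk_surjective I]
    exact hmax.map_of_surjective_of_ker_le Ideal.Quotient.mk_surjective
      (Ideal.comap_mono bot_le)
  exact isArtinian_of_surjective_algebraMap (S := R) (R := R ⧸ J) Ideal.Quotient.mk_surjective

end Artinian

/-! ### Secondary decomposition -/

section Secondary

variable {R : Type u} [CommRing R]
variable {X : Type u} [AddCommGroup X] [Module R X]

open scoped Pointwise

-- Fitting's lemma for the multiplication by `x` on `W`.
lemma mem_radical_annihilator_or_smul_eq [IsArtinian R X] {W : Submodule R X} (hW : SupIrred W)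
    (x : R) : x ∈ W.annihilator.radical ∨ x • W = W := by
  let f : Module.End R W := algebraMap R (Module.End R W) x
  obtain ⟨n, hcodisjoint, hn⟩ :=
    (f.eventually_codisjoint_ker_pow_range_pow.and (Filter.eventually_ge_atTop 1)).exists
  have hf (w : W) : (f ^ n) w = x ^ n • w := by
    rw [← map_pow, Module.algebraMap_end_apply]
  have hsup := congrArg (Submodule.map W.subtype) (codisjoint_iff.1 hcodisjoint)
  rw [Submodule.map_sup, Submodule.map_top, Submodule.range_subtype] at hsup
  refine (hW.2 hsup).imp (fun hker => ?_) (fun hrange => le_antisymm ?_ ?_)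
  · refine ⟨n, Submodule.mem_annihilator.2 fun w hw => ?_⟩
    rw [← hker] at hw
    obtain ⟨w', hw', rfl⟩ := hw
    have hw'₀ : x ^ n • w' = 0 := (hf w').symm.trans hw'
    exact congrArg Subtype.val hw'₀
  · rintro _ ⟨w, hw, rfl⟩
    exact W.smul_mem x hw
  · intro w hw
    rw [← hrange] at hw
    obtain ⟨_, ⟨w', rfl⟩, rfl⟩ := hw
    refine ⟨x ^ (n - 1) • w', W.smul_mem _ w'.2, ?_⟩
    rw [hf, DistribSMul.toLinearMap_apply, ← mul_smul, ← pow_succ', Nat.sub_add_cancel hn]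
    rfl

lemma isPrime_radical_annihilator [IsArtinian R X] {W : Submodule R X} (hW : SupIrred W) :
    W.annihilator.radical.IsPrime where
  ne_top' h := hW.ne_bot (Submodule.annihilator_eq_top_iff.1 (Ideal.radical_eq_top.1 h))
  mem_or_mem' {x y} hxy := by
    obtain ⟨n, hn⟩ := hxy
    have hnil : (x * y) ^ n • W ≠ W := fun h => hW.ne_bot <| by
      rw [← h, eq_bot_iff]
      rintro _ ⟨w, hw, rfl⟩
      exact Submodule.mem_annihilator.1 hn w hw
    by_contra! hcon
    have hx := (mem_radical_annihilator_or_smul_eq hW x).resolve_left hcon.1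
    have hy := (mem_radical_annihilator_or_smul_eq hW y).resolve_left hcon.2
    exact hnil ((MulAction.stabilizerSubmonoid R W).pow_mem (mul_mem hx hy) n)

theorem exists_sup_smul_top_eq_top [IsNoetherianRing R] [IsArtinian R X] (b : Ideal R) :
    ∃ F : Finset (Ideal R), (∀ P ∈ F, P.IsPrime ∧ ¬ b ≤ P) ∧
      ∃ (n : ℕ) (V : Submodule R X), b ^ n ≤ V.annihilator ∧
        ∀ x ∈ b, (∀ P ∈ F, x ∉ P) → V ⊔ x • ⊤ = ⊤ := by
  classical
  obtain ⟨s, hs, hirr⟩ := exists_supIrred_decomposition (⊤ : Submodule R X)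
  let rad (W : Submodule R X) : Ideal R := W.annihilator.radical
  let V := (s.filter fun W => b ≤ rad W).sup id
  have hV : b ≤ rad V := Finset.sup_induction (p := fun W => b ≤ rad W)
    (by simp [rad, Submodule.annihilator_bot, Ideal.radical_eq_top.2])
    (fun W₁ h₁ W₂ h₂ => by
      simpa only [rad, Submodule.annihilator_sup, Ideal.radical_inf] using le_inf h₁ h₂)
    fun W hW => (Finset.mem_filter.1 hW).2
  obtain ⟨n, hn⟩ := Ideal.exists_pow_le_of_le_radical_of_fg hV (IsNoetherian.noetherian b)
  refine ⟨(s.filter fun W => ¬ b ≤ rad W).image rad, fun P hP => ?_, n, V, hn, fun x _ hxP => ?_⟩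
  · obtain ⟨W, hW, rfl⟩ := Finset.mem_image.1 hP
    obtain ⟨hWs, hbW⟩ := Finset.mem_filter.1 hW
    exact ⟨isPrime_radical_annihilator (hirr hWs), hbW⟩
  · refine top_unique (hs.ge.trans ?_)
    refine Finset.sup_le fun W hW => ?_
    by_cases hbW : b ≤ rad W
    · exact le_sup_of_le_left (Finset.le_sup (f := id) (Finset.mem_filter.2 ⟨hW, hbW⟩))
    · have hxW : x • W = W := (mem_radical_annihilator_or_smul_eq (hirr hW) x).resolve_left
        (hxP _ (Finset.mem_image.2 ⟨W, Finset.mem_filter.2 ⟨hW, hbW⟩, rfl⟩))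
      exact le_sup_of_le_right (hxW.ge.trans (Submodule.map_mono le_top))

/-- A consequence of the existence of a secondary representation of the localization `X_p`:
some power of `a` kills `(X/xX)_p` for all `x ∈ a` outside finitely many primes not
containing `a`. The assertion is spelled out without localizations. -/
def HasSecondaryBound (a p : Ideal R) (X : Type u) [AddCommGroup X] [Module R X] : Prop :=
  ∃ F : Finset (Ideal R), (∀ P ∈ F, P.IsPrime ∧ ¬ a ≤ P) ∧ ∃ n : ℕ,
    ∀ x ∈ a, (∀ P ∈ F, x ∉ P) → ∀ ξ : X, ∀ r ∈ a ^ n, ∃ t ∉ p, ∃ y : X, t • r • ξ = x • y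

end Secondary

/-! ### Localization at the minimal primes -/

section Localization

variable {R : Type u} [CommRing R]
variable {X Y : Type u} [AddCommGroup X] [Module R X] [AddCommGroup Y] [Module R Y]

open Submodule (torsionBy torsionBySet)
open scoped Pointwise

lemma exists_mem_annihilator_of_fg (M : Submonoid R) {N : Submodule R X} (hN : N.FG)
    (h : ∀ n ∈ N, ∃ t ∈ M, t • n = 0) : ∃ t ∈ M, t ∈ N.annihilator := by
  induction N, hN using Submodule.fg_induction with
  | singleton x =>
    obtain ⟨t, ht, htx⟩ := h x (Submodule.mem_span_singleton_self x)
    exact ⟨t, ht, (Submodule.mem_annihilator_span_singleton x t).2 htx⟩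
  | sup N₁ N₂ _ _ ih₁ ih₂ =>
    obtain ⟨t₁, ht₁, hann₁⟩ := ih₁ fun n hn => h n (Submodule.mem_sup_left hn)
    obtain ⟨t₂, ht₂, hann₂⟩ := ih₂ fun n hn => h n (Submodule.mem_sup_right hn)
    refine ⟨t₁ * t₂, M.mul_mem ht₁ ht₂, ?_⟩
    rw [Submodule.annihilator_sup]
    exact ⟨Ideal.mul_mem_right _ _ hann₁, Ideal.mul_mem_left _ _ hann₂⟩

lemma exists_fg_map_eq (g : X →ₗ[R] Y) {G : Submodule R Y} (hG : G.FG)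
    (hle : G ≤ LinearMap.range g) : ∃ L : Submodule R X, L.FG ∧ L.map g = G := by
  obtain ⟨n, s, rfl⟩ := Submodule.fg_iff_exists_fin_generating_family.1 hG
  choose t ht using fun i => hle (Submodule.subset_span ⟨i, rfl⟩)
  refine ⟨Submodule.span R (Set.range t), Submodule.fg_span (Set.finite_range t), ?_⟩
  rw [Submodule.map_span, ← Set.range_comp]
  exact congrArg (fun f => Submodule.span R (Set.range f)) (funext ht)

lemma exists_mem_forall_notMem {a : Ideal R} {F : Set (Ideal R)} (hfin : F.Finite)
    (hF : ∀ P ∈ F, P.IsPrime ∧ ¬ a ≤ P) : ∃ x ∈ a, ∀ P ∈ F, x ∉ P := by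
  by_contra! hcon
  have hsub : (a : Set R) ⊆ ⋃ P ∈ F, (P : Set R) := fun x hx => by
    simpa only [Set.mem_iUnion, exists_prop, SetLike.mem_coe] using hcon x hx
  obtain ⟨P, hP, haP⟩ := (Ideal.subset_union_prime_finite hfin (f := id) ⊤ ⊤
    fun P hP _ _ => (hF P hP).1).1 hsub
  exact (hF P hP).2 haP

lemma exists_secondaryBound_of_finite {a : Ideal R} {T : Set (Ideal R)} (hfin : T.Finite)
    (h : ∀ p ∈ T, HasSecondaryBound a p X) :
    ∃ F : Finset (Ideal R), (∀ P ∈ F, P.IsPrime ∧ ¬ a ≤ P) ∧ ∃ n : ℕ, ∀ p ∈ T,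
      ∀ x ∈ a, (∀ P ∈ F, x ∉ P) → ∀ ξ : X, ∀ r ∈ a ^ n, ∃ t ∉ p, ∃ y : X, t • r • ξ = x • y := by
  classical
  choose F hF n hn using fun p : T => h p p.2
  have := hfin.fintype
  refine ⟨Finset.univ.biUnion F, fun P hP => ?_, Finset.univ.sup n, fun p hp x hxa hx ξ r hr => ?_⟩
  · obtain ⟨p, -, hP⟩ := Finset.mem_biUnion.1 hP
    exact hF p P hP
  · exact hn ⟨p, hp⟩ x hxa
      (fun P hP => hx P (Finset.mem_biUnion.2 ⟨⟨p, hp⟩, Finset.mem_univ _, hP⟩)) ξ r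
      (Ideal.pow_le_pow_right (Finset.le_sup (Finset.mem_univ _)) hr)

variable (M : Submonoid R)

lemma smul_localizedModule_mk_eq_zero {c : Ideal R} {x : X} (h : ∀ r ∈ c, r • x = 0) (s : M) :
    ∀ r ∈ c.map (algebraMap R (Localization M)),
      r • (LocalizedModule.mk x s : LocalizedModule M X) = 0 := by
  have hle : c.map (algebraMap R (Localization M)) ≤
      LinearMap.ker (LinearMap.toSpanSingleton (Localization M) (LocalizedModule M X)
        (LocalizedModule.mk x s)) := by
    refine Ideal.map_le_iff_le_comap.2 fun r hr => ?_
    rw [Ideal.mem_comap, LinearMap.mem_ker, LinearMap.toSpanSingleton_apply, algebraMap_smul,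
      LocalizedModule.smul'_mk, h r hr, LocalizedModule.zero_mk]
  exact hle

lemma IsPowTorsion.localizedModule {a : Ideal R} (h : IsPowTorsion a X) :
    IsPowTorsion (a.map (algebraMap R (Localization M))) (LocalizedModule M X) := by
  intro w
  induction w using LocalizedModule.induction_on with
  | h x s =>
  obtain ⟨n, hn⟩ := h x
  refine ⟨n, ?_⟩
  rw [← Ideal.map_pow]
  exact smul_localizedModule_mk_eq_zero M hn s

lemma torsionByIdeal_localizedModule_le {a : Ideal R} (ha : a.FG) :
    torsionBySet (Localization M) (LocalizedModule M X)
        (a.map (algebraMap R (Localization M)) : Set (Localization M)) ≤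
      LinearMap.range (LocalizedModule.map M (torsionBySet R X (a : Set R)).subtype) := by
  intro w hw
  rw [mem_torsionByIdeal] at hw
  induction w using LocalizedModule.induction_on with
  | h x s =>
  have hlocal : ∀ n ∈ Submodule.map (LinearMap.toSpanSingleton R X x) a, ∃ t ∈ M, t • n = 0 := by
    rintro _ ⟨r, hr, rfl⟩
    have hrx := hw _ (Ideal.mem_map_of_mem (algebraMap R (Localization M)) hr)
    rw [algebraMap_smul, LocalizedModule.smul'_mk, IsLocalizedModule.mk_eq_mk',
      IsLocalizedModule.mk'_eq_zero'] at hrx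
    obtain ⟨t, ht⟩ := hrx
    exact ⟨t, t.2, ht⟩
  obtain ⟨t, htM, ht⟩ := exists_mem_annihilator_of_fg M (Submodule.FG.map _ ha) hlocal
  have htx : t • x ∈ torsionBySet R X (a : Set R) := mem_torsionByIdeal.2 fun r hr => by
    rw [smul_comm]
    exact Submodule.mem_annihilator.1 ht _ ⟨r, hr, rfl⟩
  refine ⟨LocalizedModule.mk ⟨t • x, htx⟩ (⟨t, htM⟩ * s), ?_⟩
  rw [LocalizedModule.map_mk]
  exact LocalizedModule.mk_cancel_common_left ⟨t, htM⟩ s x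

end Localization

section MinimalPrime

variable {R : Type u} [CommRing R] {a p : Ideal R} [p.IsPrime]

lemma isMaximal_of_map_le_of_mem_minimalPrimes (hp : p ∈ a.minimalPrimes)
    {q : Ideal (Localization.AtPrime p)} (hq : q.IsPrime)
    (haq : a.map (algebraMap R (Localization.AtPrime p)) ≤ q) : q.IsMaximal := by
  have hqp : q.comap (algebraMap R (Localization.AtPrime p)) ≤ p := by
    have hdisj := ((IsLocalization.isPrime_iff_isPrime_disjoint p.primeCompl _ q).1 hq).2
    exact fun r hr => of_not_not fun hrp => Set.disjoint_left.1 hdisj hrp hr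
  have hpq : p ≤ q.comap (algebraMap R (Localization.AtPrime p)) :=
    hp.2 ⟨Ideal.IsPrime.comap _, Ideal.map_le_iff_le_comap.1 haq⟩ hqp
  have hmax : IsLocalRing.maximalIdeal (Localization.AtPrime p) ≤ q := by
    rw [← Localization.AtPrime.map_eq_maximalIdeal]
    exact Ideal.map_le_iff_le_comap.2 hpq
  rw [← (IsLocalRing.maximalIdeal.isMaximal _).eq_of_le hq.ne_top hmax]
  exact IsLocalRing.maximalIdeal.isMaximal _

variable [IsNoetherianRing R] {X : Type u} [AddCommGroup X] [Module R X]

open Submodule (torsionBy torsionBySet)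
open scoped Pointwise

lemma IsPowTorsion.isArtinian_localizedModule (hX : IsPowTorsion a X) (hp : p ∈ a.minimalPrimes)
    [hfin : Module.Finite (Localization.AtPrime p)
      (LocalizedModule p.primeCompl (torsionBySet R X (a : Set R)))] :
    IsArtinian (Localization.AtPrime p) (LocalizedModule p.primeCompl X) := by
  have : IsNoetherianRing (Localization.AtPrime p) :=
    IsLocalization.isNoetherianRing p.primeCompl _ inferInstance
  let b := a.map (algebraMap R (Localization.AtPrime p))
  let T := torsionBySet (Localization.AtPrime p) (LocalizedModule p.primeCompl X) (b : Set _)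
  have : Module.Finite (Localization.AtPrime p) T :=
    Module.Finite.of_injective (Submodule.inclusion
      (torsionByIdeal_localizedModule_le p.primeCompl (IsNoetherian.noetherian a)))
      (Submodule.inclusion_injective _)
  have : IsArtinian (Localization.AtPrime p) T :=
    isArtinian_of_forall_isMaximal (J := b)
      (fun r hr => Module.mem_annihilator.2 fun x => Subtype.ext (mem_torsionByIdeal.1 x.2 r hr))
      fun q hq => isMaximal_of_map_le_of_mem_minimalPrimes hp hq
  exact (hX.localizedModule p.primeCompl).isArtinian (IsNoetherian.noetherian b)

lemma hasSecondaryBound_of_isArtinian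
    [IsArtinian (Localization.AtPrime p) (LocalizedModule p.primeCompl X)] (a : Ideal R) :
    HasSecondaryBound a p X := by
  classical
  let W := LocalizedModule p.primeCompl X
  have : IsNoetherianRing (Localization.AtPrime p) :=
    IsLocalization.isNoetherianRing p.primeCompl _ inferInstance
  let φ := algebraMap R (Localization.AtPrime p)
  obtain ⟨F, hF, n, V, hV, htop⟩ := exists_sup_smul_top_eq_top (X := W) (a.map φ)
  refine ⟨F.image (Ideal.comap φ), fun P hP => ?_, n, fun x hxa hxF ξ r hr => ?_⟩
  · obtain ⟨Q, hQ, rfl⟩ := Finset.mem_image.1 hP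
    have := (hF Q hQ).1
    exact ⟨inferInstance, fun h => (hF Q hQ).2 (Ideal.map_le_iff_le_comap.2 h)⟩
  · have hξ : (LocalizedModule.mk ξ 1 : W) ∈ V ⊔ φ x • ⊤ := by
      rw [htop (φ x) (Ideal.mem_map_of_mem φ hxa) fun P hP => hxF _ (Finset.mem_image_of_mem _ hP)]
      exact Submodule.mem_top
    obtain ⟨v, hv, _, ⟨w, -, rfl⟩, hvw⟩ := Submodule.mem_sup.1 hξ
    have hrv : φ r • v = 0 := Submodule.mem_annihilator.1
      (hV (Ideal.map_pow φ a n ▸ Ideal.mem_map_of_mem φ hr)) v hv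
    have hmk : (LocalizedModule.mk (r • ξ) 1 : W) = x • r • w := by
      rw [← LocalizedModule.smul'_mk, ← hvw, smul_add,
        ← algebraMap_smul (Localization.AtPrime p) r v, hrv, zero_add,
        DistribSMul.toLinearMap_apply, algebraMap_smul, smul_comm]
    induction w using LocalizedModule.induction_on with
    | h w s =>
    rw [LocalizedModule.smul'_mk, LocalizedModule.smul'_mk, LocalizedModule.mk_eq] at hmk
    obtain ⟨t, ht⟩ := hmk
    refine ⟨t * s, (t * s).2, (t : R) • r • w, ?_⟩
    simp only [Submonoid.smul_def, one_smul] at ht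
    rw [mul_smul, ht, smul_comm]

theorem IsPowTorsion.hasSecondaryBound (hX : IsPowTorsion a X) (hp : p ∈ a.minimalPrimes)
    [Module.Finite (Localization.AtPrime p)
      (LocalizedModule p.primeCompl (torsionBySet R X (a : Set R)))] :
    HasSecondaryBound a p X :=
  have := hX.isArtinian_localizedModule hp
  hasSecondaryBound_of_isArtinian a

end MinimalPrime

/-! ### Finiteness in dimension at most one -/

section DimOne

variable {R : Type u} [CommRing R]
variable {X : Type u} [AddCommGroup X] [Module R X]

open Submodule (torsionBy torsionBySet)
open scoped Pointwise

lemma exists_smul_eq_zero_of_mem_pow_smul_top {a q : Ideal R} [hq : q.IsPrime] {x : R} {n : ℕ}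
    (h : ∀ ξ : X, ∀ r ∈ a ^ n, ∃ t ∉ q, ∃ y : X, t • r • ξ = x • y) {y : QuotSMulTop x X}
    (hy : y ∈ a ^ n • (⊤ : Submodule R (QuotSMulTop x X))) : ∃ t ∉ q, t • y = 0 := by
  induction hy using Submodule.smul_induction_on' with
  | smul r hr η _ =>
    obtain ⟨ξ, rfl⟩ := Submodule.Quotient.mk_surjective _ η
    obtain ⟨t, htq, z, hz⟩ := h ξ r hr
    refine ⟨t, htq, ?_⟩
    rw [← Submodule.Quotient.mk_smul, ← Submodule.Quotient.mk_smul, hz,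
      Submodule.Quotient.mk_eq_zero]
    exact Submodule.smul_mem_pointwise_smul z x ⊤ Submodule.mem_top
  | add y _ z _ ihy ihz =>
    obtain ⟨t, ht, hty⟩ := ihy
    obtain ⟨s, hs, hsz⟩ := ihz
    refine ⟨t * s, hq.mul_notMem ht hs, ?_⟩
    rw [smul_add, mul_smul, mul_smul, hsz, smul_comm, hty, smul_zero, smul_zero, add_zero]

section Serre

variable (S : ObjectProperty (ModuleCat.{u} R)) [S.IsSerreClass] [IsNoetherianRing R]

lemma prop_ext_of_pow_smul_top (a : Ideal R) (n : ℕ) (h₀ : S (.of R (ModExt R (R ⧸ a) X 0)))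
    (h : ∀ i, S (.of R (ModExt R (R ⧸ a) (a ^ n • ⊤ : Submodule R X) i))) (i : ℕ) :
    S (.of R (ModExt R (R ⧸ a) X i)) := by
  have hshort := IsShortExact.subtype_mkQ (a ^ n • ⊤ : Submodule R X)
  have hquot : S (.of R (X ⧸ (a ^ n • ⊤ : Submodule R X))) := by
    refine prop_of_pow_le_annihilator S a ((prop_ext_zero_iff S a).1 ?_) n fun r hr => ?_
    · exact prop_of_exact S (hshort.exact_postcomp_connecting (R ⧸ a) 0) h₀ (h 1)
    · refine Module.mem_annihilator.2 fun y => ?_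
      obtain ⟨η, rfl⟩ := Submodule.Quotient.mk_surjective _ y
      exact (Submodule.Quotient.mk_eq_zero _).2 (Submodule.smul_mem_smul hr Submodule.mem_top)
  exact prop_of_exact S (hshort.exact_postcomp_postcomp (R ⧸ a) i) (h i)
    (prop_ext_of_prop S hquot i _)

theorem prop_ext_of_hasSecondaryBound (a : Ideal R) {T : Set (Ideal R)} (hT : T.Finite)
    (hTprime : ∀ p ∈ T, p.IsPrime)
    (hlocal : ∀ (Y : Type u) [AddCommGroup Y] [Module R Y], IsPowTorsion a Y →
      (∀ p ∈ T, ∀ y : Y, ∃ t ∉ p, t • y = 0) → S (.of R (torsionBySet R Y (a : Set R))) →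
        ∀ i, S (.of R (ModExt R (R ⧸ a) Y i)))
    (hsecondary : ∀ (Y : Type u) [AddCommGroup Y] [Module R Y], IsPowTorsion a Y →
      S (.of R (torsionBySet R Y (a : Set R))) → ∀ p ∈ T, HasSecondaryBound a p Y)
    (hX : IsPowTorsion a X) (h₀ : S (.of R (ModExt R (R ⧸ a) X 0)))
    (h₁ : S (.of R (ModExt R (R ⧸ a) X 1))) (i : ℕ) : S (.of R (ModExt R (R ⧸ a) X i)) := by
  classical
  refine prop_ext_of_forall_prime S a (fun X _ _ => IsPowTorsion a X ∧
    S (.of R (ModExt R (R ⧸ a) X 0)) ∧ S (.of R (ModExt R (R ⧸ a) X 1)))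
    (fun X _ _ hX => (prop_ext_zero_iff S a).1 hX.2.1) ?_ X ⟨hX, h₀, h₁⟩ i
  rintro X _ _ ⟨hX, h₀, h₁⟩ p hp hap
  obtain ⟨F, hF, n, hn⟩ := exists_secondaryBound_of_finite hT
    (hsecondary X hX ((prop_ext_zero_iff S a).1 h₀))
  obtain ⟨x, hxa, hx⟩ := exists_mem_forall_notMem (a := a) (insert p F).finite_toSet fun P hP => by
    rcases Finset.mem_insert.1 hP with rfl | hP
    exacts [⟨hp, hap⟩, hF P hP]
  refine ⟨x, hxa, hx p (Finset.mem_insert_self _ _), ⟨hX.submodule _,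
    prop_ext_torsionBy_zero S a x h₀, prop_ext_torsionBy_one S a x h₀ h₁⟩, fun hker => ?_⟩
  have hcoker₀ := prop_ext_quotSMulTop_zero S a x h₀ h₁ (hker 2)
  refine prop_ext_of_pow_smul_top S a n hcoker₀ (hlocal _ ((hX.quotient _).submodule _) ?_ ?_)
  · rintro q hq ⟨y, hy⟩
    have := hTprime q hq
    obtain ⟨t, ht, hty⟩ := exists_smul_eq_zero_of_mem_pow_smul_top
      (hn q hq x hxa fun P hP => hx P (Finset.mem_insert_of_mem hP)) hy
    exact ⟨t, ht, Subtype.ext hty⟩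
  · exact (prop_ext_zero_iff S a).1 (prop_of_injective S
      (ModExt.postcomp_injective_of_injective _ (Submodule.injective_subtype _)) hcoker₀)

end Serre

lemma finite_quotSMulTop_of_sup_eq_top {x : R} {V : Submodule R X} [Module.Finite R V]
    (h : V ⊔ x • ⊤ = ⊤) : Module.Finite R (QuotSMulTop x X) := by
  refine Module.Finite.of_surjective ((x • ⊤ : Submodule R X).mkQ ∘ₗ V.subtype) ?_
  rw [← LinearMap.range_eq_top, LinearMap.range_comp, Submodule.range_subtype,
    Submodule.map_mkQ_eq_top, sup_comm, h]

variable [IsNoetherianRing R]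

theorem finite_ext_of_isArtinian (a : Ideal R) [IsArtinian R X]
    [Module.Finite R (torsionBySet R X (a : Set R))] (i : ℕ) :
    Module.Finite R (ModExt R (R ⧸ a) X i) := by
  classical
  refine prop_ext_of_forall_prime (ModuleCat.isFG R) a (fun X _ _ => IsArtinian R X ∧
    Module.Finite R (torsionBySet R X (a : Set R))) (fun X _ _ hX => hX.2) ?_ X
    ⟨inferInstance, inferInstance⟩ i
  rintro X _ _ ⟨_, hfin⟩ p hp hap
  obtain ⟨F, hF, n, V, hV, htop⟩ := exists_sup_smul_top_eq_top (X := X) a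
  obtain ⟨x, hxa, hx⟩ := exists_mem_forall_notMem (a := a) (insert p F).finite_toSet fun P hP => by
    rcases Finset.mem_insert.1 hP with rfl | hP
    exacts [⟨hp, hap⟩, hF P hP]
  refine ⟨x, hxa, hx p (Finset.mem_insert_self _ _), ⟨inferInstance, ?_⟩, fun _ => ?_⟩
  · exact (prop_ext_zero_iff (ModuleCat.isFG R) a).1 (prop_ext_torsionBy_zero (ModuleCat.isFG R) a x
      ((prop_ext_zero_iff (ModuleCat.isFG R) a).2 hfin))
  · have hVle : V ≤ torsionBySet R X ((a ^ n : Ideal R) : Set R) := fun v hv =>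
      mem_torsionByIdeal.2 fun r hr => Submodule.mem_annihilator.1 (hV hr) v hv
    have : Module.Finite R V := prop_of_injective (ModuleCat.isFG R)
      (Submodule.inclusion_injective hVle) (prop_torsionByIdeal_pow (ModuleCat.isFG R) a hfin n)
    have hcoker : Module.Finite R (QuotSMulTop x X) := finite_quotSMulTop_of_sup_eq_top
      (htop x hxa fun P hP => hx P (Finset.mem_insert_of_mem hP))
    exact fun i => prop_ext_of_prop (ModuleCat.isFG R) hcoker i _

/-- The condition `dim R/a ≤ 1`, as the absence of chains of three primes above `a`. -/
def DimLEOne {R : Type u} [CommRing R] (a : Ideal R) : Prop :=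
  ∀ p q : Ideal R, p.IsPrime → q.IsPrime → a ≤ p → p < q → q.IsMaximal

lemma IsPowTorsion.isArtinian_of_dimLEOne {a : Ideal R} (ha : DimLEOne a) (hX : IsPowTorsion a X)
    (hlocal : ∀ p ∈ a.minimalPrimes, ∀ x : X, ∃ t ∉ p, t • x = 0)
    [Module.Finite R (torsionBySet R X (a : Set R))] : IsArtinian R X := by
  let T := torsionBySet R X (a : Set R)
  have haT : a ≤ Module.annihilator R T := fun r hr =>
    Module.mem_annihilator.2 fun x => Subtype.ext (mem_torsionByIdeal.1 x.2 r hr)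
  suffices IsArtinian R T from hX.isArtinian (IsNoetherian.noetherian a)
  refine isArtinian_of_forall_isMaximal (J := Module.annihilator R T) le_rfl fun q hq hTq => ?_
  obtain ⟨p, hp, hpq⟩ := Ideal.exists_minimalPrimes_le (haT.trans hTq)
  have := hp.1.1
  obtain ⟨t, htp, hT⟩ := exists_mem_annihilator_of_fg p.primeCompl
    (Module.Finite.iff_fg.1 ‹Module.Finite R T›) fun n _ => hlocal p hp n
  exact ha p q this hq hp.1.2 (SetLike.lt_iff_le_and_exists.2 ⟨hpq, t, hTq hT, htp⟩)

theorem IsPowTorsion.finite_ext_of_dimLEOne {a : Ideal R} (ha : DimLEOne a)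
    (hX : IsPowTorsion a X) (h₀ : Module.Finite R (ModExt R (R ⧸ a) X 0))
    (h₁ : Module.Finite R (ModExt R (R ⧸ a) X 1)) (i : ℕ) :
    Module.Finite R (ModExt R (R ⧸ a) X i) := by
  refine prop_ext_of_hasSecondaryBound (ModuleCat.isFG R) a
    (Ideal.finite_minimalPrimes_of_isNoetherianRing R a) (fun p hp => hp.1.1) ?_ ?_ hX h₀ h₁ i
  · intro Y _ _ hY hlocal hfin
    have : Module.Finite R (torsionBySet R Y (a : Set R)) := hfin
    have := hY.isArtinian_of_dimLEOne ha hlocal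
    exact finite_ext_of_isArtinian a
  · intro Y _ _ hY hfin p hp
    have := hp.1.1
    have : Module.Finite R (torsionBySet R Y (a : Set R)) := hfin
    exact hY.hasSecondaryBound hp

end DimOne

/-! ### Generic finiteness -/

section Generic

variable {R : Type u} [CommRing R]
variable {X : Type u} [AddCommGroup X] [Module R X]

open Submodule (torsionBySet)

/-- The class of modules all of whose elements are killed by a power of `x`. -/
def isElementTorsion (x : R) : ObjectProperty (ModuleCat.{u} R) :=
  fun X => ∀ m : X, ∃ n : ℕ, x ^ n • m = 0

instance isElementTorsion_isSerreClass (x : R) : (isElementTorsion x).IsSerreClass := by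
  refine isSerreClass_of_exact _ (fun A _ _ _ m => ⟨0, Subsingleton.elim _ _⟩) ?_
  intro A B C _ _ _ _ _ _ f g h hA hC b
  obtain ⟨n, hn⟩ := hC (g b)
  rw [← map_smul] at hn
  obtain ⟨c, hc⟩ := (h _).1 hn
  obtain ⟨m, hm⟩ := hA c
  exact ⟨m + n, by rw [pow_add, mul_smul, ← hc, ← map_smul, hm, map_zero]⟩

/-- The class of modules that are finitely generated up to `s`-torsion for some `s ∈ M`, that is,
that become finitely generated after inverting `s`. -/
def isGenericallyFG (M : Submonoid R) : ObjectProperty (ModuleCat.{u} R) :=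
  fun X => ∃ F : Submodule R X, F.FG ∧ ∃ s ∈ M, ∀ m : X, ∃ n : ℕ, s ^ n • m ∈ F

instance isGenericallyFG_isSerreClass [IsNoetherianRing R] (M : Submonoid R) :
    (isGenericallyFG M).IsSerreClass := by
  refine isSerreClass_of_exact _
    (fun A _ _ _ => ⟨⊥, Submodule.fg_bot, 1, M.one_mem, fun m => ⟨0, Subsingleton.elim _ _⟩⟩) ?_
  rintro A B C _ _ _ _ _ _ f g h ⟨F, hF, s, hs, hFs⟩ ⟨G, hG, t, ht, hGt⟩
  obtain ⟨L, hL, hLmap⟩ := exists_fg_map_eq g (Submodule.FG.of_le hG inf_le_left)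
    (inf_le_right : G ⊓ LinearMap.range g ≤ _)
  refine ⟨F.map f ⊔ L, (hF.map f).sup hL, s * t, M.mul_mem hs ht, fun b => ?_⟩
  obtain ⟨n, hn⟩ := hGt (g b)
  obtain ⟨l, hl, hgl⟩ : t ^ n • g b ∈ L.map g := by
    rw [hLmap]
    exact ⟨hn, t ^ n • b, map_smul g _ b⟩
  obtain ⟨c, hc⟩ := (h (t ^ n • b - l)).1 (by rw [map_sub, map_smul, hgl, sub_self])
  obtain ⟨m, hm⟩ := hFs c
  have hmem : s ^ m • t ^ n • b ∈ F.map f ⊔ L := by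
    have heq : s ^ m • t ^ n • b = f (s ^ m • c) + s ^ m • l := by
      rw [map_smul, hc, smul_sub, sub_add_cancel]
    rw [heq]
    exact Submodule.add_mem_sup ⟨_, hm, rfl⟩ (L.smul_mem _ hl)
  have hpow : (s * t) ^ (m + n) • b = (s ^ n * t ^ m) • s ^ m • t ^ n • b := by
    simp only [← mul_smul]
    ring_nf
  exact ⟨m + n, hpow ▸ Submodule.smul_mem _ _ hmem⟩

lemma isGenericallyFG_of_finite (M : Submonoid R) (h : Module.Finite R X) :
    isGenericallyFG M (.of R X) :=
  ⟨⊤, h.1, 1, M.one_mem, fun _ => ⟨0, Submodule.mem_top⟩⟩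

lemma isGenericallyFG_of_isElementTorsion {M : Submonoid R} {s : R} (hs : s ∈ M)
    (h : isElementTorsion s (.of R X)) : isGenericallyFG M (.of R X) :=
  ⟨⊥, Submodule.fg_bot, s, hs, h⟩

lemma finite_localizedModule_of_isGenericallyFG {M N : Submonoid R} (hMN : M ≤ N)
    (h : isGenericallyFG M (.of R X)) :
    Module.Finite (Localization N) (LocalizedModule N X) := by
  obtain ⟨F, hF, s, hs, hFs⟩ := h
  have : Module.Finite R F := Module.Finite.iff_fg.2 hF
  have : Module.Finite (Localization N) (LocalizedModule N F) := inferInstance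
  refine Module.Finite.of_surjective (LocalizedModule.map N F.subtype) fun w => ?_
  induction w using LocalizedModule.induction_on with
  | h x t =>
  obtain ⟨n, hn⟩ := hFs x
  let c : N := ⟨s ^ n, N.pow_mem (hMN hs) n⟩
  refine ⟨LocalizedModule.mk ⟨s ^ n • x, hn⟩ (c * t), ?_⟩
  rw [LocalizedModule.map_mk]
  exact LocalizedModule.mk_cancel_common_left c t x

/-- The multiplicative set of elements outside all minimal primes of `a`. Inverting it
semilocalizes `R` at the generic points of `V(a)`. -/
def avoidingMinimalPrimes (a : Ideal R) : Submonoid R where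
  carrier := {s | ∀ p ∈ a.minimalPrimes, s ∉ p}
  one_mem' _ hp := (Ideal.ne_top_iff_one _).1 hp.1.1.ne_top
  mul_mem' hs ht p hp := hp.1.1.mul_notMem (hs p hp) (ht p hp)

variable [IsNoetherianRing R]

lemma exists_mem_avoidingMinimalPrimes_annihilator {a : Ideal R} {N : Submodule R X} (hN : N.FG)
    (h : ∀ p ∈ a.minimalPrimes, ∀ n ∈ N, ∃ t ∉ p, t • n = 0) :
    ∃ t ∈ avoidingMinimalPrimes a, t ∈ N.annihilator := by
  obtain ⟨t, htN, ht⟩ := exists_mem_forall_notMem (a := N.annihilator)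
    (Ideal.finite_minimalPrimes_of_isNoetherianRing R a) fun p hp => ⟨hp.1.1, fun hle => by
      have := hp.1.1
      obtain ⟨t, htp, htN⟩ := exists_mem_annihilator_of_fg p.primeCompl hN (h p hp)
      exact htp (hle htN)⟩
  exact ⟨t, ht, htN⟩

lemma IsPowTorsion.isElementTorsion_of_torsionBySet {a : Ideal R} (hX : IsPowTorsion a X) {s : R}
    (h : isElementTorsion s (.of R (torsionBySet R X (a : Set R)))) :
    isElementTorsion s (.of R X) := fun x => by
  obtain ⟨k, hk⟩ := hX x
  obtain ⟨n, hn⟩ := prop_torsionByIdeal_pow (isElementTorsion s) a h k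
    ⟨x, mem_torsionByIdeal.2 hk⟩
  exact ⟨n, congrArg Subtype.val hn⟩

lemma IsPowTorsion.isGenericallyFG_of_torsionBySet {a : Ideal R} (hX : IsPowTorsion a X)
    (hlocal : ∀ p ∈ a.minimalPrimes, ∀ x : X, ∃ t ∉ p, t • x = 0)
    (h : isGenericallyFG (avoidingMinimalPrimes a) (.of R (torsionBySet R X (a : Set R)))) :
    isGenericallyFG (avoidingMinimalPrimes a) (.of R X) := by
  obtain ⟨F, hF, s, hs, hFs⟩ := h
  obtain ⟨t, ht, htF⟩ := exists_mem_avoidingMinimalPrimes_annihilator hF fun p hp n _ => by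
    obtain ⟨t, htp, htn⟩ := hlocal p hp n
    exact ⟨t, htp, Subtype.ext htn⟩
  refine isGenericallyFG_of_isElementTorsion (Submonoid.mul_mem _ hs ht)
    (hX.isElementTorsion_of_torsionBySet fun m => ?_)
  obtain ⟨n, hn⟩ := hFs m
  have hpow : (s * t) ^ (n + 1) • m = (s * t ^ n) • t • s ^ n • m := by
    simp only [← mul_smul]
    ring_nf
  exact ⟨n + 1, by rw [hpow, Submodule.mem_annihilator.1 htF _ hn, smul_zero]⟩

theorem IsPowTorsion.isGenericallyFG_ext {a : Ideal R} (hX : IsPowTorsion a X)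
    (h₀ : Module.Finite R (ModExt R (R ⧸ a) X 0)) (h₁ : Module.Finite R (ModExt R (R ⧸ a) X 1))
    (i : ℕ) : isGenericallyFG (avoidingMinimalPrimes a)
      (.of R (ModExt R (R ⧸ a) X i)) := by
  let S : ObjectProperty (ModuleCat.{u} R) := isGenericallyFG (avoidingMinimalPrimes a)
  refine prop_ext_of_hasSecondaryBound S a (Ideal.finite_minimalPrimes_of_isNoetherianRing R a)
    (fun p hp => hp.1.1) ?_ ?_ hX (isGenericallyFG_of_finite _ h₀)
    (isGenericallyFG_of_finite _ h₁) i
  · exact fun Y _ _ hY hlocal h i =>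
      prop_ext_of_prop S (hY.isGenericallyFG_of_torsionBySet hlocal h) i _
  · intro Y _ _ hY h p hp
    have := hp.1.1
    have hle : avoidingMinimalPrimes a ≤ p.primeCompl := fun s hs => hs p hp
    have := finite_localizedModule_of_isGenericallyFG hle h
    exact hY.hasSecondaryBound hp

end Generic

section PrincipalEnlargement

variable {R : Type u} [CommRing R]
variable {N X V : Type u} [AddCommGroup N] [Module R N] [AddCommGroup X] [Module R X]
  [AddCommGroup V] [Module R V]

open Submodule (torsionBy)
open scoped Pointwise

lemma IsPowTorsion.sup_span_singleton {a : Ideal R} {y : R} (hX : IsPowTorsion a X)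
    (hy : isElementTorsion y (.of R X)) : IsPowTorsion (a ⊔ Ideal.span {y}) X := by
  intro x
  obtain ⟨n, hn⟩ := hX x
  obtain ⟨m, hm⟩ := hy x
  refine ⟨n + m, fun r hr => ?_⟩
  have hr' := Ideal.sup_pow_add_le_pow_sup_pow hr
  rw [Ideal.span_singleton_pow] at hr'
  obtain ⟨c, hc, d, hd, rfl⟩ := Submodule.mem_sup.1 hr'
  obtain ⟨e, rfl⟩ := Ideal.mem_span_singleton'.1 hd
  rw [add_smul, hn c hc, mul_smul, hm, smul_zero, add_zero]

lemma ModExt.subsingleton_of_bijective_smul {y : R} (hN : y ∈ Module.annihilator R N)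
    (hX : Function.Bijective (y • LinearMap.id : X →ₗ[R] X)) (i : ℕ) :
    Subsingleton (ModExt R N X i) := by
  let e : X ≃ₗ[R] X := LinearEquiv.ofBijective _ hX
  refine subsingleton_of_forall_eq 0 fun x => (ModExt.congrRight N e i).injective ?_
  have hyx : y • x = 0 := Module.mem_annihilator.1 (ModExt.annihilator_le_left N X i hN) x
  calc ModExt.postcomp N (y • LinearMap.id) i x = y • x := by
        rw [ModExt.postcomp_smul, ModExt.postcomp_id]
    _ = ModExt.congrRight N e i 0 := by rw [hyx, map_zero]

lemma isShortExact_ker_rangeRestrict (f : X →ₗ[R] V) :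
    IsShortExact (LinearMap.ker f).subtype f.rangeRestrict := by
  refine ⟨Submodule.injective_subtype _, ?_, f.surjective_rangeRestrict⟩
  rw [LinearMap.exact_iff, Submodule.range_subtype, LinearMap.ker_rangeRestrict]

section Serre

variable (S : ObjectProperty (ModuleCat.{u} R)) [S.IsSerreClass]

section ExtVanishing

variable (f : X →ₗ[R] V)

lemma subsingleton_ext_zero_range (hV : ∀ i, Subsingleton (ModExt R N V i)) :
    Subsingleton (ModExt R N (LinearMap.range f) 0) :=
  have := hV 0
  (ModExt.postcomp_injective_of_injective N (LinearMap.range f).injective_subtype).subsingleton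

lemma prop_ext_ker_zero_one (hV : ∀ i, Subsingleton (ModExt R N V i))
    (h₀ : S (.of R (ModExt R N X 0))) (h₁ : S (.of R (ModExt R N X 1))) :
    S (.of R (ModExt R N (LinearMap.ker f) 0)) ∧ S (.of R (ModExt R N (LinearMap.ker f) 1)) := by
  have := subsingleton_ext_zero_range f hV
  exact ⟨prop_of_injective S
      (ModExt.postcomp_injective_of_injective N (LinearMap.ker f).injective_subtype) h₀,
    prop_of_exact S ((isShortExact_ker_rangeRestrict f).exact_connecting_postcomp N 0)
      (prop_of_subsingleton S _) h₁⟩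

lemma prop_ext_quotient_range (hV : ∀ i, Subsingleton (ModExt R N V i)) (i : ℕ)
    (hX : S (.of R (ModExt R N X (i + 1))))
    (hker : S (.of R (ModExt R N (LinearMap.ker f) (i + 2)))) :
    S (.of R (ModExt R N (V ⧸ LinearMap.range f) i)) := by
  have := hV i
  have hrange := prop_of_exact S
    ((isShortExact_ker_rangeRestrict f).exact_postcomp_connecting N (i + 1)) hX hker
  exact prop_of_exact S
    ((IsShortExact.subtype_mkQ (LinearMap.range f)).exact_postcomp_connecting N i)
    (prop_of_subsingleton S _) hrange

lemma prop_ext_of_ker_of_quotient_range (hV : ∀ i, Subsingleton (ModExt R N V i))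
    (hker : ∀ i, S (.of R (ModExt R N (LinearMap.ker f) i)))
    (hcoker : ∀ i, S (.of R (ModExt R N (V ⧸ LinearMap.range f) i))) (i : ℕ) :
    S (.of R (ModExt R N X i)) := by
  have hrange : S (.of R (ModExt R N (LinearMap.range f) i)) := by
    cases i with
    | zero =>
      have := subsingleton_ext_zero_range f hV
      exact prop_of_subsingleton S _
    | succ i =>
      have := hV (i + 1)
      exact prop_of_exact S
        ((IsShortExact.subtype_mkQ (LinearMap.range f)).exact_connecting_postcomp N i) (hcoker i)
        (prop_of_subsingleton S _)
  exact prop_of_exact S ((isShortExact_ker_rangeRestrict f).exact_postcomp_postcomp N i) (hker i)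
    hrange

end ExtVanishing

-- Multiplication by `y` on `Ext^i(N, X)` factors through `Ext^i(yN, X)`.
lemma prop_torsionBy_ext_and_prop_quotSMulTop_ext {y : R}
    (hker : ∀ j, S (.of R (ModExt R (torsionBy R N y) X j)))
    (hcoker : ∀ j, S (.of R (ModExt R (QuotSMulTop y N) X j))) (i : ℕ) :
    S (.of R (torsionBy R (ModExt R N X i) y)) ∧
      S (.of R (QuotSMulTop y (ModExt R N X i))) := by
  have hsub := isShortExact_torsionBy y N
  have hquot := isShortExact_quotSMulTop y N
  let ι := ModExt.precomp X (y • ⊤ : Submodule R N).subtype i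
  let q := ModExt.precomp X (smulOntoImage y N) i
  have hcomp : q ∘ₗ ι = y • LinearMap.id := LinearMap.ext fun x => by
    have hfactor : (y • ⊤ : Submodule R N).subtype ∘ₗ smulOntoImage y N = y • LinearMap.id := rfl
    rw [LinearMap.comp_apply, ← ModExt.precomp_comp, hfactor, ModExt.precomp_smul,
      ModExt.precomp_id, LinearMap.smul_apply, LinearMap.id_apply]
  have hker_ι : S (.of R (LinearMap.ker ι)) :=
    prop_ker_of_exact S (hquot.exact_precomp_precomp X i) (hcoker i)
  have hker_q : S (.of R (LinearMap.ker q)) := by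
    cases i with
    | zero =>
      rw [LinearMap.ker_eq_bot.2 (ModExt.precomp_injective_of_surjective X hsub.surjective)]
      exact prop_of_subsingleton S _
    | succ i => exact prop_ker_of_exact S (hsub.exact_coconnecting_precomp X i) (hker i)
  have hcoker_ι := prop_quotient_range_of_exact S (hquot.exact_precomp_coconnecting X i)
    (hcoker (i + 1))
  have hcoker_q := prop_quotient_range_of_exact S (hsub.exact_precomp_precomp X i) (hker i)
  have hker_comp := prop_ker_comp S hker_ι hker_q
  have hcoker_comp := prop_quotient_range_comp S hcoker_ι hcoker_q
  rw [hcomp] at hker_comp hcoker_comp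
  have hrange : LinearMap.range (y • LinearMap.id : ModExt R N X i →ₗ[R] ModExt R N X i) =
    y • ⊤ := LinearMap.range_eq_map _
  rw [hrange] at hcoker_comp
  exact ⟨hker_comp, hcoker_comp⟩

end Serre

section Localization

variable {a : Ideal R} (y : R)

lemma IsPowTorsion.ker_mkLinearMap_powers (hX : IsPowTorsion a X) : IsPowTorsion
    (a ⊔ Ideal.span {y}) (LinearMap.ker (LocalizedModule.mkLinearMap (.powers y) X)) := by
  refine (hX.submodule _).sup_span_singleton fun ⟨x, hx⟩ => ?_
  obtain ⟨⟨_, n, rfl⟩, hn⟩ := (IsLocalizedModule.eq_zero_iff (.powers y) _).1 hx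
  exact ⟨n, Subtype.ext hn⟩

lemma IsPowTorsion.quotient_range_mkLinearMap_powers (hX : IsPowTorsion a X) :
    IsPowTorsion (a ⊔ Ideal.span {y}) (LocalizedModule (.powers y) X ⧸
      LinearMap.range (LocalizedModule.mkLinearMap (.powers y) X)) := by
  refine IsPowTorsion.sup_span_singleton (.quotient (fun v => ?_) _) fun v => ?_
  · induction v using LocalizedModule.induction_on with
    | h x s =>
    obtain ⟨n, hn⟩ := hX x
    exact ⟨n, fun r hr => by rw [LocalizedModule.smul'_mk, hn r hr, LocalizedModule.zero_mk]⟩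
  · obtain ⟨v, rfl⟩ := Submodule.Quotient.mk_surjective _ v
    obtain ⟨⟨x, ⟨_, n, rfl⟩⟩, hn⟩ := IsLocalizedModule.surj (.powers y)
      (LocalizedModule.mkLinearMap (.powers y) X) v
    refine ⟨n, ?_⟩
    rw [← Submodule.Quotient.mk_smul, Submodule.Quotient.mk_eq_zero]
    exact ⟨x, hn.symm⟩

end Localization

lemma subsingleton_ext_localizedModule_powers {y : R} (hN : y ∈ Module.annihilator R N) (i : ℕ) :
    Subsingleton (ModExt R N (LocalizedModule (.powers y) X) i) :=
  ModExt.subsingleton_of_bijective_smul hN ((Module.End.isUnit_iff _).1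
    (IsLocalizedModule.map_units (LocalizedModule.mkLinearMap (.powers y) X)
      ⟨y, Submonoid.mem_powers y⟩)) i

variable [IsNoetherianRing R] {a : Ideal R} {y : R}

theorem IsPowTorsion.finite_ext_sup_span_singleton (hX : IsPowTorsion a X)
    (ha : DimLEOne (a ⊔ Ideal.span {y})) (h : ∀ j ≤ 2, Module.Finite R (ModExt R (R ⧸ a) X j))
    (i : ℕ) : Module.Finite R (ModExt R (R ⧸ (a ⊔ Ideal.span {y})) X i) := by
  set b := a ⊔ Ideal.span {y}
  let S := ModuleCat.isFG.{u} R
  let f := LocalizedModule.mkLinearMap (.powers y) X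
  have hb := le_annihilator_quotient b
  have hV := subsingleton_ext_localizedModule_powers (N := R ⧸ b) (X := X)
    (hb (Ideal.mem_sup_right (Ideal.mem_span_singleton_self y)))
  have hbX (j : ℕ) (hj : j ≤ 2) : S (.of R (ModExt R (R ⧸ b) X j)) :=
    prop_ext_of_le_annihilator S a j (fun k hk => h k (hk.trans hj)) _ (le_sup_left.trans hb)
  obtain ⟨hker₀, hker₁⟩ := prop_ext_ker_zero_one S f hV (hbX 0 zero_le_two) (hbX 1 one_le_two)
  have hker : ∀ j, S (.of R (ModExt R (R ⧸ b) (LinearMap.ker f) j)) :=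
    (hX.ker_mkLinearMap_powers y).finite_ext_of_dimLEOne ha hker₀ hker₁
  refine prop_ext_of_ker_of_quotient_range S f hV hker
    ((hX.quotient_range_mkLinearMap_powers y).finite_ext_of_dimLEOne ha ?_ ?_) i
  · exact prop_ext_quotient_range S f hV 0 (hbX 1 one_le_two) (hker 2)
  · exact prop_ext_quotient_range S f hV 1 (hbX 2 le_rfl) (hker 3)

theorem IsPowTorsion.finite_torsionBy_ext_and_finite_quotSMulTop_ext (hX : IsPowTorsion a X)
    (ha : DimLEOne (a ⊔ Ideal.span {y})) (h : ∀ j ≤ 2, Module.Finite R (ModExt R (R ⧸ a) X j))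
    (i : ℕ) : Module.Finite R (torsionBy R (ModExt R (R ⧸ a) X i) y) ∧
      Module.Finite R (QuotSMulTop y (ModExt R (R ⧸ a) X i)) := by
  let S := ModuleCat.isFG.{u} R
  have hfin (j : ℕ) (N : Type u) [AddCommGroup N] [Module R N] [Module.Finite R N]
      (haN : a ≤ Module.annihilator R N) (hyN : y ∈ Module.annihilator R N) :
      S (.of R (ModExt R N X j)) :=
    prop_ext_of_le_annihilator S (a ⊔ Ideal.span {y}) j
      (fun j _ => hX.finite_ext_sup_span_singleton ha h j) N
      (sup_le haN ((Ideal.span_singleton_le_iff_mem _).2 hyN))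
  have hQ := le_annihilator_quotient a
  refine prop_torsionBy_ext_and_prop_quotSMulTop_ext S (fun j => ?_) (fun j => ?_) i
  · exact hfin j _ (le_annihilator_submodule hQ _)
      (Module.mem_annihilator.2 (Submodule.smul_torsionBy y))
  · refine hfin j _
      (hQ.trans (LinearMap.annihilator_le_of_surjective _ (Submodule.mkQ_surjective _)))
      (Module.mem_annihilator.2 fun m => ?_)
    obtain ⟨m, rfl⟩ := Submodule.Quotient.mk_surjective _ m
    exact (Submodule.Quotient.mk_eq_zero _).2
      (Submodule.smul_mem_pointwise_smul m y ⊤ Submodule.mem_top)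

end PrincipalEnlargement

/-! ### Flat base change -/

section FlatBaseChange

open TensorProduct

section CokernelEquiv

variable {R : Type*} [Ring R] {A B C A' B' C' : Type*} [AddCommGroup A] [Module R A]
  [AddCommGroup B] [Module R B] [AddCommGroup C] [Module R C] [AddCommGroup A'] [Module R A']
  [AddCommGroup B'] [Module R B'] [AddCommGroup C'] [Module R C']

/-- The isomorphism of cokernels induced by an isomorphism of presentations. -/
noncomputable def cokernelEquiv {f : A →ₗ[R] B} {g : B →ₗ[R] C} {f' : A' →ₗ[R] B'}
    {g' : B' →ₗ[R] C'} (h : Function.Exact f g) (hg : Function.Surjective g)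
    (h' : Function.Exact f' g') (hg' : Function.Surjective g') (eA : A ≃ₗ[R] A')
    (eB : B ≃ₗ[R] B') (hcomm : eB.toLinearMap ∘ₗ f = f' ∘ₗ eA.toLinearMap) : C ≃ₗ[R] C' :=
  (h.linearEquivOfSurjective hg).symm ≪≫ₗ
    Submodule.Quotient.equiv _ _ eB (by
      rw [← LinearMap.range_comp]
      exact (congrArg LinearMap.range hcomm).trans
        (LinearMap.range_comp_of_range_eq_top _ eA.range))
    ≪≫ₗ h'.linearEquivOfSurjective hg'

end CokernelEquiv

variable {R : Type u} [CommRing R]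
variable {A B C X : Type u} [AddCommGroup A] [Module R A] [AddCommGroup B] [Module R B]
  [AddCommGroup C] [Module R C] [AddCommGroup X] [Module R X]

namespace IsShortExact

variable {f : A →ₗ[R] B} {g : B →ₗ[R] C}

lemma baseChange (h : IsShortExact f g) (S : Type u) [CommRing S] [Algebra R S]
    [Module.Flat R S] : IsShortExact (f.baseChange S) (g.baseChange S) where
  injective := Module.Flat.lTensor_preserves_injective_linearMap f h.injective
  exact := lTensor_exact S h.exact h.surjective
  surjective := LinearMap.lTensor_surjective S h.surjective

variable (h : IsShortExact f g) (X : Type u) [AddCommGroup X] [Module R X]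

/-- The connecting map `Hom(A, X) → Ext^1(C, X)`. -/
noncomputable def homCoconnecting : (A →ₗ[R] X) →ₗ[R] ModExt R C X 1 :=
  h.coconnecting X 0 ∘ₗ (ModExt.zeroEquivHom A X).symm.toLinearMap

lemma exact_lcomp_homCoconnecting : Function.Exact (f.lcomp R X) (h.homCoconnecting X) := by
  intro z
  refine (h.exact_precomp_coconnecting X 0 ((ModExt.zeroEquivHom A X).symm z)).trans ⟨?_, ?_⟩
  · rintro ⟨w, hw⟩
    refine ⟨ModExt.zeroEquivHom B X w, ?_⟩
    rw [LinearMap.lcomp_apply', ← ModExt.zeroEquivHom_precomp, hw, LinearEquiv.apply_symm_apply]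
  · rintro ⟨w, rfl⟩
    exact ⟨(ModExt.zeroEquivHom B X).symm w, ModExt.precomp_zeroEquivHom_symm f w⟩

variable [Module.Projective R B]

lemma homCoconnecting_surjective : Function.Surjective (h.homCoconnecting X) := fun z => by
  have := ModExt.subsingleton_of_projective (R := R) B X 0
  obtain ⟨w, hw⟩ := (h.exact_coconnecting_precomp X 0 z).1 (Subsingleton.elim _ _)
  exact ⟨ModExt.zeroEquivHom A X w, by
    rw [homCoconnecting, LinearMap.comp_apply, LinearEquiv.coe_coe, LinearEquiv.symm_apply_apply,
      hw]⟩

lemma coconnecting_bijective (i : ℕ) : Function.Bijective (h.coconnecting X (i + 1)) := by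
  have := ModExt.subsingleton_of_projective (R := R) B X
  refine ⟨(injective_iff_map_eq_zero _).2 fun z hz => ?_, fun z =>
    (h.exact_coconnecting_precomp X (i + 1) z).1 (Subsingleton.elim _ _)⟩
  obtain ⟨w, rfl⟩ := (h.exact_precomp_coconnecting X (i + 1) z).1 hz
  rw [Subsingleton.elim w 0, map_zero]

end IsShortExact

lemma IsPowTorsion.baseChange {a : Ideal R} (hX : IsPowTorsion a X) (S : Type u) [CommRing S]
    [Algebra R S] : IsPowTorsion (a.map (algebraMap R S)) (S ⊗[R] X) := by
  intro z
  induction z using TensorProduct.induction_on with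
  | zero => exact ⟨0, fun r _ => smul_zero r⟩
  | add x y hx hy =>
    obtain ⟨n, hn⟩ := hx
    obtain ⟨m, hm⟩ := hy
    refine ⟨n + m, fun r hr => ?_⟩
    rw [smul_add, hn r (Ideal.pow_le_pow_right (Nat.le_add_right n m) hr),
      hm r (Ideal.pow_le_pow_right (Nat.le_add_left m n) hr), add_zero]
  | tmul s x =>
    obtain ⟨n, hn⟩ := hX x
    have hle : (a ^ n).map (algebraMap R S) ≤ Ideal.torsionOf S (S ⊗[R] X) (s ⊗ₜ x) := by
      refine Ideal.map_le_iff_le_comap.2 fun r hr => (Ideal.mem_torsionOf_iff _ _).2 ?_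
      rw [algebraMap_smul, ← TensorProduct.tmul_smul, hn r hr, TensorProduct.tmul_zero]
    exact ⟨n, fun r hr => (Ideal.mem_torsionOf_iff _ _).1 (hle (by rwa [Ideal.map_pow]))⟩

variable [IsNoetherianRing R] (S : Type u) [CommRing S] [Algebra R S]

variable [Module.Flat R S]

/-- The isomorphism `S ⊗ Hom_R(A, X) ≃ Hom_S(S ⊗ A, S ⊗ X)` for flat `S` and finite `A`. -/
noncomputable def homBaseChangeEquiv (A X : Type u) [AddCommGroup A] [Module R A]
    [Module.Finite R A] [AddCommGroup X] [Module R X] :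
    S ⊗[R] (A →ₗ[R] X) ≃ₗ[S] (S ⊗[R] A →ₗ[S] S ⊗[R] X) :=
  have := Module.finitePresentation_of_finite R A
  (Module.FinitePresentation.isBaseChange_map R A X S).equiv

lemma homBaseChangeEquiv_tmul [Module.Finite R A] (s : S) (φ : A →ₗ[R] X) :
    homBaseChangeEquiv S A X (s ⊗ₜ φ) = s • φ.baseChange S :=
  IsBaseChange.equiv_tmul _ _ _

lemma homBaseChangeEquiv_comp_baseChange_lcomp [Module.Finite R A] [Module.Finite R B]
    (f : A →ₗ[R] B) :
    (homBaseChangeEquiv S A X).toLinearMap ∘ₗ (f.lcomp R X).baseChange S =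
      (f.baseChange S).lcomp S (S ⊗[R] X) ∘ₗ (homBaseChangeEquiv S B X).toLinearMap := by
  ext φ : 3
  simp only [LinearMap.comp_apply, AlgebraTensorModule.curry_apply, curry_apply,
    LinearMap.restrictScalars_apply, LinearEquiv.coe_coe, LinearMap.baseChange_tmul,
    homBaseChangeEquiv_tmul, one_smul, LinearMap.lcomp_apply']
  exact LinearMap.baseChange_comp (g := φ) (f := f)

theorem nonempty_ext_baseChange_linearEquiv (X : Type u) [AddCommGroup X] [Module R X] (i : ℕ)
    (N : Type u) [AddCommGroup N] [Module R N] [Module.Finite R N] :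
    Nonempty (S ⊗[R] ModExt R N X i ≃ₗ[S] ModExt S (S ⊗[R] N) (S ⊗[R] X) i) := by
  induction i generalizing N with
  | zero =>
    exact ⟨(ModExt.zeroEquivHom N X).baseChange R S ≪≫ₗ homBaseChangeEquiv S N X ≪≫ₗ
      (ModExt.zeroEquivHom _ _).symm⟩
  | succ i ih =>
    obtain ⟨n, g, hg⟩ := Module.Finite.exists_fin' R N
    have h := IsShortExact.subtype_ker g hg
    have hS := h.baseChange S
    cases i with
    | zero =>
      exact ⟨cokernelEquiv (f := ((LinearMap.ker g).subtype.lcomp R X).baseChange S)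
        (g := (h.homCoconnecting X).baseChange S)
        (lTensor_exact S (h.exact_lcomp_homCoconnecting X) (h.homCoconnecting_surjective X))
        (LinearMap.lTensor_surjective S (h.homCoconnecting_surjective X))
        (hS.exact_lcomp_homCoconnecting _) (hS.homCoconnecting_surjective _)
        (homBaseChangeEquiv S _ X) (homBaseChangeEquiv S _ X)
        (homBaseChangeEquiv_comp_baseChange_lcomp S (LinearMap.ker g).subtype)⟩
    | succ i =>
      obtain ⟨e⟩ := ih (LinearMap.ker g)
      exact ⟨(LinearEquiv.ofBijective _ (h.coconnecting_bijective X i)).symm.baseChange R S ≪≫ₗ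
        e ≪≫ₗ LinearEquiv.ofBijective _ (hS.coconnecting_bijective (S ⊗[R] X) i)⟩

theorem nonempty_ext_quotient_baseChange_linearEquiv (a : Ideal R) (X : Type u) [AddCommGroup X]
    [Module R X] (i : ℕ) :
    Nonempty (S ⊗[R] ModExt R (R ⧸ a) X i ≃ₗ[S]
      ModExt S (S ⧸ a.map (algebraMap R S)) (S ⊗[R] X) i) := by
  obtain ⟨e⟩ := nonempty_ext_baseChange_linearEquiv (R := R) S X i (R ⧸ a)
  exact ⟨e ≪≫ₗ ModExt.congrLeft _ (Ideal.qoutMapEquivTensorQout S) i⟩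

end FlatBaseChange

/-! ### Dimension at most two -/

section DimTwo

variable {R : Type u} [CommRing R]
variable {X : Type u} [AddCommGroup X] [Module R X]

open Submodule (torsionBy)
open scoped Pointwise TensorProduct

/-- The condition `dim R/a ≤ 2`, phrased through chains of primes. -/
def DimLETwo {R : Type u} [CommRing R] (a : Ideal R) : Prop :=
  ∀ p q r : Ideal R, p.IsPrime → q.IsPrime → r.IsPrime → a ≤ p → p < q → q < r → r.IsMaximal

lemma dimLETwo_of_ringKrullDim_le {a : Ideal R} (h : ringKrullDim (R ⧸ a) ≤ 2) : DimLETwo a := by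
  intro p q r hp hq hr hap hpq hqr
  by_contra hmax
  obtain ⟨m, hm, hrm⟩ := Ideal.exists_le_maximal r hr.ne_top
  have hlt : r < m := lt_of_le_of_ne hrm (by rintro rfl; exact hmax hm)
  let P : PrimeSpectrum.zeroLocus (a : Set R) := ⟨⟨p, hp⟩, hap⟩
  let Q : PrimeSpectrum.zeroLocus (a : Set R) := ⟨⟨q, hq⟩, hap.trans hpq.le⟩
  let N : PrimeSpectrum.zeroLocus (a : Set R) := ⟨⟨r, hr⟩, hap.trans (hpq.trans hqr).le⟩
  let T : PrimeSpectrum.zeroLocus (a : Set R) :=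
    ⟨⟨m, hm.isPrime⟩, hap.trans ((hpq.trans hqr).trans hlt).le⟩
  have hPQ : P < Q := hpq
  have hQN : Q < N := hqr
  have hNT : N < T := hlt
  let chain : LTSeries (PrimeSpectrum.zeroLocus (a : Set R)) :=
    { length := 3
      toFun := ![P, Q, N, T]
      step := fun i => by fin_cases i <;> assumption }
  have hlength : ((3 : ℕ) : WithBot ℕ∞) ≤ 2 := (Order.LTSeries.length_le_krullDim chain).trans
    ((ringKrullDim_quotient a).symm.trans_le h)
  exact absurd hlength (by decide)

lemma DimLETwo.dimLEOne_sup {a : Ideal R} (ha : DimLETwo a) {y : R}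
    (hy : ∀ p ∈ a.minimalPrimes, y ∈ p → DimLEOne p) : DimLEOne (a ⊔ Ideal.span {y}) := by
  intro p q hp hq hap hpq
  obtain ⟨p₀, hp₀, hle⟩ := Ideal.exists_minimalPrimes_le (le_sup_left.trans hap)
  have hyp : y ∈ p := hap (Ideal.mem_sup_right (Ideal.mem_span_singleton_self y))
  by_cases h : y ∈ p₀
  · exact hy p₀ hp₀ h p q hp hq hle hpq
  · exact ha p₀ p q hp₀.1.1 hp hq hp₀.1.2 (hle.lt_of_ne (by rintro rfl; exact h hyp)) hpq

lemma DimLETwo.dimLEOne_map_localization {a : Ideal R} (ha : DimLETwo a) (q : Ideal R)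
    [hq : q.IsPrime] (hqmax : ¬ q.IsMaximal) :
    DimLEOne (a.map (algebraMap R (Localization.AtPrime q))) := by
  intro p r hp hr hap hpr
  let e := IsLocalization.AtPrime.primeSpectrumOrderIso (Localization.AtPrime q) q
  have hlt : e ⟨p, hp⟩ < e ⟨r, hr⟩ := e.lt_iff_lt.2 hpr
  have hrq : (e ⟨r, hr⟩).1 = ⟨q, hq⟩ := by
    by_contra hne
    exact hqmax (ha (e ⟨p, hp⟩).1.asIdeal (e ⟨r, hr⟩).1.asIdeal q (e ⟨p, hp⟩).1.2 (e ⟨r, hr⟩).1.2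
      hq (Ideal.le_comap_of_map_le hap) hlt (lt_of_le_of_ne (e ⟨r, hr⟩).2
        fun h => hne (PrimeSpectrum.ext h)))
  have : r = IsLocalRing.maximalIdeal (Localization.AtPrime q) := by
    rw [← IsLocalization.map_under q.primeCompl (Localization.AtPrime q) r,
      ← Localization.AtPrime.map_eq_maximalIdeal]
    exact congrArg _ (congrArg PrimeSpectrum.asIdeal hrq)
  exact this ▸ inferInstance

variable [IsNoetherianRing R]

lemma exists_prime_mem_lt_lt {p q m : Ideal R} (hp : p.IsPrime) (hq : q.IsPrime) (hm : m.IsPrime)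
    (hpq : p < q) (hqm : q < m) {s : R} (hs : s ∈ m) :
    ∃ q' : Ideal R, q'.IsPrime ∧ s ∈ q' ∧ p < q' ∧ q' < m := by
  obtain ⟨q', hsq', hpq', hqm'⟩ := PrimeSpectrum.exist_mem_one_of_mem_two
    (p₀ := ⟨p, hp⟩) (p₁ := ⟨q, hq⟩) (p₂ := ⟨m, hm⟩) hpq hqm hs
  exact ⟨q'.asIdeal, q'.2, hsq', hpq', hqm'⟩

lemma DimLEOne.dimLETwo_of_mem_jacobson {a : Ideal R} {s : R}
    (h : DimLEOne (a ⊔ Ideal.span {s})) (hs : s ∈ (⊥ : Ideal R).jacobson) : DimLETwo a := by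
  intro p q r hp hq hr hap hpq hqr
  by_contra hmax
  obtain ⟨m, hm, hrm⟩ := Ideal.exists_le_maximal r hr.ne_top
  have hlt : r < m := hrm.lt_of_ne (by rintro rfl; exact hmax hm)
  have hsm : s ∈ m := (Submodule.mem_sInf.1 hs) m ⟨bot_le, hm⟩
  obtain ⟨r', hr', hsr', hqr', hrm'⟩ := exists_prime_mem_lt_lt hq hr hm.isPrime hqr hlt hsm
  obtain ⟨q', hq', hsq', hpq', hqr''⟩ := exists_prime_mem_lt_lt hp hq hr' hpq hqr' hsr'
  have := h q' r' hq' hr' (sup_le (hap.trans hpq'.le)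
    ((Ideal.span_singleton_le_iff_mem _).2 hsq')) hqr''
  exact hrm'.ne (this.eq_of_le hm.ne_top hrm'.le)

lemma DimLETwo.exists_mem_dimLEOne_sup {a A : Ideal R} (ha : DimLETwo a)
    (hA : ∀ p : Ideal R, p.IsPrime → A ≤ p → DimLEOne p) :
    ∃ y ∈ A, DimLEOne (a ⊔ Ideal.span {y}) := by
  obtain ⟨y, hyA, hy⟩ := exists_mem_forall_notMem (a := A)
    ((Ideal.finite_minimalPrimes_of_isNoetherianRing R a).subset
      (Set.sep_subset _ fun p => ¬ DimLEOne p))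
    fun p hp => ⟨hp.1.1.1, fun hle => hp.2 (hA p hp.1.1.1 hle)⟩
  exact ⟨y, hyA, ha.dimLEOne_sup fun p hp hyp => by_contra fun h => hy p ⟨hp, h⟩ hyp⟩

theorem IsPowTorsion.finite_localizedModule_ext {a : Ideal R} (hX : IsPowTorsion a X)
    (ha : DimLETwo a) (h₀ : Module.Finite R (ModExt R (R ⧸ a) X 0))
    (h₁ : Module.Finite R (ModExt R (R ⧸ a) X 1)) (i : ℕ) (q : Ideal R) [hq : q.IsPrime]
    (hqmax : ¬ q.IsMaximal) :
    Module.Finite (Localization.AtPrime q)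
      (LocalizedModule q.primeCompl (ModExt R (R ⧸ a) X i)) := by
  let S := Localization.AtPrime q
  have : IsNoetherianRing S := IsLocalization.isNoetherianRing q.primeCompl S inferInstance
  obtain ⟨e⟩ := nonempty_ext_quotient_baseChange_linearEquiv S a X i
  obtain ⟨e₀⟩ := nonempty_ext_quotient_baseChange_linearEquiv S a X 0
  obtain ⟨e₁⟩ := nonempty_ext_quotient_baseChange_linearEquiv S a X 1
  have := (hX.baseChange S).finite_ext_of_dimLEOne (ha.dimLEOne_map_localization q hqmax)
    (Module.Finite.equiv e₀) (Module.Finite.equiv e₁) i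
  exact Module.Finite.equiv (e.symm ≪≫ₗ (LocalizedModule.equivTensorProduct _ _).symm)

end DimTwo

/-! ### Finiteness over an `s`-adically complete ring -/

section Complete

variable {R : Type u} [CommRing R]
variable {X : Type u} [AddCommGroup X] [Module R X]

open Submodule (torsionBy)
open scoped Pointwise

lemma isHausdorff_span_singleton {s : R}
    (h : ∀ x : X, (∀ n : ℕ, x ∈ s ^ n • (⊤ : Submodule R X)) → x = 0) :
    IsHausdorff (Ideal.span {s}) X where
  haus' x hx := h x fun n => by
    rw [← Submodule.ideal_span_singleton_smul, ← Ideal.span_singleton_pow]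
    exact SModEq.zero.1 (hx n)

lemma isHausdorff_of_injective {I : Ideal R} {Y : Type u} [AddCommGroup Y] [Module R Y]
    [IsHausdorff I Y] {f : X →ₗ[R] Y} (hf : Function.Injective f) : IsHausdorff I X where
  haus' x hx := hf <| by
    rw [map_zero]
    refine IsHausdorff.haus ‹_› _ fun n => ?_
    have := (hx n).map f
    rw [map_zero, Submodule.map_smul''] at this
    exact this.mono (smul_mono_right _ le_top)

lemma isPrecomplete_pi (I : Ideal R) [IsPrecomplete I R] (k : ℕ) :
    IsPrecomplete I (Fin k → R) := by
  refine AdicCompletion.of_surjective_iff.1 fun z => ?_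
  choose v hv using fun j => AdicCompletion.of_surjective_iff.2 ‹IsPrecomplete I R›
    (AdicCompletion.piEquivFin I k z j)
  refine ⟨v, (AdicCompletion.piEquivFin I k).injective (funext fun j => ?_)⟩
  rw [← hv j, AdicCompletion.piEquivFin_apply]
  rfl

lemma finite_of_finite_quotSMulTop (s : R) [IsAdicComplete (Ideal.span {s}) R]
    [IsHausdorff (Ideal.span {s}) X] [Module.Finite R (QuotSMulTop s X)] : Module.Finite R X := by
  obtain ⟨k, f, hf⟩ := Module.Finite.exists_fin' R (QuotSMulTop s X)
  obtain ⟨g, rfl⟩ := Module.projective_lifting_property (s • (⊤ : Submodule R X)).mkQ f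
    (Submodule.mkQ_surjective _)
  have := isPrecomplete_pi (Ideal.span {s}) k
  refine Module.Finite.of_surjective g
    (surjective_of_mkQ_comp_surjective (I := Ideal.span {s}) ?_)
  rwa [Submodule.ideal_span_singleton_smul]

theorem isNoetherianRing_of_isAdicComplete (s : R) [IsAdicComplete (Ideal.span {s}) R]
    [IsNoetherianRing (R ⧸ Ideal.span {s})] : IsNoetherianRing R := by
  have : IsNoetherian R (R ⧸ Ideal.span {s}) := ⟨fun N => by
    have hsurj : Function.Surjective (algebraMap R (R ⧸ Ideal.span {s})) :=
      Ideal.Quotient.mk_surjective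
    obtain ⟨N, rfl⟩ := (Submodule.orderIsoOfAlgebraMapSurjective hsurj).surjective N
    exact (IsNoetherian.noetherian N).restrictScalars_of_surjective hsurj⟩
  refine IsNoetherianRing.of_prime fun P hP => ?_
  by_cases hs : s ∈ P
  · refine Submodule.fg_of_fg_map_of_fg_inf_ker (Ideal.span {s}).mkQ (IsNoetherian.noetherian _) ?_
    rw [Submodule.ker_mkQ, inf_eq_right.2 ((Ideal.span_singleton_le_iff_mem _).2 hs)]
    exact ⟨{s}, by simp⟩
  · let f := (Ideal.span {s}).mkQ ∘ₗ P.subtype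
    have hker : LinearMap.ker f = s • ⊤ := by
      ext ⟨x, hx⟩
      rw [LinearMap.mem_ker, Submodule.mem_smul_pointwise_iff_exists]
      refine Submodule.Quotient.mk_eq_zero _ |>.trans (Ideal.mem_span_singleton.trans ⟨?_, ?_⟩)
      · rintro ⟨c, rfl⟩
        exact ⟨⟨c, (hP.mem_or_mem hx).resolve_left hs⟩, Submodule.mem_top, rfl⟩
      · rintro ⟨⟨c, hc⟩, -, h⟩
        exact ⟨c, (congrArg Subtype.val h).symm⟩
    have : Module.Finite R (LinearMap.range f) := Module.Finite.iff_fg.2 <|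
      IsNoetherian.noetherian _
    have : Module.Finite R (QuotSMulTop s P) :=
      Module.Finite.equiv (f.quotKerEquivRange.symm ≪≫ₗ Submodule.quotEquivOfEq _ _ hker)
    have := isHausdorff_of_injective (I := Ideal.span {s}) P.injective_subtype
    exact Module.Finite.iff_fg.1 (finite_of_finite_quotSMulTop s)

/-- The Tate module `lim T[s ^ n]`, encoded as the sequences `t` with `t n ∈ T[s ^ n]` and
transition maps given by multiplication by `s`. -/
def tateModule (s : R) (T : Type u) [AddCommGroup T] [Module R T] : Submodule R (ℕ → T) where
  carrier := {t | t 0 = 0 ∧ ∀ n, s • t (n + 1) = t n}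
  add_mem' := fun ⟨h₀, h⟩ ⟨h₀', h'⟩ => ⟨by simp [h₀, h₀'], fun n => by simp [h, h']⟩
  zero_mem' := ⟨rfl, fun n => by simp⟩
  smul_mem' := fun c t ⟨h₀, h⟩ => ⟨by simp [h₀], fun n => by
    rw [Pi.smul_apply, Pi.smul_apply, smul_comm, h]⟩

variable (s : R) (T : Type u) [AddCommGroup T] [Module R T]

lemma ker_proj_one_comp_tateModule_subtype :
    LinearMap.ker (LinearMap.proj 1 ∘ₗ (tateModule s T).subtype) = s • ⊤ := by
  ext ⟨t, h₀, h⟩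
  rw [LinearMap.mem_ker, Submodule.mem_smul_pointwise_iff_exists]
  constructor
  · exact fun h₁ => ⟨⟨fun n => t (n + 1), h₁, fun n => h (n + 1)⟩, Submodule.mem_top,
      Subtype.ext (funext h)⟩
  · rintro ⟨⟨t', h₀', h'⟩, -, htt'⟩
    exact (congrFun (congrArg Subtype.val htt') 1).symm.trans ((h' 0).trans h₀')

lemma exists_injective_quotSMulTop_tateModule :
    ∃ f : QuotSMulTop s (tateModule s T) →ₗ[R] torsionBy R T s, Function.Injective f := by
  let ev : tateModule s T →ₗ[R] torsionBy R T s :=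
    (LinearMap.proj 1 ∘ₗ (tateModule s T).subtype).codRestrict _
      fun t => (t.2.2 0).trans t.2.1
  have hker : LinearMap.ker ev = s • ⊤ :=
    (LinearMap.ker_codRestrict _ _ _).trans (ker_proj_one_comp_tateModule_subtype s T)
  exact ⟨(s • ⊤ : Submodule R (tateModule s T)).liftQ ev hker.ge,
    LinearMap.ker_eq_bot.1 (Submodule.ker_liftQ_eq_bot _ _ _ hker.le)⟩

lemma isHausdorff_tateModule : IsHausdorff (Ideal.span {s}) (tateModule s T) := by
  have hpow (t : tateModule s T) (n : ℕ) : s ^ n • t.1 n = 0 := by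
    induction n with
    | zero => rw [t.2.1, smul_zero]
    | succ n ih => rw [pow_succ, mul_smul, t.2.2, ih]
  refine isHausdorff_span_singleton fun t ht => Subtype.ext (funext fun n => ?_)
  obtain ⟨t', -, rfl⟩ := (Submodule.mem_smul_pointwise_iff_exists _ _ _).1 (ht n)
  exact hpow t' n

variable {s T}

lemma annihilator_tateModule_le (htors : isElementTorsion s (.of R T))
    (hdiv : Function.Surjective fun t : T => s • t) :
    Module.annihilator R (tateModule s T) ≤ Module.annihilator R T := by
  refine fun y hy => Module.mem_annihilator.2 fun t => ?_
  obtain ⟨σ, hσ⟩ : ∃ σ : T → T, ∀ t, s • σ t = t := hdiv.hasRightInverse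
  obtain ⟨k, hk⟩ := htors t
  have hiter (n : ℕ) : s ^ n • σ^[n] t = t := by
    induction n with
    | zero => simp
    | succ n ih => rw [Function.iterate_succ_apply', pow_succ, mul_smul, hσ, ih]
  let u : tateModule s T := ⟨fun n => s ^ k • σ^[n] t, hk, fun n => by
    simp only [Function.iterate_succ_apply', smul_comm s, hσ]⟩
  have hu : y • s ^ k • σ^[k] t = 0 :=
    congrFun (congrArg Subtype.val (Module.mem_annihilator.1 hy u)) k
  rwa [hiter] at hu

lemma notMem_support_tateModule [Module.Finite R (tateModule s T)] {q : PrimeSpectrum R}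
    (hs : s ∈ q.asIdeal) (hq : q ∉ Module.support R T) :
    q ∉ Module.support R (tateModule s T) := by
  intro h
  have hquot : q ∈ Module.support R (QuotSMulTop s (tateModule s T)) := by
    rw [Module.support_quotSMulTop]
    exact ⟨h, Set.singleton_subset_iff.2 hs⟩
  obtain ⟨f, hf⟩ := exists_injective_quotSMulTop_tateModule s T
  exact hq (Module.support_subset_of_injective (torsionBy R T s).subtype
    Subtype.val_injective (Module.support_subset_of_injective f hf hquot))

lemma exists_fg_isElementTorsion_smul_surjective [Module.Finite R (QuotSMulTop s X)]
    (hgen : isGenericallyFG (Submonoid.powers s) (.of R X)) :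
    ∃ F : Submodule R X, F.FG ∧ isElementTorsion s (.of R (X ⧸ F)) ∧
      Function.Surjective fun t : X ⧸ F => s • t := by
  obtain ⟨F, hF, _, ⟨k, rfl⟩, hFs⟩ := hgen
  obtain ⟨L, hL, hLmap⟩ := exists_fg_map_eq (s • (⊤ : Submodule R X)).mkQ
    (Module.Finite.fg_top (R := R) (M := QuotSMulTop s X)) (by rw [Submodule.range_mkQ])
  refine ⟨F ⊔ L, hF.sup hL, fun t => ?_, fun t => ?_⟩
  · obtain ⟨x, rfl⟩ := Submodule.mkQ_surjective _ t
    obtain ⟨n, hn⟩ := hFs x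
    rw [← pow_mul] at hn
    exact ⟨k * n, (Submodule.Quotient.mk_eq_zero _).2 (Submodule.mem_sup_left hn)⟩
  · obtain ⟨x, rfl⟩ := Submodule.mkQ_surjective _ t
    have hx : x ∈ s • ⊤ ⊔ L := by
      rw [(Submodule.map_mkQ_eq_top _ _).1 hLmap]
      exact Submodule.mem_top
    obtain ⟨z, hz, l, hl, rfl⟩ := Submodule.mem_sup.1 hx
    obtain ⟨z, -, rfl⟩ := (Submodule.mem_smul_pointwise_iff_exists _ _ _).1 hz
    refine ⟨(F ⊔ L).mkQ z, (Submodule.Quotient.eq _).2 (Submodule.mem_sup_right ?_)⟩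
    simpa using hl

lemma notMem_support_of_smul_surjective (hdiv : Function.Surjective fun t : T => s • t)
    {q : PrimeSpectrum R} (hs : s ∈ q.asIdeal)
    [Module.Finite (Localization.AtPrime q.asIdeal) (LocalizedModule q.asIdeal.primeCompl T)] :
    q ∉ Module.support R T := by
  let S := Localization.AtPrime q.asIdeal
  rw [Module.notMem_support_iff, ← Submodule.subsingleton_iff S, ← subsingleton_iff_bot_eq_top]
  refine (Submodule.eq_bot_of_le_smul_of_le_jacobson_bot (IsLocalRing.maximalIdeal S) ⊤
    Module.Finite.fg_top (fun x _ => ?_) (IsLocalRing.maximalIdeal_le_jacobson _)).symm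
  induction x using LocalizedModule.induction_on with
  | h t c =>
    obtain ⟨t, rfl⟩ := hdiv t
    rw [← LocalizedModule.smul'_mk, ← algebraMap_smul S s]
    exact Submodule.smul_mem_smul
      ((IsLocalization.AtPrime.to_map_mem_maximal_iff S q.asIdeal s).2 hs) Submodule.mem_top

variable [IsNoetherianRing R]

lemma finite_tateModule [IsAdicComplete (Ideal.span {s}) R] [Module.Finite R (torsionBy R T s)] :
    Module.Finite R (tateModule s T) := by
  obtain ⟨f, hf⟩ := exists_injective_quotSMulTop_tateModule s T
  have := Module.Finite.of_injective f hf
  have := isHausdorff_tateModule s T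
  exact finite_of_finite_quotSMulTop s

theorem exists_mem_annihilator_dimLEOne_sup {a : Ideal R} (ha : DimLETwo a)
    [IsAdicComplete (Ideal.span {s}) R] (htors : isElementTorsion s (.of R T))
    (hdiv : Function.Surjective fun t : T => s • t) [Module.Finite R (torsionBy R T s)]
    (hsupp : ∀ q : PrimeSpectrum R, s ∈ q.asIdeal → ¬ q.asIdeal.IsMaximal →
      q ∉ Module.support R T) :
    ∃ y ∈ Module.annihilator R T, DimLEOne (a ⊔ Ideal.span {y}) := by
  have := finite_tateModule (s := s) (T := T)
  obtain ⟨y, hy, hdim⟩ := ha.exists_mem_dimLEOne_sup (A := Module.annihilator R (tateModule s T)) <|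
    fun p _ hAp p₁ q₁ hp₁ hq₁ hpp₁ hlt => by
      by_contra hmax
      obtain ⟨m, hm, hqm⟩ := Ideal.exists_le_maximal q₁ hq₁.ne_top
      have hlt' : q₁ < m := hqm.lt_of_ne (by rintro rfl; exact hmax hm)
      have hsm : s ∈ m := Submodule.mem_sInf.1 (IsAdicComplete.le_jacobson_bot (Ideal.span {s})
        (Ideal.mem_span_singleton_self s)) m ⟨bot_le, hm⟩
      obtain ⟨q, hq, hsq, hpq, hqm⟩ := exists_prime_mem_lt_lt hp₁ hq₁ hm.isPrime hlt hlt' hsm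
      have hqmax : ¬ q.IsMaximal := fun h => hqm.ne (h.eq_of_le hm.ne_top hqm.le)
      refine notMem_support_tateModule (q := ⟨q, hq⟩) hsq (hsupp ⟨q, hq⟩ hsq hqmax) ?_
      exact Module.mem_support_iff_of_finite.2 (hAp.trans (hpp₁.trans hpq.le))
  exact ⟨y, annihilator_tateModule_le htors hdiv hy, hdim⟩

lemma fg_comap_lsmul {F : Submodule R X} (hF : F.FG) (y : R) [Module.Finite R (torsionBy R X y)] :
    (F.comap (LinearMap.lsmul R X y)).FG :=
  Submodule.fg_of_fg_map_of_fg_inf_ker (LinearMap.lsmul R X y)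
    (hF.of_le (Submodule.map_comap_le _ _))
    ((Module.Finite.iff_fg.1 ‹_› : (torsionBy R X y).FG).of_le inf_le_right)

lemma finite_torsionBy_quotient {F : Submodule R X} (hF : F.FG) (y : R)
    [Module.Finite R (torsionBy R X y)] : Module.Finite R (torsionBy R (X ⧸ F) y) := by
  refine Module.Finite.iff_fg.2 (((fg_comap_lsmul hF y).map F.mkQ).of_le fun t ht => ?_)
  obtain ⟨x, rfl⟩ := F.mkQ_surjective t
  exact ⟨x, (Submodule.Quotient.mk_eq_zero F).1 ht, rfl⟩

lemma finite_of_mem_annihilator_quotient {F : Submodule R X} (hF : F.FG) {y : R}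
    [Module.Finite R (torsionBy R X y)] (hy : y ∈ Module.annihilator R (X ⧸ F)) :
    Module.Finite R X := by
  have htop : F.comap (LinearMap.lsmul R X y) = ⊤ := eq_top_iff.2 fun x _ =>
    (Submodule.Quotient.mk_eq_zero F).1 (Module.mem_annihilator.1 hy (F.mkQ x))
  exact ⟨htop ▸ fg_comap_lsmul hF y⟩

theorem finite_of_isGenericallyFG_powers {a : Ideal R} (ha : DimLETwo a)
    [IsAdicComplete (Ideal.span {s}) R] (hs : DimLEOne (a ⊔ Ideal.span {s}))
    (htors : ∀ y, DimLEOne (a ⊔ Ideal.span {y}) → Module.Finite R (torsionBy R X y))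
    [Module.Finite R (QuotSMulTop s X)]
    (hlocal : ∀ (q : Ideal R) [q.IsPrime], ¬ q.IsMaximal →
      Module.Finite (Localization.AtPrime q) (LocalizedModule q.primeCompl X))
    (hgen : isGenericallyFG (Submonoid.powers s) (.of R X)) : Module.Finite R X := by
  obtain ⟨F, hF, hFtors, hdiv⟩ := exists_fg_isElementTorsion_smul_surjective hgen
  have := htors s hs
  have := finite_torsionBy_quotient hF s
  obtain ⟨y, hy, hdim⟩ := exists_mem_annihilator_dimLEOne_sup ha hFtors hdiv fun q hsq hqmax => by
    have := hlocal q.asIdeal hqmax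
    have : Module.Finite (Localization.AtPrime q.asIdeal)
        (LocalizedModule q.asIdeal.primeCompl (X ⧸ F)) :=
      Module.Finite.of_surjective (LocalizedModule.map q.asIdeal.primeCompl F.mkQ)
        (LocalizedModule.map_surjective _ _ F.mkQ_surjective)
    exact notMem_support_of_smul_surjective hdiv hsq
  have := htors y hdim
  exact finite_of_mem_annihilator_quotient hF hy

theorem IsPowTorsion.finite_ext_of_isGenericallyFG_powers {a : Ideal R} (hX : IsPowTorsion a X)
    (ha : DimLETwo a) [IsAdicComplete (Ideal.span {s}) R] (hs : DimLEOne (a ⊔ Ideal.span {s}))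
    (h : ∀ j ≤ 2, Module.Finite R (ModExt R (R ⧸ a) X j)) {i : ℕ}
    (hgen : isGenericallyFG (Submonoid.powers s) (.of R (ModExt R (R ⧸ a) X i))) :
    Module.Finite R (ModExt R (R ⧸ a) X i) := by
  have := (hX.finite_torsionBy_ext_and_finite_quotSMulTop_ext hs h i).2
  exact finite_of_isGenericallyFG_powers ha hs
    (fun y hy => (hX.finite_torsionBy_ext_and_finite_quotSMulTop_ext hy h i).1)
    (fun q _ => hX.finite_localizedModule_ext ha (h 0 zero_le_two) (h 1 one_le_two) i q) hgen

end Complete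

/-! ### Completion and descent -/

section Descent

open TensorProduct
open Submodule (torsionBy)
open scoped Pointwise

variable {R : Type u} [CommRing R] {S : Type u} [CommRing S] [Algebra R S]

lemma exists_fg_subsingleton_tensor_quotient (X : Type u) [AddCommGroup X] [Module R X]
    [Module.Finite S (S ⊗[R] X)] :
    ∃ G : Submodule R X, G.FG ∧ Subsingleton (S ⊗[R] (X ⧸ G)) := by
  classical
  have htop : Submodule.span S
      (((⊤ : Submodule R X).map (TensorProduct.mk R S X 1) : Submodule R _) : Set (S ⊗[R] X)) =
        ⊤ := by
    rw [← Submodule.baseChange_eq_span, Submodule.baseChange_top]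
  obtain ⟨t', ht', hspan⟩ := (Submodule.fg_span_iff_fg_span_finset_subset _).1
    (htop ▸ Module.Finite.fg_top)
  obtain ⟨t, -, rfl⟩ := Finset.subset_set_image_iff.1 ht'
  have hG : (Submodule.span R (t : Set X)).baseChange S = ⊤ := by
    rw [Submodule.baseChange_span, ← Finset.coe_image, ← htop, hspan]
  refine ⟨Submodule.span R t, Submodule.fg_span t.finite_toSet, subsingleton_of_forall_eq 0 ?_⟩
  intro w
  obtain ⟨z, rfl⟩ := LinearMap.lTensor_surjective S (Submodule.mkQ_surjective _) w
  exact (lTensor_exact S (LinearMap.exact_subtype_mkQ _) (Submodule.mkQ_surjective _) z).2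
    (hG.ge Submodule.mem_top)

lemma subsingleton_quotSMulTop_of_tensor {s : R} (φ : S →ₐ[R] R ⧸ Ideal.span {s}) (X : Type u)
    [AddCommGroup X] [Module R X] [Subsingleton (S ⊗[R] X)] : Subsingleton (QuotSMulTop s X) := by
  have hφ : Function.Surjective φ := fun z => by
    obtain ⟨r, rfl⟩ := Ideal.Quotient.mk_surjective z
    exact ⟨algebraMap R S r, φ.commutes r⟩
  have := (LinearMap.rTensor_surjective X (g := φ.toLinearMap) hφ).subsingleton
  exact (QuotSMulTop.equivQuotTensor s X).subsingleton

lemma isElementTorsion_iff_isPowTorsion {s : R} {X : Type u} [AddCommGroup X] [Module R X] :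
    isElementTorsion s (.of R X) ↔ IsPowTorsion (Ideal.span {s}) X := by
  refine forall_congr' fun x => exists_congr fun n => ?_
  simp only [Ideal.span_singleton_pow, Ideal.mem_span_singleton', forall_exists_index,
    forall_apply_eq_imp_iff, mul_smul]
  exact ⟨fun h c => by rw [h, smul_zero], fun h => by simpa using h 1⟩

lemma isElementTorsion_baseChange {s : R} {X : Type u} [AddCommGroup X] [Module R X]
    (h : isElementTorsion s (.of R X)) :
    isElementTorsion (algebraMap R S s) (.of S (S ⊗[R] X)) := by
  rw [isElementTorsion_iff_isPowTorsion] at h ⊢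
  simpa only [Ideal.map_span, Set.image_singleton] using h.baseChange S

variable [Module.Flat R S]

lemma subsingleton_of_isElementTorsion {s : R} (φ : S →ₐ[R] R ⧸ Ideal.span {s}) {X : Type u}
    [AddCommGroup X] [Module R X] (htors : isElementTorsion s (.of R X))
    [Subsingleton (S ⊗[R] X)] : Subsingleton X := by
  have := (Module.Flat.lTensor_preserves_injective_linearMap (M := S) (torsionBy R X s).subtype
    Subtype.val_injective).subsingleton
  have := subsingleton_quotSMulTop_of_tensor φ (torsionBy R X s)
  have hker (x : X) (hx : s • x = 0) : x = 0 := by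
    have hmem : (⟨x, hx⟩ : torsionBy R X s) ∈ s • (⊤ : Submodule R (torsionBy R X s)) :=
      (Submodule.Quotient.mk_eq_zero _).1 (Subsingleton.elim (α := QuotSMulTop s _) _ _)
    obtain ⟨y, -, hy⟩ := (Submodule.mem_smul_pointwise_iff_exists _ _ _).1 hmem
    exact (congrArg Subtype.val hy).symm.trans y.2
  refine subsingleton_of_forall_eq 0 fun x => ?_
  obtain ⟨n, hn⟩ := htors x
  induction n with
  | zero => simpa using hn
  | succ n ih => exact ih (hker _ (by rwa [← mul_smul, ← pow_succ']))

theorem finite_of_finite_tensor {s : R} (φ : S →ₐ[R] R ⧸ Ideal.span {s}) {X : Type u}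
    [AddCommGroup X] [Module R X] (htors : isElementTorsion s (.of R X))
    [Module.Finite S (S ⊗[R] X)] : Module.Finite R X := by
  obtain ⟨G, hG, _⟩ := exists_fg_subsingleton_tensor_quotient (R := R) (S := S) X
  have := subsingleton_of_isElementTorsion φ
    (prop_of_surjective (isElementTorsion s) G.mkQ_surjective htors)
  rwa [Submodule.Quotient.subsingleton_iff.1 this, ← Module.finite_def] at hG

lemma isGenericallyFG_powers_baseChange [IsNoetherianRing S] {s : R} {X : Type u} [AddCommGroup X]
    [Module R X] (h : isGenericallyFG (Submonoid.powers s) (.of R X)) :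
    isGenericallyFG (Submonoid.powers (algebraMap R S s)) (.of S (S ⊗[R] X)) := by
  obtain ⟨F, hF, _, ⟨k, rfl⟩, hFs⟩ := h
  have : Module.Finite R F := Module.Finite.iff_fg.2 hF
  have htors : isElementTorsion s (.of R (X ⧸ F)) := fun t => by
    obtain ⟨x, rfl⟩ := F.mkQ_surjective t
    obtain ⟨n, hn⟩ := hFs x
    rw [← pow_mul] at hn
    exact ⟨k * n, (Submodule.Quotient.mk_eq_zero F).2 hn⟩
  exact prop_of_exact _ ((IsShortExact.subtype_mkQ F).baseChange S).exact
    (isGenericallyFG_of_finite _ inferInstance)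
    (isGenericallyFG_of_isElementTorsion (Submonoid.mem_powers _)
      (isElementTorsion_baseChange htors))

end Descent

section Completion

open TensorProduct

variable {R : Type u} [CommRing R] {S : Type u} [CommRing S]

lemma comap_lt_comap_of_surjective_mk_comp {f : R →+* S} {J : Ideal S}
    (hf : Function.Surjective ((Ideal.Quotient.mk J).comp f)) {p q : Ideal S} (hp : J ≤ p)
    (hpq : p < q) : p.comap f < q.comap f := by
  obtain ⟨hle, x, hxq, hxp⟩ := SetLike.lt_iff_le_and_exists.1 hpq
  obtain ⟨r, hr⟩ := hf (Ideal.Quotient.mk J x)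
  have hrx : f r - x ∈ p := hp ((Ideal.Quotient.eq (I := J)).1 hr)
  refine SetLike.lt_iff_le_and_exists.2 ⟨Ideal.comap_mono hle, r, ?_, fun hrp => hxp ?_⟩
  · simpa using add_mem (hle hrx) hxq
  · simpa using sub_mem (Ideal.mem_comap.1 hrp) hrx

lemma DimLEOne.of_comap {f : R →+* S} {J b : Ideal S}
    (hf : Function.Surjective ((Ideal.Quotient.mk J).comp f)) (hJ : J ≤ b)
    (hb : DimLEOne (b.comap f)) : DimLEOne b := by
  intro p q hp hq hbp hpq
  have hJp := hJ.trans hbp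
  have hmax := hb _ _ (hp.comap f) (hq.comap f) (Ideal.comap_mono hbp)
    (comap_lt_comap_of_surjective_mk_comp hf hJp hpq)
  obtain ⟨m, hm, hqm⟩ := Ideal.exists_le_maximal q hq.ne_top
  rcases hqm.eq_or_lt with rfl | hlt
  · exact hm
  · have hlt' := comap_lt_comap_of_surjective_mk_comp hf (hJp.trans hpq.le) hlt
    exact absurd (hmax.eq_of_le (hm.isPrime.comap f).ne_top hlt'.le) hlt'.ne

lemma mk_comp_algebraMap_adicCompletion_surjective {I : Ideal R} (hI : I.FG) :
    Function.Surjective ((Ideal.Quotient.mk (I.map (algebraMap R (AdicCompletion I R)))).comp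
      (algebraMap R (AdicCompletion I R))) := by
  intro z
  obtain ⟨x, rfl⟩ := Ideal.Quotient.mk_surjective z
  obtain ⟨r, hr⟩ := Ideal.Quotient.mk_surjective (AdicCompletion.evalOneₐ I x)
  refine ⟨r, Ideal.Quotient.eq.2 ?_⟩
  rw [← AdicCompletion.ker_evalOneₐ_eq_map I hI, RingHom.mem_ker, map_sub, sub_eq_zero]
  exact hr

variable [IsNoetherianRing R] {X : Type u} [AddCommGroup X] [Module R X] {a : Ideal R} {s : R}

theorem IsPowTorsion.finite_tensor_ext_of_isGenericallyFG_powers (hX : IsPowTorsion a X)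
    (hs : DimLEOne (a ⊔ Ideal.span {s})) (h : ∀ j ≤ 2, Module.Finite R (ModExt R (R ⧸ a) X j))
    {i : ℕ} (hgen : isGenericallyFG (Submonoid.powers s) (.of R (ModExt R (R ⧸ a) X i))) :
    Module.Finite (AdicCompletion (Ideal.span {s}) R)
      (AdicCompletion (Ideal.span {s}) R ⊗[R] ModExt R (R ⧸ a) X i) := by
  let C := AdicCompletion (Ideal.span {s}) R
  have hmap : (Ideal.span {s}).map (algebraMap R C) = Ideal.span {algebraMap R C s} := by
    rw [Ideal.map_span, Set.image_singleton]
  have hfg : (Ideal.span {s}).FG := ⟨{s}, by simp⟩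
  have hsurj := mk_comp_algebraMap_adicCompletion_surjective hfg
  have hcomplete := AdicCompletion.isAdicComplete_self _ hfg
  rw [hmap] at hsurj hcomplete
  have := isNoetherianRing_of_surjective _ _ _ hsurj
  have : IsNoetherianRing C := isNoetherianRing_of_isAdicComplete (algebraMap R C s)
  have hdim : DimLEOne (a.map (algebraMap R C) ⊔ Ideal.span {algebraMap R C s}) := by
    refine DimLEOne.of_comap hsurj le_sup_right fun p q hp hq hle => hs p q hp hq (le_trans ?_ hle)
    exact sup_le (Ideal.le_comap_of_map_le le_sup_left)
      ((Ideal.span_singleton_le_iff_mem _).2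
        (Ideal.mem_sup_right (Ideal.mem_span_singleton_self _)))
  have hdim' : DimLETwo (a.map (algebraMap R C)) := hdim.dimLETwo_of_mem_jacobson
    (IsAdicComplete.le_jacobson_bot _ (Ideal.mem_span_singleton_self _))
  have e (j : ℕ) := nonempty_ext_quotient_baseChange_linearEquiv C a X j
  have := (hX.baseChange C).finite_ext_of_isGenericallyFG_powers hdim' hdim
    (fun j hj => by
      have := h j hj
      exact Module.Finite.equiv (e j).some)
    (prop_of_linearEquiv _ (e i).some (isGenericallyFG_powers_baseChange hgen))
  exact Module.Finite.equiv (e i).some.symm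

theorem IsPowTorsion.finite_ext_of_dimLETwo (hX : IsPowTorsion a X) (ha : DimLETwo a)
    (h : ∀ j ≤ 2, Module.Finite R (ModExt R (R ⧸ a) X j)) (i : ℕ) :
    Module.Finite R (ModExt R (R ⧸ a) X i) := by
  obtain ⟨F, hF, s, hs, hFs⟩ := hX.isGenericallyFG_ext (h 0 zero_le_two) (h 1 one_le_two) i
  have hdim : DimLEOne (a ⊔ Ideal.span {s}) := ha.dimLEOne_sup fun p hp hsp => absurd hsp (hs p hp)
  have hcompletion := hX.finite_tensor_ext_of_isGenericallyFG_powers hdim h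
    ⟨F, hF, s, Submonoid.mem_powers s, hFs⟩
  have : Module.Finite (AdicCompletion (Ideal.span {s}) R)
      (AdicCompletion (Ideal.span {s}) R ⊗[R] (ModExt R (R ⧸ a) X i ⧸ F)) :=
    Module.Finite.of_surjective (F.mkQ.baseChange _)
      (LinearMap.lTensor_surjective _ F.mkQ_surjective)
  have hquot : Module.Finite R (ModExt R (R ⧸ a) X i ⧸ F) :=
    finite_of_finite_tensor (AdicCompletion.evalOneₐ (Ideal.span {s})) fun t => by
      obtain ⟨x, rfl⟩ := F.mkQ_surjective t
      obtain ⟨n, hn⟩ := hFs x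
      exact ⟨n, (Submodule.Quotient.mk_eq_zero F).2 hn⟩
  have : Module.Finite R F := Module.Finite.iff_fg.2 hF
  exact Module.Finite.of_submodule_quotient F

end Completion

/-! ### Comparison of the two `Ext` functors -/

section CocycleClass

variable {R : Type*} [Ring R] (K : ChainComplex (ModuleCat.{u} R)ᵒᵖ ℕ) (n : ℕ)

/-- The cocycles in degree `n` of the cochain complex of modules `K.unop`. -/
def cocycles : Submodule R (K.X n).unop :=
  LinearMap.ker (K.d (n + 1) n).unop.hom

theorem pOpcycles_unop_injective : Function.Injective (K.pOpcycles n).unop.hom :=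
  (ModuleCat.mono_iff_injective _).1 inferInstance

theorem exact_pOpcycles_unop :
    Function.Exact (K.pOpcycles n).unop.hom (K.d (n + 1) n).unop.hom :=
  (ShortComplex.ShortExact.moduleCat_exact_iff_function_exact _).1
    ((ShortComplex.mk (K.d (n + 1) n) (K.pOpcycles n) (K.d_pOpcycles _ _)).exact_of_g_is_cokernel
      (K.opcyclesIsCokernel (n + 1) n (by simp))).unop

theorem exact_homologyι_unop (j : ℕ) (hj : (ComplexShape.down ℕ).next n = j) :
    Function.Exact (K.fromOpcycles n j).unop.hom (K.homologyι n).unop.hom :=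
  (ShortComplex.ShortExact.moduleCat_exact_iff_function_exact _).1
    ((ShortComplex.mk _ _ (K.homologyι_comp_fromOpcycles n j)).exact_of_f_is_kernel
      (K.homologyIsKernel n j hj)).unop

/-- The opcycles of `K`, regarded as a module, are the cocycles of `K.unop`. -/
noncomputable def opcyclesUnopEquivCocycles : (K.opcycles n).unop ≃ₗ[R] cocycles K n :=
  (LinearEquiv.ofInjective _ (pOpcycles_unop_injective K n)).trans
    (LinearEquiv.ofEq _ _ (exact_pOpcycles_unop K n).linearMap_ker_eq.symm)

theorem pOpcycles_unop_opcyclesUnopEquivCocycles_symm (z : cocycles K n) :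
    (K.pOpcycles n).unop.hom ((opcyclesUnopEquivCocycles K n).symm z) = z :=
  congrArg Subtype.val ((opcyclesUnopEquivCocycles K n).apply_symm_apply z)

/-- The map sending a cocycle of `K.unop` to its cohomology class. -/
noncomputable def cocycleClass : cocycles K n →ₗ[R] (K.homology n).unop :=
  (K.homologyι n).unop.hom ∘ₗ (opcyclesUnopEquivCocycles K n).symm.toLinearMap

theorem cocycleClass_surjective : Function.Surjective (cocycleClass K n) :=
  ((ModuleCat.epi_iff_surjective (K.homologyι n).unop).1 inferInstance).comp
    (opcyclesUnopEquivCocycles K n).symm.surjective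

variable {K n}

theorem cocycleClass_eq_zero_iff {j : ℕ} (hj : (ComplexShape.down ℕ).next n = j)
    (z : cocycles K n) :
    cocycleClass K n z = 0 ↔ ∃ g : (K.X j).unop, (K.d n j).unop.hom g = z := by
  have hd (g) : (K.pOpcycles n).unop.hom ((K.fromOpcycles n j).unop.hom g) =
      (K.d n j).unop.hom g :=
    congr(($(K.p_fromOpcycles n j)).unop.hom g)
  refine (exact_homologyι_unop K n j hj _).trans (exists_congr fun g => ?_)
  rw [← (pOpcycles_unop_injective K n).eq_iff, hd]
  exact Eq.congr_right (pOpcycles_unop_opcyclesUnopEquivCocycles_symm K n z)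

theorem homologyMap_cocycleClass {K' : ChainComplex (ModuleCat.{u} R)ᵒᵖ ℕ} (φ : K ⟶ K')
    (z' : cocycles K' n) (z : cocycles K n) (hz : (φ.f n).unop.hom z' = z) :
    (HomologicalComplex.homologyMap φ n).unop.hom (cocycleClass K' n z') = cocycleClass K n z := by
  have hclass := congr(($(HomologicalComplex.homologyι_naturality φ n)).unop.hom
    ((opcyclesUnopEquivCocycles K' n).symm z'))
  have hcocycle := congr(($(HomologicalComplex.p_opcyclesMap φ n)).unop.hom
    ((opcyclesUnopEquivCocycles K' n).symm z'))
  refine hclass.trans (congrArg (K.homologyι n).unop.hom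
    (pOpcycles_unop_injective K n (hcocycle.trans ?_)))
  exact (congrArg (φ.f n).unop.hom (pOpcycles_unop_opcyclesUnopEquivCocycles_symm K' n z')).trans
    (hz.trans (pOpcycles_unop_opcyclesUnopEquivCocycles_symm K n z).symm)

end CocycleClass

section ExtComparison

universe v w

variable {R : Type*} [Ring R] {C : Type*} [Category.{v} C] [Abelian C] [Linear R C]

/-- The complex `Hom(P, Y)`, in the opposite category of modules, whose homology computes the
derived functor `Ext R C n`. -/
noncomputable abbrev homComplex (R : Type*) [Ring R] [Linear R C] {X : C}
    (P : ProjectiveResolution X) (Y : C) :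
    ChainComplex (ModuleCat.{v} R)ᵒᵖ ℕ :=
  (((linearYoneda R C).obj Y).rightOp.mapHomologicalComplex _).obj P.complex

variable {X X' Y : C} {P : ProjectiveResolution X} {P' : ProjectiveResolution X'} {n : ℕ}

/-- The morphism `P.complex.X n ⟶ Y` underlying a cocycle of `Hom(P, Y)`. -/
def cocycleHom (z : cocycles (homComplex R P Y) n) : P.complex.X n ⟶ Y := z.1

theorem d_cocycleHom (z : cocycles (homComplex R P Y) n) :
    P.complex.d (n + 1) n ≫ cocycleHom z = 0 := z.2

/-- The class in the derived functor `Ext R C n` of a cocycle of `Hom(P, Y)`. -/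
noncomputable def cocycleDerivedExtClass (R : Type*) [Ring R] [Linear R C]
    [EnoughProjectives C] {X : C}
    (P : ProjectiveResolution X) (Y : C) (n : ℕ) :
    cocycles (homComplex R P Y) n →ₗ[R] ((Ext R C n).obj (Opposite.op X)).obj Y :=
  (P.isoLeftDerivedObj ((linearYoneda R C).obj Y).rightOp n).unop.toLinearEquiv.toLinearMap ∘ₗ
    cocycleClass (homComplex R P Y) n

theorem cocycleDerivedExtClass_surjective [EnoughProjectives C]
    (P : ProjectiveResolution X) (Y : C) (n : ℕ) :
    Function.Surjective (cocycleDerivedExtClass R P Y n) :=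
  (P.isoLeftDerivedObj ((linearYoneda R C).obj Y).rightOp n).unop.toLinearEquiv.surjective.comp
    (cocycleClass_surjective _ n)

variable [HasExt.{w} C]

/-- The class in `Abelian.Ext` of a cocycle of `Hom(P, Y)`. -/
noncomputable def cocycleExtClass (R : Type*) [Ring R] [Linear R C] {X : C}
    (P : ProjectiveResolution X) (Y : C) (n : ℕ) :
    cocycles (homComplex R P Y) n →ₗ[R] Abelian.Ext X Y n where
  toFun z := P.extMk (cocycleHom z) (n + 1) rfl (d_cocycleHom z)
  map_add' z w := (P.add_extMk _ _ (n + 1) rfl (d_cocycleHom z) (d_cocycleHom w)).symm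
  map_smul' r z := by
    have hsmul : cocycleHom (r • z) = cocycleHom z ≫ (r • 𝟙 Y) := by
      rw [Linear.comp_smul, Category.comp_id]
      rfl
    simp only [RingHom.id_apply, Abelian.Ext.smul_eq_comp_mk₀,
      ProjectiveResolution.extMk_comp_mk₀, hsmul]

theorem cocycleExtClass_surjective (P : ProjectiveResolution X) (Y : C) (n : ℕ) :
    Function.Surjective (cocycleExtClass R P Y n) := fun α => by
  obtain ⟨f, hf, hα⟩ := P.extMk_surjective α (n + 1) rfl
  exact ⟨⟨f, hf⟩, hα⟩

theorem extMk_zero_eq_zero_iff (f : P.complex.X 0 ⟶ Y)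
    (hf : P.complex.d 1 0 ≫ f = 0) :
    P.extMk f 1 rfl hf = 0 ↔ f = 0 := by
  have hd : P.cochainComplex.d (-((0 : ℕ) : ℤ)) 1 = 0 :=
    (CochainComplex.isZero_of_isStrictlyLE P.cochainComplex 0 1).eq_of_tgt _ _
  simp only [← P.extEquivCohomologyClass.apply_eq_iff_eq,
    ProjectiveResolution.extEquivCohomologyClass_extMk,
    ProjectiveResolution.extEquivCohomologyClass_zero,
    CochainComplex.HomComplex.CohomologyClass.mk_eq_zero_iff]
  rw [CochainComplex.HomComplex.Cocycle.toSingleMk_mem_coboundaries_iff _ _ _ _ _ 1 (by simp)]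
  simp only [hd, Limits.zero_comp, exists_const, eq_comm (a := (0 : _ ⟶ Y)),
    Preadditive.IsIso.comp_left_eq_zero]

theorem cocycleExtClass_eq_zero_iff {j : ℕ} (hj : (ComplexShape.down ℕ).next n = j)
    (z : cocycles (homComplex R P Y) n) :
    cocycleExtClass R P Y n z = 0 ↔
      ∃ g : ((homComplex R P Y).X j).unop, ((homComplex R P Y).d n j).unop.hom g = z := by
  change P.extMk (cocycleHom z) (n + 1) rfl (d_cocycleHom z) = 0 ↔
    ∃ g : P.complex.X j ⟶ Y, P.complex.d n j ≫ g = cocycleHom z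
  cases n with
  | zero =>
    rw [extMk_zero_eq_zero_iff, P.complex.shape 0 j (by simp)]
    simp [eq_comm]
  | succ n =>
    obtain rfl : n = j := by simpa using hj
    exact P.extMk_eq_zero_iff _ _ _ _ n rfl

variable [EnoughProjectives C]

theorem ker_cocycleDerivedExtClass (P : ProjectiveResolution X) (Y : C) (n : ℕ) :
    LinearMap.ker (cocycleDerivedExtClass R P Y n) = LinearMap.ker (cocycleExtClass R P Y n) := by
  ext z
  exact (P.isoLeftDerivedObj
    ((linearYoneda R C).obj Y).rightOp n).unop.toLinearEquiv.map_eq_zero_iff.trans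
    ((cocycleClass_eq_zero_iff rfl z).trans (cocycleExtClass_eq_zero_iff rfl z).symm)

theorem exists_cocycle_of_hom (g : X ⟶ X') (P : ProjectiveResolution X)
    (P' : ProjectiveResolution X') (z' : cocycles (homComplex R P' Y) n) :
    ∃ z : cocycles (homComplex R P Y) n,
      ((Ext R C n).map g.op).app Y (cocycleDerivedExtClass R P' Y n z') =
          cocycleDerivedExtClass R P Y n z ∧
        (Abelian.Ext.mk₀ g).comp (cocycleExtClass R P' Y n z') (zero_add n) =
          cocycleExtClass R P Y n z := by
  let φ := ProjectiveResolution.lift g P P'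
  have hφ : φ.f 0 ≫ P'.π.f 0 = P.π.f 0 ≫ g := ProjectiveResolution.lift_commutes_zero g P P'
  let F := ((linearYoneda R C).obj Y).rightOp
  refine ⟨⟨φ.f n ≫ cocycleHom z', ?_⟩, ?_, ?_⟩
  · change P.complex.d (n + 1) n ≫ φ.f n ≫ cocycleHom z' = 0
    rw [← φ.comm_assoc, d_cocycleHom, Limits.comp_zero]
  · have hnat := congr(($(ProjectiveResolution.isoLeftDerivedObj_hom_naturality
      g P P' φ hφ F n)).unop.hom (cocycleClass (homComplex R P' Y) n z'))
    exact hnat.trans (congrArg (P.isoLeftDerivedObj F n).hom.unop.hom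
      (homologyMap_cocycleClass _ z' _ rfl))
  · exact ProjectiveResolution.mk₀_comp_extMk (cocycleHom z') (n + 1) rfl (d_cocycleHom z')
      ⟨φ, by simpa using hφ⟩

/-- The comparison between the derived functor `Ext R C n` and the groups `Abelian.Ext`. -/
noncomputable def extEquiv (R : Type*) [Ring R] [Linear R C] (X Y : C) (n : ℕ) :
    ((Ext R C n).obj (Opposite.op X)).obj Y ≃ₗ[R] Abelian.Ext X Y n :=
  ((cocycleDerivedExtClass R (projectiveResolution X) Y n).quotKerEquivOfSurjective
      (cocycleDerivedExtClass_surjective _ _ _)).symm ≪≫ₗ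
    Submodule.quotEquivOfEq _ _ (ker_cocycleDerivedExtClass _ _ _) ≪≫ₗ
    (cocycleExtClass R (projectiveResolution X) Y n).quotKerEquivOfSurjective
      (cocycleExtClass_surjective _ _ _)

theorem extEquiv_cocycleDerivedExtClass
    (z : cocycles (homComplex R (projectiveResolution X) Y) n) :
    extEquiv R X Y n (cocycleDerivedExtClass R _ Y n z) = cocycleExtClass R _ Y n z := by
  have hz : ((cocycleDerivedExtClass R (projectiveResolution X) Y n).quotKerEquivOfSurjective
      (cocycleDerivedExtClass_surjective _ _ _)).symm (cocycleDerivedExtClass R _ Y n z) =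
        Submodule.Quotient.mk z :=
    (LinearEquiv.symm_apply_eq _).2 rfl
  simp only [extEquiv, LinearEquiv.trans_apply, hz]
  rfl

theorem extEquiv_map (g : X ⟶ X') (w : ((Ext R C n).obj (Opposite.op X')).obj Y) :
    extEquiv R X Y n (((Ext R C n).map g.op).app Y w) =
      (Abelian.Ext.mk₀ g).comp (extEquiv R X' Y n w) (zero_add n) := by
  obtain ⟨z', rfl⟩ := cocycleDerivedExtClass_surjective (projectiveResolution X') Y n w
  obtain ⟨z, hderived, hext⟩ := exists_cocycle_of_hom g (projectiveResolution X) _ z'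
  rw [extEquiv_cocycleDerivedExtClass, hext, ← extEquiv_cocycleDerivedExtClass, ← hderived]

end ExtComparison

/-! ### The power torsion submodule and injective modules -/

section PowTorsionSubmodule

variable {R : Type u} [CommRing R]
variable {M : Type u} [AddCommGroup M] [Module R M]

/-- The `a`-torsion submodule `Γ_a(M)`, consisting of the elements of `M` killed by some power
of `a`. -/
def powTorsion (a : Ideal R) (M : Type u) [AddCommGroup M] [Module R M] : Submodule R M where
  carrier := {x | ∃ n : ℕ, ∀ r ∈ a ^ n, r • x = 0}
  zero_mem' := ⟨0, fun r _ => smul_zero r⟩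
  add_mem' := by
    rintro x y ⟨n, hn⟩ ⟨m, hm⟩
    refine ⟨max n m, fun r hr => ?_⟩
    rw [smul_add, hn r (Ideal.pow_le_pow_right (le_max_left _ _) hr),
      hm r (Ideal.pow_le_pow_right (le_max_right _ _) hr), add_zero]
  smul_mem' := by
    rintro c x ⟨n, hn⟩
    exact ⟨n, fun r hr => by rw [smul_comm, hn r hr, smul_zero]⟩

lemma isPowTorsion_powTorsion (a : Ideal R) (M : Type u) [AddCommGroup M] [Module R M] :
    IsPowTorsion a (powTorsion a M) := by
  rintro ⟨x, n, hn⟩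
  exact ⟨n, fun r hr => Subtype.ext (hn r hr)⟩

lemma IsPowTorsion.apply_mem_powTorsion {a : Ideal R} {N : Type u} [AddCommGroup N] [Module R N]
    (h : IsPowTorsion a N) (f : N →ₗ[R] M) (y : N) : f y ∈ powTorsion a M :=
  let ⟨n, hn⟩ := h y
  ⟨n, fun r hr => by rw [← map_smul, hn r hr, map_zero]⟩

lemma isPowTorsion_quotient_of_pow_le {a J : Ideal R} {t : ℕ} (h : a ^ t ≤ J) :
    IsPowTorsion a (R ⧸ J) := fun y =>
  ⟨t, fun _ hr => Module.mem_annihilator.1 (le_annihilator_quotient J (h hr)) y⟩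

lemma IsPowTorsion.exists_pow_le_annihilator [Module.Finite R M] {a : Ideal R}
    (h : IsPowTorsion a M) : ∃ n : ℕ, a ^ n ≤ Module.annihilator R M := by
  classical
  obtain ⟨s, hs⟩ := Module.Finite.fg_top (R := R) (M := M)
  choose n hn using h
  refine ⟨s.sup n, fun r hr => ?_⟩
  rw [← Submodule.annihilator_top, ← hs, Submodule.mem_annihilator_span]
  exact fun x => hn x r (Ideal.pow_le_pow_right (Finset.le_sup x.2) hr)

lemma powTorsion_quotient_powTorsion [IsNoetherianRing R] (a : Ideal R) (M : Type u)
    [AddCommGroup M] [Module R M] : powTorsion a (M ⧸ powTorsion a M) = ⊥ := by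
  rw [eq_bot_iff]
  rintro y ⟨n, hn⟩
  obtain ⟨x, rfl⟩ := (powTorsion a M).mkQ_surjective y
  have hle : Submodule.map (LinearMap.toSpanSingleton R M x) (a ^ n) ≤ powTorsion a M := by
    rintro _ ⟨r, hr, rfl⟩
    exact (Submodule.Quotient.mk_eq_zero _).1 (hn r hr)
  have : Module.Finite R (Submodule.map (LinearMap.toSpanSingleton R M x) (a ^ n)) :=
    Module.Finite.iff_fg.2 ((IsNoetherian.noetherian (a ^ n)).map _)
  obtain ⟨m, hm⟩ := ((isPowTorsion_powTorsion a M).of_injective (Submodule.inclusion hle)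
    (Submodule.inclusion_injective hle)).exists_pow_le_annihilator
  refine (Submodule.Quotient.mk_eq_zero _).2 ⟨m + n, fun r hr => ?_⟩
  rw [pow_add] at hr
  induction hr using Submodule.mul_induction_on' with
  | mem_mul_mem r hr s hs =>
    rw [mul_smul]
    exact Submodule.mem_annihilator.1 (hm hr) _ ⟨s, hs, rfl⟩
  | add r _ s _ hr hs => rw [add_smul, hr, hs, add_zero]

end PowTorsionSubmodule

section Injective

variable {R : Type u} [CommRing R]
variable {M E : Type u} [AddCommGroup M] [Module R M] [AddCommGroup E] [Module R E]

lemma IsPowTorsion.exists_forall_mem_pow_apply_eq_zero [IsNoetherianRing R] {a : Ideal R}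
    (h : IsPowTorsion a M) {I : Ideal R} (g : I →ₗ[R] M) :
    ∃ n : ℕ, ∀ x : I, (x : R) ∈ a ^ n → g x = 0 := by
  obtain ⟨k, hk⟩ := (h.submodule (LinearMap.range g)).exists_pow_le_annihilator
  obtain ⟨c, hc⟩ := Ideal.exists_pow_inf_eq_pow_smul a (M := R) I
  have hg : a ^ k • (⊤ : Submodule R I) ≤ LinearMap.ker g := Submodule.smul_le.2 fun r hr x _ => by
    rw [LinearMap.mem_ker, map_smul]
    exact Submodule.mem_annihilator.1 (hk hr) _ ⟨x, rfl⟩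
  refine ⟨k + c, fun x hx => hg ?_⟩
  have hx' : (x : R) ∈ (a ^ (k + c) • ⊤ ⊓ I : Submodule R R) := ⟨by simpa using hx, x.2⟩
  rw [hc _ (Nat.le_add_left c k), Nat.add_sub_cancel] at hx'
  obtain ⟨y, hy, hyx⟩ : (x : R) ∈ (a ^ k • (⊤ : Submodule R I)).map I.subtype := by
    rw [Submodule.map_smul'', Submodule.map_subtype_top]
    exact Submodule.smul_mono le_rfl inf_le_right hx'
  exact (Subtype.ext hyx : y = x) ▸ hy

theorem injective_powTorsion [IsNoetherianRing R] (a : Ideal R) [Module.Injective R E] :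
    Module.Injective R (powTorsion a E) := by
  refine Module.Baer.injective fun I g => ?_
  obtain ⟨n, hn⟩ := (isPowTorsion_powTorsion a E).exists_forall_mem_pow_apply_eq_zero g
  let K : Submodule R I := Submodule.comap I.subtype (a ^ n)
  have hinj : Function.Injective (K.mapQ (a ^ n) I.subtype le_rfl) := by
    rw [← LinearMap.ker_eq_bot, Submodule.mapQ, Submodule.ker_liftQ, LinearMap.ker_comp,
      Submodule.ker_mkQ]
    exact K.mkQ_map_self
  obtain ⟨h, hh⟩ := Module.Injective.out _ hinj <|
    K.liftQ ((powTorsion a E).subtype ∘ₗ g) fun x hx => congrArg Subtype.val (hn x hx)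
  exact ⟨(h.codRestrict (powTorsion a E)
    ((isPowTorsion_quotient_of_pow_le le_rfl).apply_mem_powTorsion h)) ∘ₗ (a ^ n).mkQ,
    fun x hx => Subtype.ext (hh (K.mkQ ⟨x, hx⟩))⟩

lemma injective_quotient [Module.Injective R E] (K : Submodule R E) [Module.Injective R K] :
    Module.Injective R (E ⧸ K) := by
  obtain ⟨ρ, hρ⟩ := Module.Injective.out K.subtype K.injective_subtype LinearMap.id
  let s : E ⧸ K →ₗ[R] E := K.liftQ (LinearMap.id - K.subtype ∘ₗ ρ) fun x hx =>
    LinearMap.mem_ker.2 (sub_eq_zero.2 (congrArg Subtype.val (hρ ⟨x, hx⟩)).symm)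
  have hs (y : E ⧸ K) : K.mkQ (s y) = y := by
    obtain ⟨x, rfl⟩ := K.mkQ_surjective y
    exact (Submodule.Quotient.eq K).2 (by simp [s])
  refine ⟨fun X Y _ _ _ _ i hi g => ?_⟩
  obtain ⟨h, hh⟩ := Module.Injective.out i hi (s ∘ₗ g)
  exact ⟨K.mkQ ∘ₗ h, fun x => by rw [LinearMap.comp_apply, hh, LinearMap.comp_apply, hs]⟩

lemma exists_injective_linearMap_injective (R M : Type u) [CommRing R] [AddCommGroup M]
    [Module R M] : ∃ (E : Type u) (_ : AddCommGroup E) (_ : Module R E) (f : M →ₗ[R] E),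
      Module.Injective R E ∧ Function.Injective f := by
  let E : ModuleCat.{u} R := Injective.under (ModuleCat.of R M)
  have : Injective (ModuleCat.of R E) := Injective.injective_under (ModuleCat.of R M)
  exact ⟨E, inferInstance, inferInstance, (Injective.ι (ModuleCat.of R M)).hom,
    Module.injective_module_of_injective_object R E,
    (ModuleCat.mono_iff_injective _).1 inferInstance⟩

lemma IsPowTorsion.exists_injective_linearMap [IsNoetherianRing R] {a : Ideal R}
    (h : IsPowTorsion a M) :
    ∃ (J : Type u) (_ : AddCommGroup J) (_ : Module R J) (f : M →ₗ[R] J),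
      Module.Injective R J ∧ Function.Injective f ∧ IsPowTorsion a J := by
  obtain ⟨E, _, _, f, _, hf⟩ := exists_injective_linearMap_injective R M
  exact ⟨powTorsion a E, inferInstance, inferInstance, f.codRestrict _ (h.apply_mem_powTorsion f),
    injective_powTorsion a, fun x y hxy => hf (congrArg Subtype.val hxy),
    isPowTorsion_powTorsion a E⟩

lemma exists_injective_linearMap_powTorsion_eq_bot [IsNoetherianRing R] {a : Ideal R}
    (h : powTorsion a M = ⊥) :
    ∃ (J : Type u) (_ : AddCommGroup J) (_ : Module R J) (f : M →ₗ[R] J),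
      Module.Injective R J ∧ Function.Injective f ∧ powTorsion a J = ⊥ := by
  obtain ⟨E, _, _, f, _, hf⟩ := exists_injective_linearMap_injective R M
  have := injective_powTorsion (E := E) a
  refine ⟨E ⧸ powTorsion a E, inferInstance, inferInstance, (powTorsion a E).mkQ ∘ₗ f,
    injective_quotient _, ?_, powTorsion_quotient_powTorsion a E⟩
  refine (injective_iff_map_eq_zero _).2 fun x hx => ?_
  obtain ⟨n, hn⟩ := (Submodule.Quotient.mk_eq_zero (powTorsion a E)).1 hx
  have : x ∈ powTorsion a M := ⟨n, fun r hr => hf (by rw [map_smul, hn r hr, map_zero])⟩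
  rwa [h] at this

lemma subsingleton_ext_zero_of_powTorsion_eq_bot {a : Ideal R} (h : powTorsion a M = ⊥)
    {N : Type u} [AddCommGroup N] [Module R N] (hN : IsPowTorsion a N) :
    Subsingleton (ModExt R N M 0) :=
  subsingleton_of_forall_eq 0 fun x =>
    (ModExt.zeroEquivHom N M).injective <| LinearMap.ext fun y => by
      have hmem := hN.apply_mem_powTorsion (ModExt.zeroEquivHom N M x) y
      rw [h, Submodule.mem_bot] at hmem
      rw [hmem, map_zero, LinearMap.zero_apply]

lemma subsingleton_ext_of_powTorsion_eq_bot [Module.Injective R M] {a : Ideal R}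
    (h : powTorsion a M = ⊥) {N : Type u} [AddCommGroup N] [Module R N] (hN : IsPowTorsion a N)
    (i : ℕ) : Subsingleton (ModExt R N M i) := by
  cases i with
  | zero => exact subsingleton_ext_zero_of_powTorsion_eq_bot h hN
  | succ i => exact ModExt.subsingleton_of_injective N M i

end Injective

/-! ### Local cohomology as a direct limit -/

section DirectLimit

variable {R ι : Type*} [CommRing R] [Preorder ι] [DecidableEq ι] [Nonempty ι] [IsDirectedOrder ι]
variable {G G' : ι → Type*} [∀ i, AddCommGroup (G i)] [∀ i, Module R (G i)]
  [∀ i, AddCommGroup (G' i)] [∀ i, Module R (G' i)]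
  {f : ∀ i j, i ≤ j → G i →ₗ[R] G j} {f' : ∀ i j, i ≤ j → G' i →ₗ[R] G' j}
variable {P : Type*} [AddCommGroup P] [Module R P]

lemma directLimit_lift_bijective {g : ∀ i, G i →ₗ[R] P} (hg : ∀ i j h x, g j (f i j h x) = g i x)
    (hinj : ∀ i x, g i x = 0 → ∃ j, ∃ h : i ≤ j, f i j h x = 0)
    (hsurj : ∀ y, ∃ i x, g i x = y) :
    Function.Bijective (Module.DirectLimit.lift R ι G f g hg) := by
  refine ⟨(injective_iff_map_eq_zero _).2 fun z hz => ?_, fun y => ?_⟩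
  · obtain ⟨i, x, rfl⟩ := Module.DirectLimit.exists_of z
    rw [Module.DirectLimit.lift_of] at hz
    obtain ⟨j, h, hx⟩ := hinj i x hz
    rw [← Module.DirectLimit.of_f (hij := h), hx, map_zero]
  · obtain ⟨i, x, rfl⟩ := hsurj y
    exact ⟨Module.DirectLimit.of R ι G f i x, Module.DirectLimit.lift_of _ _ _⟩

lemma directLimit_map_bijective [DirectedSystem G (f · · ·)] [DirectedSystem G' (f' · · ·)]
    {g : ∀ i, G i →ₗ[R] G' i}
    (hg : ∀ i j h, g j ∘ₗ f i j h = f' i j h ∘ₗ g i)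
    (hinj : ∀ i x, g i x = 0 → ∃ j, ∃ h : i ≤ j, f i j h x = 0)
    (hsurj : ∀ i y, ∃ j, ∃ h : i ≤ j, ∃ x, g j x = f' i j h y) :
    Function.Bijective (Module.DirectLimit.map g hg) := by
  refine directLimit_lift_bijective _ (fun i x hx => ?_) fun z => ?_
  · obtain ⟨j, hij, hj⟩ := Module.DirectLimit.of.zero_exact hx
    obtain ⟨k, hjk, hk⟩ := hinj j (f i j hij x) ((LinearMap.congr_fun (hg i j hij) x).trans hj)
    exact ⟨k, hij.trans hjk, by rw [← DirectedSystem.map_map' f hij hjk, hk]⟩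
  · obtain ⟨i, y, rfl⟩ := Module.DirectLimit.exists_of z
    obtain ⟨j, h, x, hx⟩ := hsurj i y
    exact ⟨j, x, by rw [LinearMap.comp_apply, hx, Module.DirectLimit.of_f]⟩

end DirectLimit

section LocalCohomology

variable {R : Type u} [CommRing R]

/-- The transition map `Ext^n(R/a^s, M) → Ext^n(R/a^t, M)` for `s ≤ t`. -/
noncomputable def extPowMap (a : Ideal R) (M : Type u) [AddCommGroup M] [Module R M] (n s t : ℕ)
    (h : s ≤ t) : ModExt R (R ⧸ a ^ s) M n →ₗ[R] ModExt R (R ⧸ a ^ t) M n :=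
  ModExt.precomp M (Submodule.factor (Ideal.pow_le_pow_right h)) n

instance directedSystem_extPowMap (a : Ideal R) (M : Type u) [AddCommGroup M] [Module R M]
    (n : ℕ) : DirectedSystem (fun t => ModExt R (R ⧸ a ^ t) M n) (extPowMap a M n · · ·) where
  map_self s x := by
    have hid : Submodule.factor (le_refl (a ^ s)) = LinearMap.id := Submodule.linearMap_qext _ rfl
    rw [extPowMap, hid, ModExt.precomp_id]
  map_map _ _ _ _ _ x := by
    rw [extPowMap, extPowMap, extPowMap, ← ModExt.precomp_comp, Submodule.factor_comp]

/-- The direct limit of the modules `Ext^n(R/a^t, M)`, which is a model for `H^n_a(M)`. -/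
abbrev ExtColimit (a : Ideal R) (n : ℕ) (M : Type u) [AddCommGroup M] [Module R M] : Type u :=
  Module.DirectLimit (fun t => ModExt R (R ⧸ a ^ t) M n) (extPowMap a M n)

/-- The evaluation at `M` of the diagram of functors `Ext^n(R/a^t, -)`. -/
noncomputable abbrev extPowDiagram (a : Ideal R) (n : ℕ) (M : ModuleCat.{u} R) :
    ℕᵒᵖᵒᵖ ⥤ ModuleCat.{u} R :=
  localCohomology.diagram (localCohomology.idealPowersDiagram a) n ⋙ (evaluation _ _).obj M

/-- The cocone over `extPowDiagram a n M` with point `H^n_a(M)`. -/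
noncomputable def localCohomologyCocone (a : Ideal R) (n : ℕ) (M : ModuleCat.{u} R) :
    Limits.Cocone (extPowDiagram a n M) :=
  have := localCohomology.hasColimitDiagram.{u, 0} (localCohomology.idealPowersDiagram a) n
  ((evaluation _ _).obj M).mapCocone (Limits.colimit.cocone
    (localCohomology.diagram (localCohomology.idealPowersDiagram a) n))

/-- Local cohomology is computed pointwise: evaluation at `M` preserves the defining colimit. -/
noncomputable def isColimitLocalCohomologyCocone (a : Ideal R) (n : ℕ) (M : ModuleCat.{u} R) :
    Limits.IsColimit (localCohomologyCocone a n M) :=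
  have := localCohomology.hasColimitDiagram.{u, 0} (localCohomology.idealPowersDiagram a) n
  Limits.isColimitOfPreserves ((evaluation _ _).obj M) (Limits.colimit.isColimit _)

variable {M : Type u} [AddCommGroup M] [Module R M]

lemma extEquiv_extPowDiagram_map (a : Ideal R) {n s t : ℕ} (h : s ≤ t)
    (φ : Opposite.op (Opposite.op s) ⟶ Opposite.op (Opposite.op t))
    (w : (extPowDiagram a n (ModuleCat.of R M)).obj (Opposite.op (Opposite.op s))) :
    extEquiv R (ModuleCat.of R (R ⧸ a ^ t)) (ModuleCat.of R M) n
        ((extPowDiagram a n (ModuleCat.of R M)).map φ w) =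
      extPowMap a M n s t h
        (extEquiv R (ModuleCat.of R (R ⧸ a ^ s)) (ModuleCat.of R M) n w) :=
  extEquiv_map (ModuleCat.ofHom (Submodule.factor (Ideal.pow_le_pow_right h))) w

/-- The canonical map `Ext^n(R/a^t, M) → H^n_a(M)`. -/
noncomputable def toLocalCohomology (a : Ideal R) (n : ℕ) (M : Type u) [AddCommGroup M]
    [Module R M] (t : ℕ) :
    ModExt R (R ⧸ a ^ t) M n →ₗ[R] (localCohomology a n).obj (ModuleCat.of R M) :=
  ((localCohomologyCocone a n (ModuleCat.of R M)).ι.app (Opposite.op (Opposite.op t))).hom ∘ₗ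
    (extEquiv R (ModuleCat.of R (R ⧸ a ^ t)) (ModuleCat.of R M) n).symm.toLinearMap

lemma toLocalCohomology_extEquiv (a : Ideal R) (n t : ℕ)
    (w : (extPowDiagram a n (ModuleCat.of R M)).obj (Opposite.op (Opposite.op t))) :
    toLocalCohomology a n M t
        (extEquiv R (ModuleCat.of R (R ⧸ a ^ t)) (ModuleCat.of R M) n w) =
      (localCohomologyCocone a n (ModuleCat.of R M)).ι.app (Opposite.op (Opposite.op t)) w :=
  congrArg ((localCohomologyCocone a n (ModuleCat.of R M)).ι.app _)
    (LinearEquiv.symm_apply_apply _ w)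

lemma toLocalCohomology_extPowMap (a : Ideal R) (n s t : ℕ) (h : s ≤ t)
    (x : ModExt R (R ⧸ a ^ s) M n) :
    toLocalCohomology a n M t (extPowMap a M n s t h x) = toLocalCohomology a n M s x := by
  obtain ⟨w, rfl⟩ := (extEquiv R (ModuleCat.of R (R ⧸ a ^ s)) (ModuleCat.of R M) n).surjective x
  let φ : Opposite.op (Opposite.op s) ⟶ Opposite.op (Opposite.op t) := (homOfLE h).op.op
  refine (congrArg (toLocalCohomology a n M t) (extEquiv_extPowDiagram_map a h φ w).symm).trans
    ((toLocalCohomology_extEquiv a n t _).trans ?_)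
  exact (ConcreteCategory.congr_hom ((localCohomologyCocone a n (ModuleCat.of R M)).w φ) w).trans
    (toLocalCohomology_extEquiv a n s w).symm

lemma exists_toLocalCohomology_eq (a : Ideal R) (n : ℕ)
    (y : (localCohomology a n).obj (ModuleCat.of R M)) :
    ∃ t x, toLocalCohomology a n M t x = y := by
  have := Limits.preservesFilteredColimitsOfSize_shrink.{0, u, 0, u} (forget (ModuleCat.{u} R))
  obtain ⟨k, w, hw⟩ := Limits.Concrete.isColimit_exists_rep _
    (isColimitLocalCohomologyCocone a n (ModuleCat.of R M)) y
  exact ⟨k.unop.unop, _, (toLocalCohomology_extEquiv a n _ w).trans hw⟩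

lemma exists_extPowDiagram_map_eq_zero (a : Ideal R) (n t : ℕ)
    (w : (extPowDiagram a n (ModuleCat.of R M)).obj (Opposite.op (Opposite.op t)))
    (hw : (localCohomologyCocone a n (ModuleCat.of R M)).ι.app _ w = 0) :
    ∃ (k : ℕᵒᵖᵒᵖ) (φ : Opposite.op (Opposite.op t) ⟶ k),
      (extPowDiagram a n (ModuleCat.of R M)).map φ w = 0 := by
  have := Limits.preservesFilteredColimitsOfSize_shrink.{0, u, 0, u} (forget (ModuleCat.{u} R))
  obtain ⟨k, φ, ψ, hφψ⟩ := Limits.Concrete.isColimit_exists_of_rep_eq _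
    (isColimitLocalCohomologyCocone a n (ModuleCat.of R M)) w 0 (hw.trans (map_zero _).symm)
  exact ⟨k, φ, hφψ.trans (map_zero _)⟩

lemma exists_extPowMap_eq_zero (a : Ideal R) (n t : ℕ) (x : ModExt R (R ⧸ a ^ t) M n)
    (hx : toLocalCohomology a n M t x = 0) : ∃ r, ∃ h : t ≤ r, extPowMap a M n t r h x = 0 := by
  obtain ⟨w, rfl⟩ := (extEquiv R (ModuleCat.of R (R ⧸ a ^ t)) (ModuleCat.of R M) n).surjective x
  obtain ⟨k, φ, hφ⟩ := exists_extPowDiagram_map_eq_zero a n t w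
    ((toLocalCohomology_extEquiv a n t w).symm.trans hx)
  have hle : t ≤ k.unop.unop := leOfHom φ.unop.unop
  exact ⟨_, hle, (extEquiv_extPowDiagram_map a hle φ w).symm.trans
    ((congrArg _ hφ).trans (map_zero (extEquiv R (ModuleCat.of R _) (ModuleCat.of R M) n)))⟩

theorem nonempty_extColimit_equiv_localCohomology (a : Ideal R) (n : ℕ) :
    Nonempty (ExtColimit a n M ≃ₗ[R] (localCohomology a n).obj (ModuleCat.of R M)) :=
  ⟨.ofBijective _ <| directLimit_lift_bijective (toLocalCohomology_extPowMap a n)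
    (exists_extPowMap_eq_zero a n) (exists_toLocalCohomology_eq a n)⟩

end LocalCohomology

/-! ### Dimension shifting for local cohomology -/

section DimensionShift

variable {R : Type u} [CommRing R]
variable {M : Type u} [AddCommGroup M] [Module R M]

lemma IsShortExact.connecting_bijective {A B C N : Type u} [AddCommGroup A] [Module R A]
    [AddCommGroup B] [Module R B] [AddCommGroup C] [Module R C] [AddCommGroup N] [Module R N]
    {f : A →ₗ[R] B} {g : B →ₗ[R] C} (h : IsShortExact f g)
    (hN : ∀ i, Subsingleton (ModExt R N B i)) (i : ℕ) :
    Function.Bijective (h.connecting N i) := by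
  refine ⟨(injective_iff_map_eq_zero _).2 fun x hx => ?_,
    fun y => (h.exact_connecting_postcomp N i y).1 (Subsingleton.elim _ _)⟩
  obtain ⟨y, rfl⟩ := (h.exact_postcomp_connecting N i x).1 hx
  rw [Subsingleton.elim y 0, map_zero]

lemma isPowTorsion_extColimit (a : Ideal R) (n : ℕ) (M : Type u) [AddCommGroup M] [Module R M] :
    IsPowTorsion a (ExtColimit a n M) := fun z => by
  obtain ⟨t, x, rfl⟩ := Module.DirectLimit.exists_of z
  refine ⟨t, fun r hr => ?_⟩
  have hx : r • x = 0 := Module.mem_annihilator.1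
    (ModExt.annihilator_le_left (R ⧸ a ^ t) M n (le_annihilator_quotient _ hr)) x
  rw [← map_smul, hx, map_zero]

lemma exists_comp_factor_eq_comp {J Q : Type u} [AddCommGroup J] [Module R J] [AddCommGroup Q]
    [Module R Q] {a : Ideal R} (hJ : IsPowTorsion a J) {g : J →ₗ[R] Q}
    (hg : Function.Surjective g) {t : ℕ} (q : (R ⧸ a ^ t) →ₗ[R] Q) :
    ∃ r, ∃ h : t ≤ r, ∃ p : (R ⧸ a ^ r) →ₗ[R] J,
      q ∘ₗ Submodule.factor (Ideal.pow_le_pow_right h) = g ∘ₗ p := by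
  obtain ⟨j, hj⟩ := hg (q (Submodule.Quotient.mk 1))
  obtain ⟨s, hs⟩ := hJ j
  have hker : a ^ max t s ≤ LinearMap.ker (LinearMap.toSpanSingleton R J j) := fun r hr =>
    hs r (Ideal.pow_le_pow_right (le_max_right t s) hr)
  refine ⟨max t s, le_max_left t s, Submodule.liftQ _ _ hker, Submodule.linearMap_qext _ ?_⟩
  refine LinearMap.ext_ring ?_
  change q (Submodule.Quotient.mk 1) = g ((1 : R) • j)
  rw [one_smul, hj]

theorem IsPowTorsion.exists_extPowMap_eq_zero [IsNoetherianRing R] {a : Ideal R}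
    (hM : IsPowTorsion a M) (n t : ℕ) (x : ModExt R (R ⧸ a ^ t) M (n + 1)) :
    ∃ r, ∃ h : t ≤ r, extPowMap a M (n + 1) t r h x = 0 := by
  induction n generalizing M with
  | zero =>
    obtain ⟨J, _, _, f, _, hf, hJ⟩ := hM.exists_injective_linearMap
    have hex := IsShortExact.mkQ_range f hf
    have := ModExt.subsingleton_of_injective (R := R) (R ⧸ a ^ t) J 0
    obtain ⟨y, rfl⟩ := (hex.exact_connecting_postcomp _ 0 x).1 (Subsingleton.elim _ _)
    obtain ⟨q, rfl⟩ := (ModExt.zeroEquivHom _ _).symm.surjective y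
    obtain ⟨r, h, p, hp⟩ := exists_comp_factor_eq_comp hJ (Submodule.mkQ_surjective _) q
    refine ⟨r, h, ?_⟩
    rw [extPowMap, hex.precomp_connecting, ModExt.precomp_zeroEquivHom_symm, hp,
      ← ModExt.postcomp_zeroEquivHom_symm]
    exact (hex.exact_postcomp_connecting _ 0 _).2 ⟨_, rfl⟩
  | succ n ih =>
    obtain ⟨J, _, _, f, _, hf, hJ⟩ := hM.exists_injective_linearMap
    have hex := IsShortExact.mkQ_range f hf
    have := ModExt.subsingleton_of_injective (R := R) (R ⧸ a ^ t) J (n + 1)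
    obtain ⟨y, rfl⟩ := (hex.exact_connecting_postcomp _ (n + 1) x).1 (Subsingleton.elim _ _)
    obtain ⟨r, h, hr⟩ := ih (hJ.quotient (LinearMap.range f)) y
    refine ⟨r, h, ?_⟩
    rw [extPowMap] at hr ⊢
    rw [hex.precomp_connecting, hr, map_zero]

/-- The map `Ext^0(R/a^t, M) → Γ_a(M)` that evaluates homomorphisms at `1`. -/
noncomputable def extZeroToPowTorsion (a : Ideal R) (M : Type u) [AddCommGroup M] [Module R M]
    (t : ℕ) : ModExt R (R ⧸ a ^ t) M 0 →ₗ[R] powTorsion a M :=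
  (LinearMap.applyₗ (Submodule.Quotient.mk 1 : R ⧸ a ^ t) ∘ₗ
      (ModExt.zeroEquivHom (R ⧸ a ^ t) M).toLinearMap).codRestrict _ fun x =>
    (isPowTorsion_quotient_of_pow_le le_rfl).apply_mem_powTorsion (ModExt.zeroEquivHom _ _ x) _

lemma extZeroToPowTorsion_extPowMap (a : Ideal R) (s t : ℕ) (h : s ≤ t)
    (x : ModExt R (R ⧸ a ^ s) M 0) :
    extZeroToPowTorsion a M t (extPowMap a M 0 s t h x) = extZeroToPowTorsion a M s x :=
  Subtype.ext (LinearMap.congr_fun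
    (ModExt.zeroEquivHom_precomp (Submodule.factor (Ideal.pow_le_pow_right h)) x) _)

lemma extZeroToPowTorsion_injective (a : Ideal R) (t : ℕ) :
    Function.Injective (extZeroToPowTorsion a M t) := fun _ _ hxy =>
  (ModExt.zeroEquivHom _ _).injective <| Submodule.linearMap_qext _ <|
    LinearMap.ext_ring (congrArg Subtype.val hxy)

lemma exists_extZeroToPowTorsion_eq (a : Ideal R) (y : powTorsion a M) :
    ∃ t x, extZeroToPowTorsion a M t x = y := by
  obtain ⟨y, n, hn⟩ := y
  refine ⟨n, (ModExt.zeroEquivHom _ _).symm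
    (Submodule.liftQ (a ^ n) (LinearMap.toSpanSingleton R M y) hn), Subtype.ext ?_⟩
  change ModExt.zeroEquivHom _ _ ((ModExt.zeroEquivHom _ _).symm _) _ = y
  rw [LinearEquiv.apply_symm_apply]
  exact one_smul R y

lemma nonempty_extColimit_zero_equiv (a : Ideal R) (M : Type u) [AddCommGroup M] [Module R M] :
    Nonempty (ExtColimit a 0 M ≃ₗ[R] powTorsion a M) :=
  ⟨.ofBijective _ <| directLimit_lift_bijective (extZeroToPowTorsion_extPowMap a)
    (fun t _ hx => ⟨t, le_rfl, by
      rw [(map_eq_zero_iff _ (extZeroToPowTorsion_injective a t)).1 hx, map_zero]⟩)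
    (exists_extZeroToPowTorsion_eq a)⟩

lemma nonempty_extColimit_succ_equiv_quotient [IsNoetherianRing R] (a : Ideal R) (n : ℕ)
    (M : Type u) [AddCommGroup M] [Module R M] :
    Nonempty (ExtColimit a (n + 1) M ≃ₗ[R] ExtColimit a (n + 1) (M ⧸ powTorsion a M)) := by
  have hex := IsShortExact.subtype_mkQ (powTorsion a M)
  have htors := isPowTorsion_powTorsion a M
  refine ⟨.ofBijective _ <| directLimit_map_bijective
    (f := extPowMap a M (n + 1)) (f' := extPowMap a _ (n + 1))
    (g := fun t => ModExt.postcomp (R ⧸ a ^ t) (powTorsion a M).mkQ (n + 1))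
    (fun s t h => LinearMap.ext fun x => (ModExt.precomp_postcomp _ _ _ x).symm)
    (fun t x hx => ?_) fun t y => ?_⟩
  · obtain ⟨w, rfl⟩ := (hex.exact_postcomp_postcomp _ _ x).1 hx
    obtain ⟨r, h, hr⟩ := htors.exists_extPowMap_eq_zero n t w
    rw [extPowMap] at hr
    exact ⟨r, h, by rw [extPowMap, ModExt.precomp_postcomp, hr, map_zero]⟩
  · obtain ⟨r, h, hr⟩ := htors.exists_extPowMap_eq_zero (n + 1) t (hex.connecting _ _ y)
    rw [extPowMap, hex.precomp_connecting] at hr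
    exact ⟨r, h, (hex.exact_postcomp_connecting _ _ _).1 hr⟩

lemma nonempty_extColimit_equiv_succ_of_connecting_bijective {A B C : Type u} [AddCommGroup A]
    [Module R A] [AddCommGroup B] [Module R B] [AddCommGroup C] [Module R C] {f : A →ₗ[R] B}
    {g : B →ₗ[R] C} (hex : IsShortExact f g) (a : Ideal R) (n : ℕ)
    (h : ∀ t, Function.Bijective (hex.connecting (R ⧸ a ^ t) n)) :
    Nonempty (ExtColimit a n C ≃ₗ[R] ExtColimit a (n + 1) A) :=
  ⟨.ofBijective _ <| directLimit_map_bijective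
    (f := extPowMap a C n) (f' := extPowMap a A (n + 1))
    (g := fun t => hex.connecting (R ⧸ a ^ t) n)
    (fun _ _ _ => LinearMap.ext fun x => (hex.precomp_connecting _ _ x).symm)
    (fun t _ hx => ⟨t, le_rfl, by rw [(map_eq_zero_iff _ (h t).1).1 hx, map_zero]⟩)
    fun t _ => ⟨t, le_rfl, (h t).2 _⟩⟩

-- `L` is the cokernel of an embedding of `M ⧸ Γ_a(M)` into an injective module without `a`-torsion.
theorem exists_dimension_shift [IsNoetherianRing R] (a : Ideal R) (M : Type u) [AddCommGroup M]
    [Module R M] :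
    ∃ (L : Type u) (_ : AddCommGroup L) (_ : Module R L),
      (∀ n, Nonempty (ExtColimit a n L ≃ₗ[R] ExtColimit a (n + 1) M)) ∧
      ∀ i, Nonempty
        (ModExt R (R ⧸ a) L i ≃ₗ[R] ModExt R (R ⧸ a) (M ⧸ powTorsion a M) (i + 1)) := by
  obtain ⟨E, _, _, f, _, hf, hE⟩ :=
    exists_injective_linearMap_powTorsion_eq_bot (powTorsion_quotient_powTorsion a M)
  have hex := IsShortExact.mkQ_range f hf
  have hbij (J : Ideal R) (t : ℕ) (hJ : a ^ t ≤ J) (i : ℕ) :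
      Function.Bijective (hex.connecting (R ⧸ J) i) :=
    hex.connecting_bijective
      (subsingleton_ext_of_powTorsion_eq_bot hE (isPowTorsion_quotient_of_pow_le hJ)) i
  refine ⟨E ⧸ LinearMap.range f, inferInstance, inferInstance, fun n => ?_, fun i =>
    ⟨.ofBijective _ (hbij a 1 (pow_one a).le i)⟩⟩
  obtain ⟨e⟩ := nonempty_extColimit_equiv_succ_of_connecting_bijective hex a n
    fun t => hbij _ t le_rfl n
  obtain ⟨e'⟩ := nonempty_extColimit_succ_equiv_quotient a n M
  exact ⟨e.trans e'.symm⟩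

end DimensionShift

/-! ### Cofiniteness and parity -/

section Parity

variable {R : Type u} [CommRing R]
variable {X Y : Type u} [AddCommGroup X] [Module R X] [AddCommGroup Y] [Module R Y]

lemma IsPowTorsion.support_subset_zeroLocus {a : Ideal R} (h : IsPowTorsion a X) :
    Module.support R X ⊆ PrimeSpectrum.zeroLocus (a : Set R) := fun p hp => by
  obtain ⟨x, hx⟩ := Module.mem_support_iff_exists_annihilator.1 hp
  obtain ⟨n, hn⟩ := h x
  exact p.2.le_of_pow_le fun r hr =>
    hx ((Submodule.mem_annihilator_span_singleton x r).2 (hn r hr))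

/-- The finiteness condition in the definition of cofiniteness: the modules `Ext^i(R/a, X)` are
finitely generated. -/
def HasFiniteExt (a : Ideal R) (X : Type u) [AddCommGroup X] [Module R X] : Prop :=
  ∀ i, Module.Finite R (ModExt R (R ⧸ a) X i)

lemma HasFiniteExt.of_linearEquiv {a : Ideal R} (h : HasFiniteExt a X) (e : X ≃ₗ[R] Y) :
    HasFiniteExt a Y := fun i =>
  have := h i
  Module.Finite.equiv (ModExt.congrRight (R ⧸ a) e i)

lemma hasFiniteExt_iff_finite_extQuot {a : Ideal R} {X : ModuleCat.{u} R} :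
    HasFiniteExt a X ↔ ∀ i, Module.Finite R (extQuot a i X) :=
  forall_congr' fun i =>
    (Module.Finite.equiv_iff (extEquiv R (ModuleCat.of R (R ⧸ a)) X i)).symm

lemma finite_of_exact [IsNoetherianRing R] {N N' : Type u} [AddCommGroup N] [Module R N]
    [AddCommGroup N'] [Module R N'] {f : N →ₗ[R] X} {g : X →ₗ[R] N'} (h : Function.Exact f g)
    [Module.Finite R N] [Module.Finite R N'] : Module.Finite R X :=
  prop_of_exact (ModuleCat.isFG R) h ‹_› ‹_›

lemma postcomp_subtype_powTorsion_surjective {a : Ideal R} {N : Type u} [AddCommGroup N]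
    [Module R N] (hN : IsPowTorsion a N) :
    Function.Surjective (ModExt.postcomp N (powTorsion a X).subtype 0) := fun x => by
  obtain ⟨f, rfl⟩ := (ModExt.zeroEquivHom N X).symm.surjective x
  refine ⟨(ModExt.zeroEquivHom _ _).symm (f.codRestrict _ (hN.apply_mem_powTorsion f)), ?_⟩
  rw [ModExt.postcomp_zeroEquivHom_symm, LinearMap.subtype_comp_codRestrict]

lemma isPowTorsion_quotient (a : Ideal R) : IsPowTorsion a (R ⧸ a) :=
  isPowTorsion_quotient_of_pow_le (pow_one a).le

variable [IsNoetherianRing R] {a : Ideal R}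

lemma finite_ext_one_quotient_powTorsion (h : HasFiniteExt a (ExtColimit a 1 X)) :
    Module.Finite R (ModExt R (R ⧸ a) (X ⧸ powTorsion a X) 1) := by
  obtain ⟨L, _, _, hcolim, hext⟩ := exists_dimension_shift a X
  obtain ⟨e⟩ := hcolim 0
  obtain ⟨e₀⟩ := nonempty_extColimit_zero_equiv a L
  obtain ⟨e₁⟩ := hext 0
  have := h.of_linearEquiv (e.symm.trans e₀) 0
  have := Module.Finite.of_surjective _
    (postcomp_subtype_powTorsion_surjective (X := L) (isPowTorsion_quotient a))
  exact Module.Finite.equiv e₁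

theorem HasFiniteExt.powTorsion_of_extColimit_one (ha : DimLETwo a) (hX : HasFiniteExt a X)
    (h : HasFiniteExt a (ExtColimit a 1 X)) : HasFiniteExt a (powTorsion a X) := by
  have hex := IsShortExact.subtype_mkQ (powTorsion a X)
  refine (isPowTorsion_powTorsion a X).finite_ext_of_dimLETwo ha fun j hj => ?_
  have := hX j
  interval_cases j
  · exact Module.Finite.of_injective _
      (ModExt.postcomp_injective_of_injective (R ⧸ a) hex.injective)
  · have := subsingleton_ext_zero_of_powTorsion_eq_bot (powTorsion_quotient_powTorsion a X)
      (isPowTorsion_quotient a)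
    exact finite_of_exact (hex.exact_connecting_postcomp (R ⧸ a) 0)
  · have := finite_ext_one_quotient_powTorsion h
    exact finite_of_exact (hex.exact_connecting_postcomp (R ⧸ a) 1)

lemma HasFiniteExt.powTorsion_of_modEq (ha : DimLETwo a) (hX : HasFiniteExt a X) {e : ℕ}
    (h : ∀ i, i ≡ e [MOD 2] → HasFiniteExt a (ExtColimit a i X)) :
    HasFiniteExt a (powTorsion a X) := by
  rcases Nat.mod_two_eq_zero_or_one e with he | he
  · obtain ⟨e₀⟩ := nonempty_extColimit_zero_equiv a X
    exact (h 0 he.symm).of_linearEquiv e₀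
  · exact hX.powTorsion_of_extColimit_one ha (h 1 he.symm)

lemma HasFiniteExt.finite_ext_quotient_powTorsion (hX : HasFiniteExt a X)
    (h : HasFiniteExt a (powTorsion a X)) (i : ℕ) :
    Module.Finite R (ModExt R (R ⧸ a) (X ⧸ powTorsion a X) i) :=
  have := hX i
  have := h (i + 1)
  finite_of_exact
    ((IsShortExact.subtype_mkQ (powTorsion a X)).exact_postcomp_connecting (R ⧸ a) i)

theorem HasFiniteExt.extColimit_of_modEq (ha : DimLETwo a) (hX : HasFiniteExt a X) {e : ℕ}
    (h : ∀ i, i ≡ e [MOD 2] → HasFiniteExt a (ExtColimit a i X)) (n : ℕ) :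
    HasFiniteExt a (ExtColimit a n X) := by
  have htors := hX.powTorsion_of_modEq ha h
  induction n generalizing X e with
  | zero =>
    obtain ⟨e₀⟩ := nonempty_extColimit_zero_equiv a X
    exact htors.of_linearEquiv e₀.symm
  | succ n ih =>
    obtain ⟨L, _, _, hcolim, hext⟩ := exists_dimension_shift a X
    have hL : HasFiniteExt a L := fun i => by
      obtain ⟨e₁⟩ := hext i
      have := hX.finite_ext_quotient_powTorsion htors (i + 1)
      exact Module.Finite.equiv e₁.symm
    have hshift (i : ℕ) (hi : i ≡ e + 1 [MOD 2]) : HasFiniteExt a (ExtColimit a i L) := by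
      obtain ⟨e₁⟩ := hcolim i
      refine (h (i + 1) ?_).of_linearEquiv e₁.symm
      exact (hi.add_right 1).trans (Nat.add_mod_right e 2)
    obtain ⟨e₁⟩ := hcolim n
    exact (ih hL hshift (hL.powTorsion_of_modEq ha hshift)).of_linearEquiv e₁

end Parity

end Cofiniteness

open Cofiniteness

theorem stmt3_general {R : Type u} [CommRing R] [IsNoetherianRing R] (a : Ideal R)
    (hdim : ringKrullDim (R ⧸ a) ≤ 2) (M : ModuleCat.{u} R)
    (hM : ∀ i : ℕ, Module.Finite R (extQuot a i M)) (e : ℕ)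
    (he : ∀ i : ℕ, i ≡ e [MOD 2] → IsCofinite a ((localCohomology a i).obj M)) :
    ∀ i : ℕ, IsCofinite a ((localCohomology a i).obj M) := by
  intro i
  have hparity (j : ℕ) (hj : j ≡ e [MOD 2]) : HasFiniteExt a (ExtColimit a j M) := by
    obtain ⟨φ⟩ := nonempty_extColimit_equiv_localCohomology (M := M) a j
    exact (hasFiniteExt_iff_finite_extQuot.2 (he j hj).2).of_linearEquiv φ.symm
  have hcolim : HasFiniteExt a (ExtColimit a i M) :=
    (hasFiniteExt_iff_finite_extQuot.2 hM).extColimit_of_modEq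
      (dimLETwo_of_ringKrullDim_le hdim) hparity i
  obtain ⟨φ⟩ := nonempty_extColimit_equiv_localCohomology (M := M) a i
  have htors : IsPowTorsion a ((localCohomology a i).obj M) :=
    (isPowTorsion_extColimit a i M).of_surjective φ.toLinearMap φ.surjective
  exact ⟨htors.support_subset_zeroLocus,
    hasFiniteExt_iff_finite_extQuot.1 (hcolim.of_linearEquiv φ)⟩

theorem stmt3 {R : Type u} [CommRing R] [IsNoetherianRing R] (a : Ideal R) (ha : a ≠ ⊤)
    (hdim : ringKrullDim (R ⧸ a) = 2) (M : ModuleCat.{u} R) (hfg : Module.Finite R M)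
    (heven : ∀ i : ℕ, IsCofinite a ((localCohomology a (2 * i)).obj M)) :
    ∀ i : ℕ, IsCofinite a ((localCohomology a i).obj M) :=
  stmt3_general a hdim.le M
    (hasFiniteExt_iff_finite_extQuot.1 fun i => prop_ext_of_prop (ModuleCat.isFG R) hfg i _) 0
    fun _ hi => (Nat.modEq_zero_iff_dvd.1 hi).elim fun k hk => hk ▸ heven k
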